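/- arXiv:2011.02984 — 2 statements merged into one kernel-verified Lean document; each statement's English description precedes it below -/
import Mathlib

section
/- For every positive integer n with n ≡ 2 (mod 5), one has N̄(0,5,n) = N̄(2,5,n). -/
/-- An overpartition of `n`: a partition of `n` together with a chosen subset of its
distinct part sizes (the overlined parts). -/
def Overpartition (n : ℕ) : Type :=
  {P : n.Partition × Finset ℕ // P.2 ⊆ P.1.parts.toFinset}

/-- The Dyson rank of an overpartition: largest part minus number of parts. -/
def Overpartition.rank {n : ℕ} (P : Overpartition n) : ℤ :=
  (P.1.1.parts.sup : ℤ) - (P.1.1.parts.card : ℤ)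

/-- `nbarRank m n` is the number of overpartitions of `n` with rank `m`. -/
noncomputable def nbarRank (m : ℤ) (n : ℕ) : ℕ :=
  Nat.card {P : Overpartition n // P.rank = m}

/-- `nbar a c n` is the number of overpartitions of `n` with rank congruent to `a` mod `c`. -/
noncomputable def nbar (a : ℤ) (c : ℕ) (n : ℕ) : ℕ :=
  Nat.card {P : Overpartition n // P.rank ≡ a [ZMOD (c : ℤ)]}

/-- `pbar n` is the number of overpartitions of `n`. -/
noncomputable def pbar (n : ℕ) : ℕ := Nat.card (Overpartition n)

/-
Removing the largest part, or one from every part, gives a recurrence in `m` for the number of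
overpartitions of rank at least `m`, and solving it expresses the generating function of
`N̄(0,5,n) - N̄(2,5,n)` in `x` through Appell series, after multiplication by the theta series
`∑ (-1) ^ m x ^ (m ^ 2)`, which is the reciprocal of the generating function of all overpartitions.

Put `Q = x ^ 5`. Splitting the index modulo five turns these into Appell series with nome `Q ^ 5`,
evaluated at powers of `Q`. A theta quotient with the same pole and the same quasi-periodicity
differs from such a series by a holomorphic function which the recurrence for its Laurent
coefficients identifies as a combination of two theta functions, with constants that do not depend
on the choice of the fifth root `x` of `Q`. The theta quotients are explicit polynomials in `x`
over the field generated by `Q` and two theta ratios `u` and `v`. The relation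
`v - u = Q u ^ 3 v ^ 2 (u + v)` lets the theta series be divided out, and the quotient has no term
in `x ^ 2`. As this holds for all fifth roots of `Q`, the coefficients of index congruent to `2`
modulo five vanish.
-/

namespace Overpartition

open Finset

section BoxedCounts

open PowerSeries

variable {n : ℕ}

/-- The number of overpartitions with underlying partition `P`. -/
def weight (P : n.Partition) : ℕ := 2 ^ #P.parts.toFinset

lemma card_underlying (p : n.Partition → Prop) [DecidablePred p] :
    Nat.card {P : Overpartition n // p P.1.1} = ∑ P with p P, weight P := by
  let e : {P : Overpartition n // p P.1.1} ≃
      Σ P : {P : n.Partition // p P}, {S : Finset ℕ // S ∈ P.1.parts.toFinset.powerset} :=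
    { toFun := fun x => ⟨⟨x.1.1.1, x.2⟩, ⟨x.1.1.2, mem_powerset.2 x.1.2⟩⟩
      invFun := fun y => ⟨⟨(y.1.1, y.2.1), mem_powerset.1 y.2.2⟩, y.1.2⟩ }
  rw [Nat.card_congr e, Nat.card_sigma, sum_subtype (p := p) _ (by simp)]
  refine sum_congr rfl fun P _ => ?_
  rw [Nat.card_eq_fintype_card, Fintype.card_coe, card_powerset, weight]

lemma pbar_eq_sum_weight (n : ℕ) : pbar n = ∑ P : n.Partition, weight P := by
  rw [pbar, ← Nat.card_congr (Equiv.subtypeUnivEquiv fun _ => trivial),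
    card_underlying fun _ => True, filter_true]

lemma sup_parts_le (P : n.Partition) : P.parts.sup ≤ n :=
  Multiset.sup_le.2 fun _ h => P.le_of_mem_parts h

lemma card_parts_le (P : n.Partition) : P.parts.card ≤ n := by
  simpa [P.parts_sum] using
    Multiset.card_nsmul_le_sum (a := 1) (s := P.parts) fun _ h => P.parts_pos h

lemma card_parts_eq_zero_iff (P : n.Partition) : P.parts.card = 0 ↔ n = 0 := by
  refine ⟨fun h => ?_, fun h => ?_⟩
  · simpa [Multiset.card_eq_zero.1 h] using P.parts_sum.symm
  · have := card_parts_le P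
    lia

lemma sup_parts_eq_zero_iff (P : n.Partition) : P.parts.sup = 0 ↔ n = 0 := by
  refine ⟨fun h => ?_, fun h => ?_⟩
  · rw [← card_parts_eq_zero_iff P, Multiset.card_eq_zero]
    refine Multiset.eq_zero_of_forall_notMem fun i hi => (P.parts_pos hi).ne' ?_
    exact Nat.eq_zero_of_le_zero (h ▸ Multiset.le_sup hi)
  · have := sup_parts_le P
    lia

/-- The number of overpartitions of `n` with at most `k` parts, all of them at most `L`. -/
def boxCount (L k n : ℕ) : ℕ :=
  ∑ P : n.Partition with P.parts.sup ≤ L ∧ P.parts.card ≤ k, weight P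

lemma boxCount_eq_ite {L k : ℕ} (h : L = 0 ∨ k = 0) (n : ℕ) :
    boxCount L k n = if n = 0 then 1 else 0 := by
  rw [boxCount, filter_congr (q := fun _ => n = 0)]
  · split_ifs with hn
    · subst hn
      simp [weight]
    · simp [hn]
  · intro P _
    have h₁ := card_parts_eq_zero_iff P
    have h₂ := sup_parts_eq_zero_iff P
    lia

lemma boxCount_succ_left (L k n : ℕ) : boxCount (L + 1) k n =
    boxCount L k n + ∑ P : n.Partition with P.parts.sup = L + 1 ∧ P.parts.card ≤ k, weight P := by
  simp only [boxCount, sum_filter, ← sum_add_distrib]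
  refine sum_congr rfl fun P _ => ?_
  split_ifs <;> lia

lemma boxCount_succ_right (L k n : ℕ) : boxCount L (k + 1) n =
    boxCount L k n + ∑ P : n.Partition with P.parts.card = k + 1 ∧ P.parts.sup ≤ L, weight P := by
  simp only [boxCount, sum_filter, ← sum_add_distrib]
  refine sum_congr rfl fun P _ => ?_
  split_ifs <;> lia

lemma sup_le_iff_notMem {s : Multiset ℕ} {L : ℕ} (h : s.sup ≤ L + 1) :
    s.sup ≤ L ↔ L + 1 ∉ s := by
  refine ⟨fun h₁ h₂ => by simpa using (Multiset.le_sup h₂).trans h₁, fun h₁ => ?_⟩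
  rw [Multiset.sup_le] at h ⊢
  intro b hb
  have : b ≠ L + 1 := by rintro rfl; exact h₁ hb
  have := h b hb
  lia

lemma weight_of_cons {m L : ℕ} {P : n.Partition} {P' : m.Partition}
    (hP : P.parts = (L + 1) ::ₘ P'.parts) (hL : P'.parts.sup ≤ L + 1) :
    weight P = weight P' + if P'.parts.sup ≤ L then weight P' else 0 := by
  simp only [weight, hP, Multiset.toFinset_cons, sup_le_iff_notMem hL]
  split_ifs with h
  · rw [insert_eq_of_mem (by simpa using h), add_zero]
  · rw [card_insert_of_notMem (by simpa using h), pow_succ, mul_two]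

/-- Remove one copy of the largest part: the copy is free to be overlined exactly when no
further copy of it remains. -/
lemma sum_weight_sup_eq {L : ℕ} (k : ℕ) (hL : L + 1 ≤ n) :
    ∑ P : n.Partition with P.parts.sup = L + 1 ∧ P.parts.card ≤ k + 1, weight P =
      boxCount (L + 1) k (n - (L + 1)) + boxCount L k (n - (L + 1)) := by
  have hbox : boxCount (L + 1) k (n - (L + 1)) + boxCount L k (n - (L + 1)) =
      ∑ P : (n - (L + 1)).Partition with P.parts.sup ≤ L + 1 ∧ P.parts.card ≤ k,
        (weight P + if P.parts.sup ≤ L then weight P else 0) := by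
    simp only [boxCount, sum_filter, ← sum_add_distrib]
    refine sum_congr rfl fun P _ => ?_
    split_ifs <;> lia
  let e := Nat.Partition.partitionWithPartEquiv (Nat.le_add_left 1 L) hL
  have he : ∀ P, (e.symm P).1.parts = (L + 1) ::ₘ P.parts := fun P => rfl
  rw [hbox]
  symm
  refine sum_bij (fun P _ => (e.symm P).1) (fun P hP => ?_) (fun P _ P' _ h => ?_)
    (fun P hP => ?_) fun P hP => ?_
  · simp only [mem_filter_univ] at hP
    simpa [he] using hP
  · exact e.symm.injective (Subtype.ext h)
  · simp only [mem_filter_univ] at hP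
    have hmem : L + 1 ∈ P.parts := by
      by_contra h
      have := (sup_le_iff_notMem hP.1.le).2 h
      lia
    have hparts := he (e ⟨P, hmem⟩)
    rw [e.symm_apply_apply] at hparts
    refine ⟨e ⟨P, hmem⟩, ?_, by rw [e.symm_apply_apply]⟩
    rw [hparts, Multiset.sup_cons, Multiset.card_cons] at hP
    simp only [mem_filter_univ]
    exact ⟨le_sup_right.trans hP.1.le, by lia⟩
  · exact (weight_of_cons (he P) (mem_filter.1 hP).2.1).symm

/-- The generating function of the overpartitions inside an `L × k` box, an overpartition analogue
of the Gaussian binomial coefficients. -/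
noncomputable def boxSeries (L k : ℕ) : ℤ⟦X⟧ := mk fun n => (boxCount L k n : ℤ)

lemma boxSeries_eq_one {L k : ℕ} (h : L = 0 ∨ k = 0) : boxSeries L k = 1 := by
  ext n
  rw [boxSeries, coeff_mk, boxCount_eq_ite h, coeff_one]
  split_ifs <;> rfl

lemma boxSeries_succ_succ (L k : ℕ) : boxSeries (L + 1) (k + 1) =
    boxSeries L (k + 1) + X ^ (L + 1) * (boxSeries (L + 1) k + boxSeries L k) := by
  ext n
  simp only [boxSeries, map_add, coeff_X_pow_mul', coeff_mk, boxCount_succ_left L (k + 1) n]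
  push_cast
  congr 1
  split_ifs with h
  · exact_mod_cast sum_weight_sup_eq k h
  · refine sum_eq_zero fun P hP => ?_
    have := sup_parts_le P
    simp only [mem_filter_univ] at hP
    lia

lemma boxSeries_succ_succ' (L k : ℕ) : boxSeries (L + 1) (k + 1) =
    boxSeries (L + 1) k + X ^ (k + 1) * (boxSeries L (k + 1) + boxSeries L k) := by
  have left_zero (k) : boxSeries 0 k = 1 := boxSeries_eq_one (.inl rfl)
  have right_zero (L) : boxSeries L 0 = 1 := boxSeries_eq_one (.inr rfl)
  induction L generalizing k with
  | zero =>
    induction k with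
    | zero => rw [boxSeries_succ_succ]; simp only [left_zero, right_zero]
    | succ k ih =>
      have h₁ := boxSeries_succ_succ 0 (k + 1)
      have h₂ := boxSeries_succ_succ 0 k
      simp only [left_zero] at *
      linear_combination h₁ - h₂ + X * ih
  | succ L ihL =>
    induction k with
    | zero =>
      have h₁ := boxSeries_succ_succ (L + 1) 0
      have h₂ := ihL 0
      have h₃ := boxSeries_succ_succ L 0
      simp only [right_zero] at *
      linear_combination h₁ + h₂ - X * h₃
    | succ k ih =>
      linear_combination boxSeries_succ_succ (L + 1) (k + 1) - boxSeries_succ_succ (L + 1) k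
        + ihL (k + 1) + X ^ (L + 2) * ih + X ^ (L + 2) * ihL k
        - X ^ (k + 2) * boxSeries_succ_succ L (k + 1) - X ^ (k + 2) * boxSeries_succ_succ L k

lemma boxSeries_comm (L k : ℕ) : boxSeries L k = boxSeries k L := by
  induction L generalizing k with
  | zero => rw [boxSeries_eq_one (.inl rfl), boxSeries_eq_one (.inr rfl)]
  | succ L ihL =>
    induction k with
    | zero => rw [boxSeries_eq_one (.inr rfl), boxSeries_eq_one (.inl rfl)]
    | succ k ihk => rw [boxSeries_succ_succ, boxSeries_succ_succ' k L, ihL, ihL, ihk]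

lemma boxCount_comm (L k n : ℕ) : boxCount L k n = boxCount k L n := by
  have h := congrArg (coeff n) (boxSeries_comm L k)
  simpa [boxSeries] using h

lemma sum_weight_sup_eq_comm (L k n : ℕ) :
    ∑ P : n.Partition with P.parts.sup = L ∧ P.parts.card ≤ k, weight P =
      ∑ P : n.Partition with P.parts.card = L ∧ P.parts.sup ≤ k, weight P := by
  cases L with
  | zero => simpa [boxCount, and_comm] using boxCount_comm 0 k n
  | succ L =>
    have h₁ := boxCount_succ_left L k n
    have h₂ := boxCount_succ_right k L n
    rw [boxCount_comm (L + 1) k, boxCount_comm L k] at h₁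
    lia

end BoxedCounts

section RankCounts

variable {n : ℕ}

/-- The Dyson rank of a partition, which is also the rank of the overpartitions over it. -/
def dysonRank (P : n.Partition) : ℤ := P.parts.sup - P.parts.card

/-- The number of overpartitions of `n` of rank at least `m`. -/
def rankGECount (m n : ℕ) : ℕ := ∑ P : n.Partition with (m : ℤ) ≤ dysonRank P, weight P

lemma rankGECount_add_sum_lt (m n : ℕ) :
    rankGECount m n + ∑ P : n.Partition with dysonRank P < m, weight P = pbar n := by
  simp only [rankGECount, pbar_eq_sum_weight, ← not_le]
  exact sum_filter_add_sum_filter_not ..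

lemma rankGECount_eq_zero {m : ℕ} (hm : 0 < m) (h : n ≤ m) : rankGECount m n = 0 := by
  refine sum_eq_zero fun P hP => ?_
  rw [mem_filter_univ, dysonRank] at hP
  have := sup_parts_le P
  have := card_parts_eq_zero_iff P
  lia

lemma sum_weight_rank_le_neg (m n : ℕ) :
    ∑ P : n.Partition with dysonRank P ≤ -(m : ℤ), weight P = rankGECount m n := by
  have hcard (P : n.Partition) : P.parts.card ∈ range (n + 1) :=
    mem_range_succ_iff.2 (card_parts_le P)
  have hsup (P : n.Partition) : P.parts.sup ∈ range (n + 1) :=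
    mem_range_succ_iff.2 (sup_parts_le P)
  rw [rankGECount, ← sum_fiberwise_of_maps_to fun P _ => hcard P,
    ← sum_fiberwise_of_maps_to fun P _ => hsup P]
  refine sum_congr rfl fun L _ => ?_
  rw [filter_filter, filter_filter]
  rcases le_or_gt m L with h | h
  · convert (sum_weight_sup_eq_comm L (L - m) n).symm using 3
    all_goals
      unfold dysonRank
      lia
  · rw [sum_eq_zero, sum_eq_zero]
    all_goals
      intro P hP
      rw [mem_filter_univ, dysonRank] at hP
      lia

/-- Both the overpartitions of rank at least `m` and those of rank less than `m` decompose, by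
their largest part respectively their number of parts, into boxes of shape `(k + j) × k`. -/
def diagonalBoxCount (j n : ℕ) : ℕ := ∑ k ∈ range (n + 1), boxCount (k + j) k (n - k)

lemma rankGECount_eq_diagonalBoxCount (m n : ℕ) :
    rankGECount m (n + m + 1) = diagonalBoxCount (m + 1) n + diagonalBoxCount m n := by
  rw [diagonalBoxCount, diagonalBoxCount, rankGECount, ← sum_add_distrib,
    ← sum_fiberwise_of_maps_to (g := fun P => P.parts.sup - m - 1) (t := range (n + 1))]
  · refine sum_congr rfl fun k hk => ?_
    rw [mem_range] at hk
    have h := sum_weight_sup_eq (L := k + m) k (show k + m + 1 ≤ n + m + 1 by lia)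
    rw [show n + m + 1 - (k + m + 1) = n - k by lia] at h
    rw [← add_assoc, ← h, filter_filter]
    refine sum_congr (filter_congr fun P _ => ?_) fun _ _ => rfl
    have := card_parts_eq_zero_iff P
    unfold dysonRank
    lia
  · intro P _
    have := sup_parts_le P
    rw [mem_range]
    lia

lemma sum_weight_rank_lt_zero (m : ℕ) :
    ∑ P : Nat.Partition 0 with dysonRank P < (m + 2 : ℕ), weight P = diagonalBoxCount m 0 := by
  rw [diagonalBoxCount, zero_add, range_one, sum_singleton, boxCount_eq_ite (.inr rfl)]
  rw [filter_true_of_mem fun P _ => by simp [dysonRank]; lia]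
  simp [weight]

lemma sum_weight_rank_lt_succ (m n : ℕ) :
    ∑ P : (n + 1).Partition with dysonRank P < (m + 2 : ℕ), weight P =
      diagonalBoxCount m (n + 1) + diagonalBoxCount (m + 1) n := by
  rw [diagonalBoxCount, diagonalBoxCount, sum_range_succ' _ (n + 1), boxCount_eq_ite (.inr rfl),
    if_neg (by lia), add_zero, ← sum_add_distrib,
    ← sum_fiberwise_of_maps_to (g := fun P => P.parts.card - 1) (t := range (n + 1))]
  · refine sum_congr rfl fun k hk => ?_
    rw [mem_range] at hk
    have h := sum_weight_sup_eq (L := k) (k + 1 + m) (show k + 1 ≤ n + 1 by lia)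
    rw [sum_weight_sup_eq_comm, Nat.add_sub_add_right, boxCount_comm, boxCount_comm k] at h
    rw [Nat.add_sub_add_right, show k + (m + 1) = k + 1 + m by lia, ← h, filter_filter]
    refine sum_congr (filter_congr fun P _ => ?_) fun _ _ => rfl
    have := card_parts_eq_zero_iff P
    unfold dysonRank
    lia
  · intro P _
    have := card_parts_le P
    rw [mem_range]
    lia

/-- The sum of the numbers of overpartitions of `n` of rank at least `m` and at least `m + 1`;
unlike the summands it satisfies a two-term recurrence. -/
def rankTail (m n : ℕ) : ℕ := rankGECount m n + rankGECount (m + 1) n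

lemma rankTail_add_rankTail (m n : ℕ) :
    rankTail m (n + m + 1) + rankTail (m + 2) n = 2 * pbar n := by
  have h₁ := rankGECount_eq_diagonalBoxCount m n
  have h₂ := rankGECount_add_sum_lt (m + 2) n
  have h₃ := rankGECount_add_sum_lt (m + 1 + 2) n
  unfold rankTail
  cases n with
  | zero =>
    have h₄ := rankGECount_eq_zero (m := m + 1) (n := 0 + m + 1) (by lia) (by lia)
    rw [sum_weight_rank_lt_zero] at h₂ h₃
    lia
  | succ n =>
    have h₄ := rankGECount_eq_diagonalBoxCount (m + 1) n
    rw [show n + (m + 1) + 1 = n + 1 + m + 1 by lia] at h₄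
    rw [sum_weight_rank_lt_succ] at h₂ h₃
    lia

lemma rankTail_eq_zero {m : ℕ} (hm : 0 < m) (h : n ≤ m) : rankTail m n = 0 := by
  rw [rankTail, rankGECount_eq_zero hm h, rankGECount_eq_zero (by lia) (by lia)]

lemma rankTail_zero (n : ℕ) : rankTail 0 n = pbar n := by
  rw [← rankGECount_add_sum_lt 0 n, rankTail, ← sum_weight_rank_le_neg (0 + 1) n]
  congr 2
  ext P
  simp only [mem_filter_univ]
  lia

end RankCounts

section AbelSummation

lemma eq_add_sum_ite_sub (g : ℕ → ℤ) {k n : ℕ} (h : k ≤ n) :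
    g k = g 0 + ∑ m ∈ range n, if m + 1 ≤ k then g (m + 1) - g m else 0 := by
  have hfilter : {m ∈ range n | m + 1 ≤ k} = range k := by
    ext m
    simp only [mem_filter, mem_range]
    lia
  rw [← sum_filter, hfilter, sum_range_sub]
  ring

lemma int_eq_add_sum_ite_sub (f : ℤ → ℤ) {r : ℤ} {n : ℕ} (h : r.natAbs ≤ n) :
    f r = f 0 + ∑ m ∈ range n, ((if (m + 1 : ℤ) ≤ r then f (m + 1) - f m else 0) +
      if r ≤ -(m + 1 : ℤ) then f (-(m + 1)) - f (-m) else 0) := by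
  obtain ⟨k, rfl | rfl⟩ := r.eq_nat_or_neg
  · have hpos (m : ℕ) : (m + 1 : ℤ) ≤ k ↔ m + 1 ≤ k := by lia
    have hneg (m : ℕ) : ¬ (k : ℤ) ≤ -(m + 1) := by lia
    simpa only [Nat.cast_zero, Nat.cast_succ, hpos, hneg, if_false, add_zero] using
      eq_add_sum_ite_sub (fun m => f m) (k := k) (n := n) (by simpa using h)
  · have hpos (m : ℕ) : ¬ (m + 1 : ℤ) ≤ -k := by lia
    have hneg (m : ℕ) : -(k : ℤ) ≤ -(m + 1) ↔ m + 1 ≤ k := by lia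
    simpa only [Nat.cast_zero, Nat.cast_succ, hpos, hneg, if_false, zero_add, neg_zero] using
      eq_add_sum_ite_sub (fun m => f (-m)) (k := k) (n := n) (by simpa using h)

lemma sum_weight_mul_apply_rank (f : ℤ → ℤ) (n : ℕ) :
    ∑ P : n.Partition, weight P * f (dysonRank P) = pbar n * f 0 +
      ∑ m ∈ range n, (f (m + 1) - f m + (f (-(m + 1)) - f (-m))) * rankGECount (m + 1) n := by
  have hrank (P : n.Partition) : (dysonRank P).natAbs ≤ n := by
    have := sup_parts_le P
    have := card_parts_le P
    unfold dysonRank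
    lia
  rw [sum_congr rfl fun P _ => by rw [int_eq_add_sum_ite_sub f (hrank P)]]
  simp only [mul_add, sum_add_distrib, mul_sum, mul_ite, mul_zero, add_mul]
  rw [← sum_mul, ← Nat.cast_sum, ← pbar_eq_sum_weight, sum_comm,
    sum_comm (s := univ) (t := range n)]
  simp only [← sum_filter, ← sum_mul, ← Nat.cast_sum]
  congr 2 <;> refine sum_congr rfl fun m _ => ?_
  · rw [rankGECount, mul_comm, Nat.cast_succ]
  · rw [← sum_weight_rank_le_neg, mul_comm, Nat.cast_succ]

/-- The function on residue classes modulo five that counts the class of `0` and discounts the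
class of `2`. -/
def residueSign (r : ℤ) : ℤ :=
  (if r ≡ 0 [ZMOD (5 : ℕ)] then 1 else 0) - if r ≡ 2 [ZMOD (5 : ℕ)] then 1 else 0

/-- The sequence with initial value `0` whose sums of consecutive terms are the differences of
`m ↦ residueSign m + residueSign (-m)`. -/
def tailCoeff (m : ℕ) : ℤ :=
  match m % 5 with
  | 1 => -2
  | 2 => 1
  | 3 => -1
  | 4 => 2
  | _ => 0

lemma residueSign_sub_add_residueSign_sub (m : ℕ) :
    residueSign (m + 1) - residueSign m + (residueSign (-(m + 1)) - residueSign (-m)) =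
      tailCoeff (m + 1) + tailCoeff m := by
  simp only [residueSign, Int.ModEq, tailCoeff]
  grind

lemma sum_tailCoeff_mul_rankTail (n N : ℕ) :
    ∑ m ∈ range (N + 1), tailCoeff m * (rankTail m n : ℤ) =
      ∑ m ∈ range N, (tailCoeff (m + 1) + tailCoeff m) * (rankGECount (m + 1) n : ℤ) +
        tailCoeff N * rankGECount (N + 1) n := by
  induction N with
  | zero => simp [tailCoeff]
  | succ N ih =>
    rw [sum_range_succ, ih, sum_range_succ, rankTail]
    push_cast
    ring

/-- The difference of the numbers of overpartitions of `n` with rank `0` and with rank `2` modulo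
five, written in terms of rank tails. -/
noncomputable def rankDiff (n : ℕ) : ℤ := pbar n + ∑ m ∈ range (n + 1), tailCoeff m * rankTail m n

lemma nbar_eq_sum_weight (a : ℤ) (c n : ℕ) :
    nbar a c n = ∑ P : n.Partition with dysonRank P ≡ a [ZMOD c], weight P :=
  card_underlying fun P => dysonRank P ≡ a [ZMOD c]

lemma nbar_sub_nbar_eq_rankDiff (n : ℕ) : (nbar 0 5 n : ℤ) - nbar 2 5 n = rankDiff n := by
  have hsum : (nbar 0 5 n : ℤ) - nbar 2 5 n =
      ∑ P : n.Partition, weight P * residueSign (dysonRank P) := by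
    simp only [nbar_eq_sum_weight, sum_filter, Nat.cast_sum, ← sum_sub_distrib]
    refine sum_congr rfl fun P _ => ?_
    unfold residueSign
    split_ifs <;> simp
  have hzero : residueSign 0 = 1 := by decide
  rw [hsum, sum_weight_mul_apply_rank, rankDiff, sum_tailCoeff_mul_rankTail,
    rankGECount_eq_zero (by lia) (by lia), hzero]
  simp only [residueSign_sub_add_residueSign_sub, mul_one, Nat.cast_zero, mul_zero, add_zero]

end AbelSummation

end Overpartition

section ThetaSeries

open Filter Topology Finset

lemma summable_pow_sq_mul_pow {𝕜 : Type*} [NormedField 𝕜] [CompleteSpace 𝕜] {q : 𝕜}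
    (hq : ‖q‖ < 1) (w : 𝕜) : Summable fun n : ℕ => q ^ n ^ 2 * w ^ n := by
  have hlim : Tendsto (fun n : ℕ => ‖q‖ ^ n * ‖w‖) atTop (𝓝 0) := by
    simpa using (tendsto_pow_atTop_nhds_zero_of_lt_one (norm_nonneg q) hq).mul_const ‖w‖
  refine .of_norm_bounded_eventually_nat summable_geometric_two ?_
  filter_upwards [hlim.eventually_le_const (by norm_num : (0 : ℝ) < 1 / 2)] with n hn
  calc ‖q ^ n ^ 2 * w ^ n‖ = (‖q‖ ^ n * ‖w‖) ^ n := by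
        rw [norm_mul, norm_pow, norm_pow, mul_pow, ← pow_mul, sq]
    _ ≤ (1 / 2) ^ n := by gcongr

lemma tsum_eq_sum_tsum_mul_add {f : ℤ → ℂ} (hf : Summable f) (a : ℤ) {k : ℕ} (hk : 0 < k) :
    ∑' n, f n = ∑ j ∈ Ico a (a + k), ∑' m, f (k * m + j) := by
  have hbij : Function.Bijective fun x : Ico a (a + k) × ℤ => (k * x.2 + x.1 : ℤ) := by
    refine ⟨?_, fun n => ⟨(⟨a + (n - a) % k, ?_⟩, (n - a) / k), ?_⟩⟩
    · rintro ⟨⟨i, hi⟩, m⟩ ⟨⟨j, hj⟩, n⟩ (h : k * m + i = k * n + j)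
      rw [mem_Ico] at hi hj
      have hmn : m = n := by
        have (l r : ℤ) (hr : a ≤ r ∧ r < a + k) : (k * l + r - a) / k = l := by
          rw [add_sub_assoc, Int.mul_add_ediv_left _ _ (by lia),
            Int.ediv_eq_zero_of_lt (by lia) (by lia), add_zero]
        rw [← this m i hi, h, this n j hj]
      subst hmn
      simpa using h
    · have := Int.emod_nonneg (n - a) (by lia : (k : ℤ) ≠ 0)
      have := Int.emod_lt_of_pos (n - a) (by lia : (0 : ℤ) < k)
      rw [mem_Ico]
      lia
    · have := Int.mul_ediv_add_emod (n - a) k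
      dsimp only
      lia
  let e := Equiv.ofBijective _ hbij
  have hfe : Summable fun x => f (e x) := e.summable_iff.2 hf
  rw [← e.tsum_eq, hfe.tsum_prod, tsum_fintype]
  exact sum_coe_sort (Ico a (a + k)) fun j => ∑' m, f (k * m + j)

/-- The theta series `∑ q ^ (m ^ 2) w ^ m` over the integers, in terms of the nome `q` and the
multiplicative variable `w`. -/
noncomputable def theta (q w : ℂ) : ℂ := ∑' m : ℤ, q ^ m ^ 2 * w ^ m

variable {q : ℂ}

lemma summable_theta (hq : ‖q‖ < 1) (w : ℂ) : Summable fun m : ℤ => q ^ m ^ 2 * w ^ m := by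
  refine .of_nat_of_neg ((summable_pow_sq_mul_pow hq w).congr fun n => ?_)
    ((summable_pow_sq_mul_pow hq w⁻¹).congr fun n => ?_)
  · norm_cast
  · rw [neg_sq, zpow_neg, inv_pow]
    norm_cast

lemma theta_inv (q w : ℂ) : theta q w⁻¹ = theta q w := by
  rw [theta, ← (Equiv.neg ℤ).tsum_eq]
  simp [theta]

lemma theta_zpow_mul (hq : q ≠ 0) (k : ℤ) {w : ℂ} (hw : w ≠ 0) :
    theta q (q ^ (2 * k) * w) = (q ^ k ^ 2)⁻¹ * w ^ (-k) * theta q w := by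
  rw [theta, theta, ← (Equiv.addRight k).tsum_eq fun m : ℤ => q ^ m ^ 2 * w ^ m, ← tsum_mul_left]
  refine tsum_congr fun m => ?_
  rw [Equiv.coe_addRight, mul_zpow, ← zpow_mul, zpow_add₀ hw, zpow_neg, add_sq, zpow_add₀ hq,
    zpow_add₀ hq, show 2 * k * m = 2 * m * k by ring]
  field_simp

lemma theta_sq_mul (hq : q ≠ 0) {w : ℂ} (hw : w ≠ 0) :
    theta q (q ^ 2 * w) = (q * w)⁻¹ * theta q w := by
  simpa [mul_comm] using theta_zpow_mul hq 1 hw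

lemma theta_neg_self (hq : q ≠ 0) : theta q (-q) = 0 := by
  have h := theta_sq_mul hq (inv_ne_zero (neg_ne_zero.2 hq))
  rw [theta_inv, show q ^ 2 * (-q)⁻¹ = -q by field, show (q * (-q)⁻¹)⁻¹ = -1 by field] at h
  linear_combination h / 2

lemma theta_neg_zpow_odd (hq : q ≠ 0) (k : ℤ) : theta q (-q ^ (2 * k + 1)) = 0 := by
  rw [zpow_add_one₀ hq, ← mul_neg, theta_zpow_mul hq k (neg_ne_zero.2 hq), theta_neg_self hq,
    mul_zero]

lemma theta_eq_sum_theta_pow (hq0 : q ≠ 0) (hq : ‖q‖ < 1) {w : ℂ} (hw : w ≠ 0) (a : ℤ) {k : ℕ}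
    (hk : 0 < k) :
    theta q w = ∑ j ∈ Ico a (a + k),
      q ^ j ^ 2 * w ^ j * theta (q ^ k ^ 2) (w ^ k * q ^ (2 * k * j)) := by
  rw [theta, tsum_eq_sum_tsum_mul_add (summable_theta hq w) a hk]
  refine sum_congr rfl fun j _ => ?_
  rw [theta, ← tsum_mul_left]
  refine tsum_congr fun m => ?_
  rw [show (k * m + j) ^ 2 = j ^ 2 + ((k ^ 2 : ℕ) * m ^ 2 + 2 * k * j * m) by push_cast; ring,
    zpow_add₀ hq0, zpow_add₀ hq0, zpow_add₀ hw, mul_zpow, zpow_mul q, zpow_mul w, zpow_mul q _ m,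
    zpow_natCast, zpow_natCast]
  ring

/-- The bijection from two copies of the lattice `ℤ × ℤ` onto itself whose images are the pairs
with even and with odd coordinate sum. -/
def latticeParity : (ℤ × ℤ) ⊕ (ℤ × ℤ) → ℤ × ℤ
  | .inl x => (x.1 + x.2, x.1 - x.2)
  | .inr x => (x.1 + x.2 + 1, x.1 - x.2)

lemma latticeParity_bijective : Function.Bijective latticeParity := by
  refine ⟨?_, fun ⟨m, n⟩ => ?_⟩
  · rintro (⟨a, b⟩ | ⟨a, b⟩) (⟨c, d⟩ | ⟨c, d⟩) h <;> grind [latticeParity]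
  · obtain ⟨k, hk | hk⟩ := Int.even_or_odd' (m + n)
    · exact ⟨.inl (k, m - k), by grind [latticeParity]⟩
    · exact ⟨.inr (k, m - k - 1), by grind [latticeParity]⟩

theorem theta_mul_mul_theta_div (hq0 : q ≠ 0) (hq : ‖q‖ < 1) {u v : ℂ} (hu : u ≠ 0) (hv : v ≠ 0) :
    theta q (u * v) * theta q (u / v) = theta (q ^ 2) (u ^ 2) * theta (q ^ 2) (v ^ 2) +
      q * u * v * (theta (q ^ 2) (q ^ 2 * u ^ 2) * theta (q ^ 2) (q ^ 2 * v ^ 2)) := by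
  have hq2 : ‖q ^ 2‖ < 1 := by simpa using pow_lt_one₀ (norm_nonneg _) hq two_ne_zero
  have hsummable (w : ℂ) := (summable_theta hq w).norm
  have hsummable2 (w : ℂ) := (summable_theta hq2 w).norm
  have hsq (x : ℂ) (k : ℤ) : (x ^ 2) ^ k = x ^ (2 * k) := by rw [zpow_mul, zpow_ofNat]
  have hterm (m n : ℤ) : q ^ m ^ 2 * (u * v) ^ m * (q ^ n ^ 2 * (u / v) ^ n) =
      q ^ (m ^ 2 + n ^ 2) * u ^ (m + n) * v ^ (m - n) := by
    rw [mul_zpow, div_zpow, zpow_add₀ hq0, zpow_add₀ hu, zpow_sub₀ hv]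
    ring
  let f (x : ℤ × ℤ) : ℂ := q ^ x.1 ^ 2 * (u * v) ^ x.1 * (q ^ x.2 ^ 2 * (u / v) ^ x.2)
  have heven (x : ℤ × ℤ) : f (latticeParity (.inl x)) =
      (q ^ 2) ^ x.1 ^ 2 * (u ^ 2) ^ x.1 * ((q ^ 2) ^ x.2 ^ 2 * (v ^ 2) ^ x.2) := by
    simp only [f, latticeParity, hterm, hsq]
    rw [show (x.1 + x.2) ^ 2 + (x.1 - x.2) ^ 2 = 2 * x.1 ^ 2 + 2 * x.2 ^ 2 by ring,
      zpow_add₀ hq0]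
    ring_nf
  have hodd (x : ℤ × ℤ) : f (latticeParity (.inr x)) =
      q * u * v * ((q ^ 2) ^ x.1 ^ 2 * (q ^ 2 * u ^ 2) ^ x.1 *
        ((q ^ 2) ^ x.2 ^ 2 * (q ^ 2 * v ^ 2) ^ x.2)) := by
    simp only [f, latticeParity, hterm]
    simp only [mul_zpow, hsq]
    rw [show (x.1 + x.2 + 1) ^ 2 + (x.1 - x.2) ^ 2 =
        2 * x.1 ^ 2 + 2 * x.2 ^ 2 + 2 * x.1 + 2 * x.2 + 1 by ring,
      show x.1 + x.2 + 1 + (x.1 - x.2) = 2 * x.1 + 1 by ring,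
      show x.1 + x.2 + 1 - (x.1 - x.2) = 2 * x.2 + 1 by ring, zpow_add_one₀ hq0,
      zpow_add_one₀ hu, zpow_add_one₀ hv, zpow_add₀ hq0, zpow_add₀ hq0, zpow_add₀ hq0]
    ring
  unfold theta
  rw [tsum_mul_tsum_of_summable_norm (hsummable _) (hsummable _),
    tsum_mul_tsum_of_summable_norm (hsummable2 _) (hsummable2 _),
    tsum_mul_tsum_of_summable_norm (hsummable2 _) (hsummable2 _),
    ← (Equiv.ofBijective _ latticeParity_bijective).tsum_eq, ← tsum_mul_left, Summable.tsum_sum]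
  · exact congr_arg₂ _ (tsum_congr heven) (tsum_congr hodd)
  · exact (summable_mul_of_summable_norm (hsummable2 _) (hsummable2 _)).congr
      fun x => (heven x).symm
  · exact ((summable_mul_of_summable_norm (hsummable2 _) (hsummable2 _)).mul_left _).congr
      fun x => (hodd x).symm

end ThetaSeries

section AppellSeries

open Filter Topology Finset

lemma tsum_int_eq_zero_add_tsum_nat_succ {f : ℤ → ℂ} (hf : Summable f) :
    ∑' n, f n = f 0 + ∑' n : ℕ, (f (n + 1) + f (-(n + 1))) := by
  have h1 : Summable fun n : ℕ => f (n + 1) :=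
    hf.comp_injective (i := fun n : ℕ => (n + 1 : ℤ)) fun _ _ h => by simpa using h
  have h2 : Summable fun n : ℕ => f (-(n + 1)) :=
    hf.comp_injective (i := fun n : ℕ => (-(n + 1) : ℤ)) fun _ _ h => by simpa using h
  rw [tsum_of_add_one_of_neg_add_one h1 h2, h1.tsum_add h2]
  ring

/-- The Appell series `∑ (-1) ^ m q ^ (m ^ 2) w ^ m / (1 - z p ^ m)` over the integers. Division by
zero removes the terms with `z p ^ m = 1`. -/
noncomputable def appell (q p w z : ℂ) : ℂ :=
  ∑' m : ℤ, q ^ m ^ 2 * (-w) ^ m / (1 - z * p ^ m)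

lemma norm_inv_one_sub_le {κ : ℝ} (hκ0 : 0 < κ) (hκ : κ < 1) {w : ℂ}
    (hw : ‖w‖ ≤ κ ∨ κ⁻¹ ≤ ‖w‖) : ‖(1 - w)⁻¹‖ ≤ (1 - κ)⁻¹ := by
  rw [norm_inv]
  refine inv_anti₀ (by linarith) ?_
  rcases hw with hw | hw
  · have := norm_sub_norm_le 1 w
    rw [norm_one] at this
    linarith
  · have := norm_sub_norm_le w 1
    rw [norm_one, norm_sub_rev] at this
    have : κ * κ⁻¹ = 1 := mul_inv_cancel₀ hκ0.ne'
    nlinarith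

variable {p z : ℂ} {r : ℝ}

lemma norm_mul_zpow_le_or_le (hp0 : p ≠ 0) (hp : ‖p‖ < r) (hrz : r ≤ ‖z‖) (hzr : ‖z‖ ≤ r⁻¹) {m : ℤ}
    (hm : m ≠ 0) : ‖z * p ^ m‖ ≤ ‖p‖ / r ∨ (‖p‖ / r)⁻¹ ≤ ‖z * p ^ m‖ := by
  have hp0' : 0 < ‖p‖ := norm_pos_iff.2 hp0
  have hr0 : 0 < r := hp0'.trans hp
  have hr1 : r ≤ 1 := by
    have := mul_inv_cancel₀ hr0.ne'
    nlinarith [hrz.trans hzr]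
  rw [norm_mul, norm_zpow]
  rcases lt_or_gt_of_ne hm with hm | hm
  · right
    calc (‖p‖ / r)⁻¹ = r * ‖p‖ ^ (-1 : ℤ) := by rw [inv_div, zpow_neg_one, div_eq_mul_inv]
      _ ≤ ‖z‖ * ‖p‖ ^ m :=
        mul_le_mul hrz (zpow_le_zpow_right_of_le_one₀ hp0' (hp.le.trans hr1) (by lia))
          (by positivity) (norm_nonneg z)
  · left
    calc ‖z‖ * ‖p‖ ^ m ≤ r⁻¹ * ‖p‖ ^ (1 : ℤ) :=
        mul_le_mul hzr (zpow_le_zpow_right_of_le_one₀ hp0' (hp.le.trans hr1) (by lia))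
          (by positivity) (by positivity)
      _ = ‖p‖ / r := by rw [zpow_one, div_eq_inv_mul]

lemma norm_inv_one_sub_mul_zpow_le (hp0 : p ≠ 0) (hp : ‖p‖ < r) (hrz : r ≤ ‖z‖) (hzr : ‖z‖ ≤ r⁻¹)
    {m : ℤ} (hm : m ≠ 0) : ‖(1 - z * p ^ m)⁻¹‖ ≤ (1 - ‖p‖ / r)⁻¹ := by
  have hp0' : 0 < ‖p‖ := norm_pos_iff.2 hp0
  have hr0 : 0 < r := hp0'.trans hp
  exact norm_inv_one_sub_le (by positivity) ((div_lt_one hr0).2 hp)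
    (norm_mul_zpow_le_or_le hp0 hp hrz hzr hm)

lemma one_sub_mul_zpow_ne_zero (hp0 : p ≠ 0) (hp : ‖p‖ < r) (hrz : r ≤ ‖z‖) (hzr : ‖z‖ ≤ r⁻¹)
    {m : ℤ} (hm : m ≠ 0) : 1 - z * p ^ m ≠ 0 := by
  intro h
  have hκ : ‖p‖ / r < 1 := (div_lt_one ((norm_nonneg p).trans_lt hp)).2 hp
  have hr0 : 0 < r := (norm_nonneg p).trans_lt hp
  have hκ0 : 0 < ‖p‖ / r := div_pos (norm_pos_iff.2 hp0) hr0
  have := norm_mul_zpow_le_or_le hp0 hp hrz hzr hm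
  rw [← sub_eq_zero.1 h, norm_one] at this
  rcases this with h | h
  · exact h.not_gt hκ
  · exact h.not_gt ((one_lt_inv₀ hκ0).2 hκ)

lemma summable_appell {q : ℂ} (hq : ‖q‖ < 1) (hp0 : p ≠ 0) (hp : ‖p‖ < r) (hrz : r ≤ ‖z‖)
    (hzr : ‖z‖ ≤ r⁻¹) (w : ℂ) :
    Summable fun m : ℤ => q ^ m ^ 2 * (-w) ^ m / (1 - z * p ^ m) := by
  refine .of_norm_bounded ((summable_theta hq (-w)).norm.mul_right
    (max ‖(1 - z)⁻¹‖ (1 - ‖p‖ / r)⁻¹)) fun m => ?_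
  rw [div_eq_mul_inv, norm_mul]
  gcongr
  rcases eq_or_ne m 0 with rfl | hm
  · simp
  · exact le_max_of_le_right (norm_inv_one_sub_mul_zpow_le hp0 hp hrz hzr hm)

end AppellSeries

namespace Overpartition

open Filter Topology Finset

section GeneratingFunctions

lemma pbar_le_two_pow (n : ℕ) : pbar n ≤ 2 ^ n := by
  induction n with
  | zero => simp [pbar_eq_sum_weight, weight]
  | succ n ih =>
    have h := rankTail_add_rankTail 0 n
    rw [rankTail_zero, add_zero] at h
    rw [pow_succ]
    lia

lemma rankTail_mul_two_pow_le (m n : ℕ) : rankTail m n * 2 ^ m ≤ 2 ^ n := by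
  rcases Nat.eq_zero_or_pos m with rfl | hm
  · simpa [rankTail_zero] using pbar_le_two_pow n
  rcases Nat.lt_or_ge m n with h | h
  · obtain ⟨k, rfl⟩ := Nat.exists_eq_add_of_lt h
    have hle : rankTail m (k + m + 1) ≤ 2 * 2 ^ k := by
      have := rankTail_add_rankTail m k
      have := pbar_le_two_pow k
      lia
    calc rankTail m (m + k + 1) * 2 ^ m = rankTail m (k + m + 1) * 2 ^ m := by rw [add_comm m k]
      _ ≤ 2 * 2 ^ k * 2 ^ m := by gcongr
      _ = 2 ^ (m + k + 1) := by ring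
  · simp [rankTail_eq_zero hm h]

/-- The generating function of overpartitions. -/
noncomputable def pbarSeries (x : ℂ) : ℂ := ∑' n : ℕ, pbar n * x ^ n

/-- The generating function in `n` of the rank tails `rankTail m n`. -/
noncomputable def rankTailSeries (m : ℕ) (x : ℂ) : ℂ := ∑' n : ℕ, rankTail m n * x ^ n

/-- The generating function of the rank differences `rankDiff n`. -/
noncomputable def rankDiffSeries (x : ℂ) : ℂ := ∑' n : ℕ, rankDiff n * x ^ n

/-- The partial theta series `∑ (-1) ^ (n - 1) x ^ (n ^ 2 + m n)` over positive `n`. -/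
noncomputable def partialTheta (m : ℕ) (x : ℂ) : ℂ :=
  ∑' n : ℕ, (-1) ^ n * x ^ ((n + 1) ^ 2 + m * (n + 1))

lemma norm_natCast_mul_pow_le {a n : ℕ} (ha : a ≤ 2 ^ n) (x : ℂ) :
    ‖(a * x ^ n : ℂ)‖ ≤ (2 * ‖x‖) ^ n := by
  rw [norm_mul, norm_pow, Complex.norm_natCast, mul_pow]
  gcongr
  exact_mod_cast ha

lemma rankTail_le_two_pow (m n : ℕ) : rankTail m n ≤ 2 ^ n :=
  (Nat.le_mul_of_pos_right _ (by positivity)).trans (rankTail_mul_two_pow_le m n)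

variable {x : ℂ}

lemma summable_pbar (hx : ‖x‖ < 1 / 2) : Summable fun n : ℕ => (pbar n * x ^ n : ℂ) :=
  .of_norm_bounded (summable_geometric_of_lt_one (by positivity) (by linarith))
    fun n => norm_natCast_mul_pow_le (pbar_le_two_pow n) x

lemma summable_rankTail (hx : ‖x‖ < 1 / 2) (m : ℕ) :
    Summable fun n : ℕ => (rankTail m n * x ^ n : ℂ) :=
  .of_norm_bounded (summable_geometric_of_lt_one (by positivity) (by linarith))
    fun n => norm_natCast_mul_pow_le (rankTail_le_two_pow m n) x

lemma rankTailSeries_zero (x : ℂ) : rankTailSeries 0 x = pbarSeries x := by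
  simp only [rankTailSeries, pbarSeries, rankTail_zero]

lemma rankTailSeries_eq_sum_add (hx : ‖x‖ < 1 / 2) (m : ℕ) :
    rankTailSeries m x = ∑ n ∈ range (m + 1), (rankTail m n * x ^ n : ℂ) +
      x ^ (m + 1) * (2 * pbarSeries x - rankTailSeries (m + 2) x) := by
  rw [rankTailSeries, ← (summable_rankTail hx m).sum_add_tsum_nat_add (m + 1), pbarSeries,
    rankTailSeries, ← tsum_mul_left, ← ((summable_pbar hx).mul_left 2).tsum_sub
      (summable_rankTail hx (m + 2)), ← tsum_mul_left]
  congr 1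
  refine tsum_congr fun n => ?_
  have h : (rankTail m (n + m + 1) + rankTail (m + 2) n : ℂ) = 2 * pbar n :=
    mod_cast rankTail_add_rankTail m n
  rw [← add_assoc]
  linear_combination x ^ (n + m + 1) * h

lemma rankTailSeries_eq (hx : ‖x‖ < 1 / 2) {m : ℕ} (hm : 0 < m) :
    rankTailSeries m x = x ^ (m + 1) * (2 * pbarSeries x - rankTailSeries (m + 2) x) := by
  rw [rankTailSeries_eq_sum_add hx, sum_eq_zero fun n hn => ?_, zero_add]
  rw [rankTail_eq_zero hm (mem_range_succ_iff.1 hn), Nat.cast_zero, zero_mul]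

lemma norm_rankTailSeries_le (hx : ‖x‖ < 1 / 2) (m : ℕ) :
    ‖rankTailSeries m x‖ ≤ (1 - 2 * ‖x‖)⁻¹ :=
  tsum_of_norm_bounded (hasSum_geometric_of_lt_one (by positivity) (by linarith))
    fun n => norm_natCast_mul_pow_le (rankTail_le_two_pow m n) x

lemma norm_partialTheta_term_le (hx : ‖x‖ < 1 / 2) (m n : ℕ) :
    ‖(-1) ^ n * x ^ ((n + 1) ^ 2 + m * (n + 1))‖ ≤ (1 / 2) ^ m * (1 / 2) ^ n := by
  rw [norm_mul, norm_pow, norm_neg, norm_one, one_pow, one_mul, norm_pow, ← pow_add]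
  calc ‖x‖ ^ ((n + 1) ^ 2 + m * (n + 1)) ≤ (1 / 2) ^ ((n + 1) ^ 2 + m * (n + 1)) := by gcongr
    _ ≤ (1 / 2) ^ (m + n) :=
      pow_le_pow_of_le_one (by norm_num) (by norm_num) (by nlinarith)

lemma summable_partialTheta (hx : ‖x‖ < 1 / 2) (m : ℕ) :
    Summable fun n : ℕ => (-1) ^ n * x ^ ((n + 1) ^ 2 + m * (n + 1)) :=
  .of_norm_bounded (summable_geometric_two.mul_left _) (norm_partialTheta_term_le hx m)

lemma norm_partialTheta_le (hx : ‖x‖ < 1 / 2) (m : ℕ) : ‖partialTheta m x‖ ≤ 2 :=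
  calc ‖partialTheta m x‖ ≤ (1 / 2) ^ m * 2 :=
      tsum_of_norm_bounded (hasSum_geometric_two.mul_left _) (norm_partialTheta_term_le hx m)
    _ ≤ 1 * 2 := by gcongr; exact pow_le_one₀ (by norm_num) (by norm_num)
    _ = 2 := one_mul 2

lemma partialTheta_eq (hx : ‖x‖ < 1 / 2) (m : ℕ) :
    partialTheta m x = x ^ (m + 1) * (1 - partialTheta (m + 2) x) := by
  rw [partialTheta, (summable_partialTheta hx m).tsum_eq_zero_add, partialTheta, mul_sub,
    ← tsum_mul_left, sub_eq_add_neg, ← tsum_neg]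
  congr 1
  · ring
  · exact tsum_congr fun n => by ring

lemma eq_zero_of_norm_le_mul {E : ℕ → ℂ} {C κ : ℝ} (hκ0 : 0 ≤ κ) (hκ : κ < 1) {k : ℕ}
    (hC : ∀ m, ‖E m‖ ≤ C) (hE : ∀ m, ‖E m‖ ≤ κ * ‖E (m + k)‖) (m : ℕ) : E m = 0 := by
  have hpow (j : ℕ) : ∀ m, ‖E m‖ ≤ κ ^ j * C := by
    induction j with
    | zero => simpa using hC
    | succ j ih =>
      intro m
      calc ‖E m‖ ≤ κ * (κ ^ j * C) := (hE m).trans (by gcongr; exact ih _)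
        _ = κ ^ (j + 1) * C := by ring
  have hlim := (tendsto_pow_atTop_nhds_zero_of_lt_one hκ0 hκ).mul_const C
  rw [zero_mul] at hlim
  exact norm_le_zero_iff.1 (ge_of_tendsto' hlim fun j => hpow j m)

lemma rankTailSeries_eq_mul_partialTheta (hx : ‖x‖ < 1 / 2) {m : ℕ} (hm : 0 < m) :
    rankTailSeries m x = 2 * pbarSeries x * partialTheta m x := by
  obtain ⟨m, rfl⟩ := Nat.exists_eq_succ_of_ne_zero hm.ne'
  refine sub_eq_zero.1 (eq_zero_of_norm_le_mul (k := 2) (norm_nonneg x) (by linarith)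
    (E := fun m => rankTailSeries (m + 1) x - 2 * pbarSeries x * partialTheta (m + 1) x)
    (fun m => (norm_sub_le _ _).trans (add_le_add (norm_rankTailSeries_le hx _)
      ((norm_mul_le _ _).trans
        (mul_le_mul_of_nonneg_left (norm_partialTheta_le hx _) (norm_nonneg _))))) (fun m => ?_) m)
  rw [rankTailSeries_eq hx m.succ_pos, partialTheta_eq hx (m + 1),
    show ∀ a b c d : ℂ, a * (b - c) - b * (a * (1 - d)) = -(a * (c - b * d)) by intros; ring,
    norm_neg, norm_mul, norm_pow]
  gcongr
  exact pow_le_of_le_one (norm_nonneg x) (by linarith) (by lia)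

lemma theta_neg_one_eq (hx : ‖x‖ < 1) : theta x (-1) = 1 - 2 * partialTheta 0 x := by
  rw [theta, tsum_int_eq_zero_add_tsum_nat_succ (summable_theta hx (-1)), partialTheta,
    ← tsum_mul_left, sub_eq_add_neg, ← tsum_neg]
  congr 1
  · simp
  · refine tsum_congr fun n => ?_
    rw [neg_sq, zpow_neg, ← inv_zpow, inv_neg_one]
    norm_cast
    push_cast
    ring

theorem pbarSeries_mul_theta (hx : ‖x‖ < 1 / 2) : pbarSeries x * theta x (-1) = 1 := by
  have h := rankTailSeries_eq_sum_add hx 0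
  rw [rankTailSeries_zero, rankTailSeries_eq_mul_partialTheta hx (Nat.succ_pos _)] at h
  have hpbar : (rankTail 0 0 : ℂ) = 1 := by simp [rankTail_zero, pbar_eq_sum_weight, weight]
  simp only [zero_add, sum_range_one, pow_zero, mul_one, pow_one, hpbar] at h
  have hpartial := partialTheta_eq hx 0
  rw [theta_neg_one_eq (by linarith)]
  linear_combination h - 2 * pbarSeries x * hpartial

lemma theta_neg_one_ne_zero (hx : ‖x‖ < 1 / 2) : theta x (-1) ≠ 0 :=
  right_ne_zero_of_mul_eq_one (pbarSeries_mul_theta hx)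

lemma tailCoeff_add_five (m : ℕ) : tailCoeff (m + 5) = tailCoeff m := by
  simp only [tailCoeff, Nat.add_mod_right]

lemma norm_tailCoeff_le (m : ℕ) : ‖(tailCoeff m : ℂ)‖ ≤ 2 := by
  unfold tailCoeff
  split <;> norm_num

lemma summable_tailCoeff (hx : ‖x‖ < 1) : Summable fun m : ℕ => (tailCoeff m * x ^ m : ℂ) := by
  refine .of_norm_bounded ((summable_geometric_of_lt_one (norm_nonneg x) hx).mul_left 2) fun m => ?_
  rw [norm_mul, norm_pow]
  gcongr
  exact norm_tailCoeff_le m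

lemma one_sub_mul_tsum_tailCoeff (hx : ‖x‖ < 1) :
    (1 - x ^ 5) * ∑' m : ℕ, (tailCoeff m * x ^ m : ℂ) = -2 * x + x ^ 2 - x ^ 3 + 2 * x ^ 4 := by
  have hshift : ∑' m : ℕ, (tailCoeff (m + 5) * x ^ (m + 5) : ℂ) =
      x ^ 5 * ∑' m : ℕ, (tailCoeff m * x ^ m : ℂ) := by
    rw [← tsum_mul_left]
    exact tsum_congr fun m => by rw [tailCoeff_add_five]; ring
  have h := (summable_tailCoeff hx).sum_add_tsum_nat_add 5
  rw [hshift] at h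
  generalize ∑' m : ℕ, (tailCoeff m * x ^ m : ℂ) = S at h ⊢
  simp only [sum_range_succ, range_zero, sum_empty, tailCoeff, Nat.reduceMod] at h
  push_cast at h
  linear_combination -h

lemma summable_tailCoeff_mul_rankTail (hx : ‖x‖ < 1 / 2) :
    Summable fun i : ℕ × ℕ => (tailCoeff i.1 * (rankTail i.1 i.2 * x ^ i.2) : ℂ) := by
  refine .of_norm_bounded ((summable_geometric_two.mul_left 2).mul_of_nonneg
    (summable_geometric_of_lt_one (by positivity : 0 ≤ 2 * ‖x‖) (by linarith))
    (fun _ => by positivity) fun _ => by positivity) fun ⟨m, n⟩ => ?_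
  have hle : (rankTail m n : ℝ) ≤ (1 / 2) ^ m * 2 ^ n := by
    rw [one_div, inv_pow, inv_mul_eq_div, le_div_iff₀ (by positivity)]
    exact_mod_cast rankTail_mul_two_pow_le m n
  calc ‖(tailCoeff m * (rankTail m n * x ^ n) : ℂ)‖ ≤ 2 * ((1 / 2) ^ m * 2 ^ n * ‖x‖ ^ n) := by
        rw [norm_mul, norm_mul, norm_pow, Complex.norm_natCast]
        gcongr
        exact norm_tailCoeff_le m
    _ = 2 * (1 / 2) ^ m * (2 * ‖x‖) ^ n := by ring

lemma rankDiff_mul_pow_eq (x : ℂ) (n : ℕ) : (rankDiff n * x ^ n : ℂ) =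
    pbar n * x ^ n + ∑' m : ℕ, (tailCoeff m * (rankTail m n * x ^ n) : ℂ) := by
  rw [tsum_eq_sum (s := range (n + 1)) fun m hm => ?_, rankDiff]
  · push_cast
    rw [add_mul, sum_mul]
    simp only [mul_assoc]
  · rw [mem_range] at hm
    rw [rankTail_eq_zero (by lia) (by lia), Nat.cast_zero, zero_mul, mul_zero]

lemma summable_rankDiff (hx : ‖x‖ < 1 / 2) : Summable fun n : ℕ => (rankDiff n * x ^ n : ℂ) := by
  simp only [rankDiff_mul_pow_eq]
  exact (summable_pbar hx).add (summable_tailCoeff_mul_rankTail hx).prod_symm.prod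

lemma rankDiffSeries_eq (hx : ‖x‖ < 1 / 2) :
    rankDiffSeries x = pbarSeries x * (1 + 2 * ∑' m : ℕ, tailCoeff m * partialTheta m x) := by
  have hdouble := summable_tailCoeff_mul_rankTail hx
  have hinner : Summable fun n : ℕ => ∑' m : ℕ, (tailCoeff m * (rankTail m n * x ^ n) : ℂ) :=
    hdouble.prod_symm.prod
  calc rankDiffSeries x
      = pbarSeries x + ∑' m : ℕ, tailCoeff m * rankTailSeries m x := by
        simp only [rankDiffSeries, rankDiff_mul_pow_eq]
        rw [(summable_pbar hx).tsum_add hinner,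
          hdouble.tsum_comm (f := fun m n => (tailCoeff m * (rankTail m n * x ^ n) : ℂ))]
        simp only [tsum_mul_left, pbarSeries, rankTailSeries]
    _ = pbarSeries x + ∑' m : ℕ, 2 * pbarSeries x * (tailCoeff m * partialTheta m x) := by
        congr 1
        refine tsum_congr fun m => ?_
        rcases Nat.eq_zero_or_pos m with rfl | hm
        · simp [tailCoeff]
        · rw [rankTailSeries_eq_mul_partialTheta hx hm]
          ring
    _ = pbarSeries x * (1 + 2 * ∑' m : ℕ, tailCoeff m * partialTheta m x) := by
        rw [tsum_mul_left]
        ring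

lemma one_sub_pow_ne_zero (hx : ‖x‖ < 1) {n : ℕ} (hn : n ≠ 0) : 1 - x ^ n ≠ 0 := by
  intro h
  have := pow_lt_one₀ (norm_nonneg x) hx hn
  rw [← norm_pow, ← sub_eq_zero.1 h, norm_one] at this
  exact this.false

lemma tsum_tailCoeff_mul_partialTheta (hx : ‖x‖ < 1 / 2) :
    ∑' m : ℕ, tailCoeff m * partialTheta m x = ∑' n : ℕ, (-1) ^ n * x ^ (n + 1) ^ 2 *
      ((-2 * x ^ (n + 1) + (x ^ (n + 1)) ^ 2 - (x ^ (n + 1)) ^ 3 + 2 * (x ^ (n + 1)) ^ 4) /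
        (1 - (x ^ (n + 1)) ^ 5)) := by
  have hdouble : Summable fun i : ℕ × ℕ =>
      (tailCoeff i.1 * ((-1) ^ i.2 * x ^ ((i.2 + 1) ^ 2 + i.1 * (i.2 + 1))) : ℂ) := by
    refine .of_norm_bounded ((summable_geometric_two.mul_of_nonneg summable_geometric_two
      (fun _ => by positivity) fun _ => by positivity).mul_left 2) fun ⟨m, n⟩ => ?_
    rw [norm_mul]
    exact mul_le_mul (norm_tailCoeff_le m) (norm_partialTheta_term_le hx m n) (norm_nonneg _)
      zero_le_two
  simp only [partialTheta, ← tsum_mul_left]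
  rw [← hdouble.tsum_comm
    (f := fun m n => (tailCoeff m * ((-1) ^ n * x ^ ((n + 1) ^ 2 + m * (n + 1))) : ℂ))]
  refine tsum_congr fun n => ?_
  have hpow : ‖x ^ (n + 1)‖ < 1 := by
    rw [norm_pow]
    exact pow_lt_one₀ (norm_nonneg x) (by linarith) n.succ_ne_zero
  rw [← one_sub_mul_tsum_tailCoeff hpow,
    mul_div_cancel_left₀ _ (one_sub_pow_ne_zero hpow (by norm_num)), ← tsum_mul_left]
  exact tsum_congr fun m => by ring

lemma appell_term_add_term_neg (hx0 : x ≠ 0) (hx : ‖x‖ < 1) {b : ℕ} (hb : b ≤ 5) (n : ℕ) :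
    x ^ (n + 1 : ℤ) ^ 2 * (-x ^ b) ^ (n + 1 : ℤ) / (1 - 1 * (x ^ 5) ^ (n + 1 : ℤ)) +
        x ^ (-(n + 1) : ℤ) ^ 2 * (-x ^ b) ^ (-(n + 1) : ℤ) / (1 - 1 * (x ^ 5) ^ (-(n + 1) : ℤ)) =
      (-1) ^ n * x ^ (n + 1) ^ 2 *
        (((x ^ (n + 1)) ^ (5 - b) - (x ^ (n + 1)) ^ b) / (1 - (x ^ (n + 1)) ^ 5)) := by
  have hX : x ^ (n + 1) ≠ 0 := pow_ne_zero _ hx0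
  have hden : 1 - (x ^ (n + 1)) ^ 5 ≠ 0 := by
    rw [← pow_mul]
    exact one_sub_pow_ne_zero hx (by lia)
  have hneg : (-x ^ b) ^ (n + 1) = -((-1) ^ n * (x ^ (n + 1)) ^ b) := by
    rw [neg_pow, ← pow_mul, ← pow_mul, mul_comm b]
    ring
  have hden' : 1 - ((x ^ (n + 1)) ^ 5)⁻¹ = -(1 - (x ^ (n + 1)) ^ 5) * ((x ^ (n + 1)) ^ 5)⁻¹ := by
    field_simp
    ring
  have hsign : ((-1 : ℂ) ^ n)⁻¹ = (-1) ^ n := by rw [← inv_pow, inv_neg_one]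
  rw [neg_sq, zpow_neg, zpow_neg, ← Nat.cast_add_one, ← Nat.cast_pow]
  simp only [zpow_natCast]
  rw [hneg, pow_right_comm x 5, one_mul, one_mul, hden', pow_sub₀ _ hX hb, inv_neg,
    mul_inv, hsign]
  field_simp
  ring

theorem rankDiffSeries_mul_theta (hx0 : x ≠ 0) (hx : ‖x‖ < 1 / 2) :
    rankDiffSeries x * theta x (-1) =
      1 + 4 * appell x (x ^ 5) x 1 - 2 * appell x (x ^ 5) (x ^ 2) 1 := by
  have hx1 : ‖x‖ < 1 := by linarith
  have hp : ‖x ^ 5‖ < 1 := by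
    rw [norm_pow]
    exact pow_lt_one₀ (norm_nonneg x) hx1 (by norm_num)
  have hs (w : ℂ) := summable_appell hx1 (pow_ne_zero 5 hx0) hp norm_one.ge (by simp) w
  have hfold : 4 * appell x (x ^ 5) x 1 - 2 * appell x (x ^ 5) (x ^ 2) 1 =
      2 * ∑' m : ℕ, tailCoeff m * partialTheta m x := by
    rw [appell, appell, tsum_tailCoeff_mul_partialTheta hx, ← tsum_mul_left, ← tsum_mul_left,
      ← tsum_mul_left, ← ((hs x).mul_left 4).tsum_sub ((hs (x ^ 2)).mul_left 2),
      tsum_int_eq_zero_add_tsum_nat_succ (((hs x).mul_left 4).sub ((hs (x ^ 2)).mul_left 2))]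
    simp only [zpow_zero, mul_one, sub_self, div_zero, mul_zero, zero_add]
    refine tsum_congr fun n => ?_
    have h1 := appell_term_add_term_neg hx0 hx1 (b := 1) (by norm_num) n
    have h2 := appell_term_add_term_neg hx0 hx1 (b := 2) (by norm_num) n
    rw [pow_one] at h1
    linear_combination 4 * h1 - 2 * h2
  rw [rankDiffSeries_eq hx]
  linear_combination (1 + 2 * ∑' m : ℕ, tailCoeff m * partialTheta m x) *
    pbarSeries_mul_theta hx - hfold

end GeneratingFunctions

end Overpartition

section LaurentSeries

open Filter Topology Real

lemma circleAverage_zero_norm (f : ℂ → ℂ) (z : ℂ) :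
    circleAverage f 0 ‖z‖ =
      (2 * π)⁻¹ • ∫ θ in (0 : ℝ)..2 * π, f (z * Complex.exp (θ * Complex.I)) := by
  rw [circleAverage_eq_integral_add z.arg]
  congr! 4 with θ
  rw [circleMap_zero, Complex.ofReal_add, add_mul, Complex.exp_add, mul_left_comm,
    Complex.norm_mul_exp_arg_mul_I, mul_comm]

/-- The `n`-th Laurent coefficient of `f` at the origin, computed on the circle of radius `r`. -/
noncomputable def laurentCoeff (f : ℂ → ℂ) (r : ℝ) (n : ℤ) : ℂ :=
  circleAverage (fun z => z ^ (-n) * f z) 0 r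

variable {f : ℂ → ℂ} {a b : ℝ}

lemma laurentCoeff_eq_of_le (ha : 0 ≤ a)
    (hf : ∀ z, a < ‖z‖ → ‖z‖ < b → DifferentiableAt ℂ f z) {r R : ℝ} (har : a < r) (hrR : r ≤ R)
    (hRb : R < b) (n : ℤ) : laurentCoeff f r n = laurentCoeff f R n := by
  have hr : 0 < r := ha.trans_lt har
  have hd (z : ℂ) (h1 : r ≤ ‖z‖) (h2 : ‖z‖ ≤ R) :
      DifferentiableAt ℂ (fun z => (z - 0)⁻¹ • (z ^ (-n) * f z)) z := by
    have hz : z ≠ 0 := norm_pos_iff.1 (hr.trans_le h1)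
    have := hf z (har.trans_le h1) (h2.trans_lt hRb)
    simp only [sub_zero]
    exact (differentiableAt_inv hz).smul ((differentiableAt_zpow.2 (.inl hz)).mul this)
  rw [laurentCoeff, laurentCoeff, circleAverage_eq_circleIntegral hr.ne',
    circleAverage_eq_circleIntegral (hr.trans_le hrR).ne',
    Complex.circleIntegral_eq_of_differentiable_on_annulus_off_countable hr hrR
      Set.countable_empty]
  · intro z hz
    simp only [Set.mem_sdiff, mem_closedBall_zero_iff, mem_ball_zero_iff, not_lt] at hz
    exact (hd z hz.2 hz.1).continuousAt.continuousWithinAt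
  · intro z hz
    simp only [Set.sdiff_empty, Set.mem_sdiff, mem_closedBall_zero_iff, mem_ball_zero_iff,
      not_le] at hz
    exact hd z hz.2.le hz.1.le

lemma laurentCoeff_eq (ha : 0 ≤ a) (hf : ∀ z, a < ‖z‖ → ‖z‖ < b → DifferentiableAt ℂ f z)
    {r R : ℝ} (har : a < r) (hrb : r < b) (haR : a < R) (hRb : R < b) (n : ℤ) :
    laurentCoeff f r n = laurentCoeff f R n := by
  rcases le_total r R with h | h
  · exact laurentCoeff_eq_of_le ha hf har h hRb n
  · exact (laurentCoeff_eq_of_le ha hf haR h hrb n).symm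

lemma fourierCoeff_comp_mul_toCircle [Fact (0 < 2 * π)] (f : ℂ → ℂ) {z : ℂ} (hz : z ≠ 0) (n : ℤ) :
    fourierCoeff (fun t : AddCircle (2 * π) => f (z * t.toCircle)) n =
      laurentCoeff f ‖z‖ n * z ^ n := by
  rw [fourierCoeff_eq_intervalIntegral _ _ 0, laurentCoeff, circleAverage_zero_norm, zero_add,
    one_div, smul_mul_assoc, ← intervalIntegral.integral_mul_const]
  congr 1
  refine intervalIntegral.integral_congr fun θ _ => ?_
  have hexp : Complex.exp (2 * π * Complex.I * ((-n : ℤ) : ℂ) * θ / ((2 * π : ℝ) : ℂ)) =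
      Complex.exp (θ * Complex.I) ^ (-n) := by
    rw [← Complex.exp_int_mul]
    congr 1
    push_cast
    field_simp
  rw [fourier_coe_apply, hexp, AddCircle.toCircle_apply_mk, Circle.coe_exp,
    div_self (by positivity), one_mul, smul_eq_mul, mul_zpow, zpow_neg z]
  field_simp

lemma hasSum_laurentCoeff {z : ℂ} (hz : z ≠ 0) (hf : ContinuousOn f (Metric.sphere 0 ‖z‖))
    (hs : Summable fun n : ℤ => laurentCoeff f ‖z‖ n * z ^ n) :
    HasSum (fun n : ℤ => laurentCoeff f ‖z‖ n * z ^ n) (f z) := by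
  have : Fact (0 < 2 * π) := ⟨two_pi_pos⟩
  have hcont : Continuous fun t : AddCircle (2 * π) => f (z * t.toCircle) :=
    hf.comp_continuous (by fun_prop) fun t => by
      rw [mem_sphere_zero_iff_norm, norm_mul, Circle.norm_coe, mul_one]
  have h := has_pointwise_sum_fourier_series_of_summable
    (f := ⟨fun t : AddCircle (2 * π) => f (z * t.toCircle), hcont⟩)
    (hs.congr fun n => (fourierCoeff_comp_mul_toCircle f hz n).symm) 0
  simpa only [ContinuousMap.coe_mk, fourierCoeff_comp_mul_toCircle f hz, fourier_eval_zero,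
    smul_eq_mul, mul_one, AddCircle.toCircle_zero, Circle.coe_one] using h

variable {p y : ℂ}

lemma laurentCoeff_add_two (hp0 : p ≠ 0) (hy : y ≠ 0) {z : ℂ} (hz : z ≠ 0)
    (hfp : ∀ w : ℂ, ‖w‖ = ‖z‖ → f (p * w) = -f w / (p * y * w ^ 2)) (n : ℤ) :
    laurentCoeff f ‖z‖ (n + 2) = -(p ^ (n + 1) * y) * laurentCoeff f ‖p * z‖ n := by
  rw [laurentCoeff, laurentCoeff, circleAverage_zero_norm, circleAverage_zero_norm,
    mul_smul_comm, ← intervalIntegral.integral_const_mul]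
  congr 1
  refine intervalIntegral.integral_congr fun θ _ => ?_
  have hw0 : z * Complex.exp (θ * Complex.I) ≠ 0 := mul_ne_zero hz (Complex.exp_ne_zero _)
  have hw := hfp (z * Complex.exp (θ * Complex.I))
    (by rw [norm_mul, Complex.norm_exp_ofReal_mul_I, mul_one])
  rw [mul_assoc p]
  generalize z * Complex.exp (θ * Complex.I) = w at *
  rw [hw, mul_zpow, zpow_neg, zpow_neg, zpow_neg, zpow_add₀ hw0, zpow_add₀ hp0, zpow_one]
  field_simp

lemma hasSum_int_even_add_odd {g : ℤ → ℂ} {A B : ℂ} (hA : HasSum (fun m => g (2 * m)) A)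
    (hB : HasSum (fun m => g (2 * m + 1)) B) : HasSum g (A + B) := by
  have hinj := mul_right_injective₀ (two_ne_zero' ℤ)
  refine (hinj.hasSum_range_iff.2 hA).add_isCompl ?_
    (((add_left_injective 1).comp hinj).hasSum_range_iff.2 hB)
  simpa [Function.comp_def] using Int.isCompl_even_odd

lemma eq_zpow_sq_mul_of_succ {u : ℤ → ℂ} {w : ℂ} (hp0 : p ≠ 0) (hw : w ≠ 0)
    (hu : ∀ m, u (m + 1) = p ^ (2 * m + 1) * w * u m) (m : ℤ) :
    u m = u 0 * (p ^ m ^ 2 * w ^ m) := by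
  have hstep (m : ℤ) :
      p ^ (m + 1) ^ 2 * w ^ (m + 1) = p ^ (2 * m + 1) * w * (p ^ m ^ 2 * w ^ m) := by
    rw [show (m + 1) ^ 2 = 2 * m + 1 + m ^ 2 by ring, zpow_add₀ hp0, zpow_add_one₀ hw]
    ring
  induction m with
  | zero => simp
  | succ m ih => rw [hu, ih, hstep]; ring
  | pred m ih =>
    have h1 := hu (-m - 1)
    have h2 := hstep (-m - 1)
    rw [sub_add_cancel] at h1 h2
    rw [ih, h2] at h1
    have hne : p ^ (2 * (-m - 1 : ℤ) + 1) * w ≠ 0 := mul_ne_zero (zpow_ne_zero _ hp0) hw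
    exact (mul_left_cancel₀ hne (by linear_combination h1)).symm

lemma hasSum_mul_zpow_of_add_two (hp0 : p ≠ 0) (hp : ‖p‖ < 1) (hy : y ≠ 0) {c : ℤ → ℂ}
    (hc : ∀ n, c (n + 2) = -(p ^ (n + 1) * y) * c n) {z : ℂ} (hz0 : z ≠ 0) :
    HasSum (fun n : ℤ => c n * z ^ n)
      (c 0 * theta p (-(z ^ 2 * y)) + c 1 * (z * theta p (-(p * z ^ 2 * y)))) := by
  have heven (m : ℤ) := eq_zpow_sq_mul_of_succ (u := fun m => c (2 * m)) hp0 (neg_ne_zero.2 hy)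
    (fun m => by rw [mul_add, mul_one, hc]; ring) m
  have hodd (m : ℤ) := eq_zpow_sq_mul_of_succ (u := fun m => c (2 * m + 1)) hp0
    (neg_ne_zero.2 (mul_ne_zero hp0 hy))
    (fun m => by
      rw [mul_add, mul_one, add_right_comm, hc, zpow_add_one₀ hp0]
      ring) m
  refine hasSum_int_even_add_odd ?_ ?_
  · refine ((summable_theta hp _).hasSum.mul_left (c 0)).congr_fun fun m => ?_
    rw [heven, mul_zero, neg_mul_eq_mul_neg, mul_zpow, zpow_mul]
    norm_cast
    ring
  · rw [← mul_assoc]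
    refine ((summable_theta hp _).hasSum.mul_left (c 1 * z)).congr_fun fun m => ?_
    rw [hodd, mul_zero, zero_add, zpow_add_one₀ hz0,
      show -(p * z ^ 2 * y) = z ^ 2 * -(p * y) by ring, mul_zpow, zpow_mul]
    norm_cast
    ring

-- The functional equation is a two-step recurrence for the Laurent coefficients, which leaves one
-- free constant for each parity of the index.
theorem exists_eq_mul_theta_add_mul_theta (hp0 : p ≠ 0) (hp : ‖p‖ < 1) (hy : y ≠ 0) (ha : 0 ≤ a)
    (hab : a < ‖p‖ * b) (hf : ∀ z, a < ‖z‖ → ‖z‖ < b → DifferentiableAt ℂ f z)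
    (hfp : ∀ z, a < ‖p * z‖ → ‖z‖ < b → f (p * z) = -f z / (p * y * z ^ 2)) :
    ∃ c₀ c₁ : ℂ, ∀ z, a < ‖z‖ → ‖z‖ < b →
      f z = c₀ * theta p (-(z ^ 2 * y)) + c₁ * (z * theta p (-(p * z ^ 2 * y))) := by
  have hp0' : 0 < ‖p‖ := norm_pos_iff.2 hp0
  obtain ⟨R, haR, hRb⟩ := exists_between ((div_lt_iff₀' hp0').2 hab)
  have hR0 : 0 < R := (by positivity : 0 ≤ a / ‖p‖).trans_lt haR
  have hRnorm : ‖(R : ℂ)‖ = R := by rw [Complex.norm_real, norm_of_nonneg hR0.le]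
  rw [div_lt_iff₀' hp0'] at haR
  have hpR : ‖p‖ * R < R := mul_lt_of_lt_one_left hR0 hp
  set c := laurentCoeff f R
  have hrec (n : ℤ) : c (n + 2) = -(p ^ (n + 1) * y) * c n := by
    have h := laurentCoeff_add_two (f := f) hp0 hy (z := R) (by exact_mod_cast hR0.ne')
      (fun w hw => hfp w (by rwa [norm_mul, hw, hRnorm]) (by rwa [hw, hRnorm])) n
    rwa [norm_mul, hRnorm, laurentCoeff_eq ha hf haR (hpR.trans hRb) (haR.trans hpR) hRb] at h
  refine ⟨c 0, c 1, fun z haz hzb => ?_⟩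
  have hz0 : z ≠ 0 := norm_pos_iff.1 (ha.trans_lt haz)
  have hsum := hasSum_mul_zpow_of_add_two hp0 hp hy hrec hz0
  have hcz (n : ℤ) : laurentCoeff f ‖z‖ n = c n :=
    laurentCoeff_eq ha hf haz hzb (haR.trans hpR) hRb n
  have hcont : ContinuousOn f (Metric.sphere 0 ‖z‖) := fun w hw => by
    rw [mem_sphere_zero_iff_norm] at hw
    exact (hf w (hw ▸ haz) (hw ▸ hzb)).continuousAt.continuousWithinAt
  have hlaurent := hasSum_laurentCoeff hz0 hcont
  simp only [hcz] at hlaurent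
  exact (hlaurent hsum.summable).unique hsum

end LaurentSeries

section OddTheta

open Filter Topology Finset

/-- The odd theta function `∑ (-1) ^ m s ^ (m ^ 2 - m) z ^ m` in multiplicative notation, which
vanishes at `z = 1`. -/
noncomputable def oddTheta (s z : ℂ) : ℂ := theta s (-(z / s))

variable {s z : ℂ}

lemma oddTheta_sq_mul (hs0 : s ≠ 0) (hz : z ≠ 0) :
    oddTheta s (s ^ 2 * z) = -z⁻¹ * oddTheta s z := by
  rw [oddTheta, oddTheta, show -(s ^ 2 * z / s) = s ^ 2 * -(z / s) by field,
    theta_sq_mul hs0 (neg_ne_zero.2 (div_ne_zero hz hs0)), mul_neg, mul_div_cancel₀ z hs0, inv_neg]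

lemma oddTheta_inv (hs0 : s ≠ 0) (hz : z ≠ 0) : oddTheta s z⁻¹ = -z⁻¹ * oddTheta s z := by
  rw [← oddTheta_sq_mul hs0 hz, oddTheta, oddTheta, ← theta_inv]
  congr 1
  field

lemma oddTheta_sq_div (hs0 : s ≠ 0) (hz : z ≠ 0) : oddTheta s (s ^ 2 / z) = oddTheta s z := by
  rw [div_eq_mul_inv, oddTheta_sq_mul hs0 (inv_ne_zero hz), oddTheta_inv hs0 hz]
  field

lemma oddTheta_one (hs0 : s ≠ 0) : oddTheta s 1 = 0 := by
  have h := oddTheta_inv hs0 one_ne_zero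
  rw [inv_one] at h
  linear_combination h / 2

/-- The companion of `theta (s ^ 2) (-X ^ 2)` in the product formula for `oddTheta`: up to a power
of `s`, it is `X` times the same theta series over the half-integers. -/
noncomputable def halfTheta (s X : ℂ) : ℂ := -X ^ 2 * theta (s ^ 2) (-(s ^ 2 * X ^ 2))

lemma halfTheta_neg (s X : ℂ) : halfTheta s (-X) = halfTheta s X := by
  rw [halfTheta, neg_sq, halfTheta]

lemma halfTheta_one (hs0 : s ≠ 0) : halfTheta s 1 = 0 := by
  rw [halfTheta, one_pow, mul_one, theta_neg_self (pow_ne_zero 2 hs0), mul_zero]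

theorem oddTheta_neg_mul_mul_oddTheta_div (hs0 : s ≠ 0) (hs : ‖s‖ < 1) {X Y : ℂ} (hX : X ≠ 0)
    (hY : Y ≠ 0) :
    oddTheta s (-(X * Y)) * oddTheta s (X / Y) =
      halfTheta s X * theta (s ^ 2) (-Y ^ 2) - X / Y * theta (s ^ 2) (-X ^ 2) * halfTheta s Y := by
  have hI := Complex.I_ne_zero
  have h := theta_mul_mul_theta_div hs0 hs (u := -(Complex.I * X / s)) (v := Complex.I * Y)
    (neg_ne_zero.2 (div_ne_zero (mul_ne_zero hI hX) hs0)) (mul_ne_zero hI hY)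
  have hprod : -(Complex.I * X / s) * (Complex.I * Y) = X * Y / s := by
    linear_combination -(X * Y / s) * Complex.I_sq
  have hshift := theta_sq_mul (q := s ^ 2) (w := -(X ^ 2 / s ^ 2)) (pow_ne_zero 2 hs0)
    (neg_ne_zero.2 (div_ne_zero (pow_ne_zero 2 hX) (pow_ne_zero 2 hs0)))
  rw [show (s ^ 2) ^ 2 * -(X ^ 2 / s ^ 2) = -(s ^ 2 * X ^ 2) by field] at hshift
  rw [mul_assoc s, hprod, show -(Complex.I * X / s) / (Complex.I * Y) = -(X / Y / s) by field,
    neg_sq, div_pow, mul_pow, mul_pow, Complex.I_sq, neg_one_mul, neg_one_mul, neg_div,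
    mul_neg, mul_div_cancel₀ _ (pow_ne_zero 2 hs0), mul_neg, mul_div_cancel₀ _ hs0] at h
  rw [oddTheta, oddTheta, neg_div, neg_neg, h, halfTheta, halfTheta, hshift]
  field

lemma oddTheta_neg_mul_self (hs0 : s ≠ 0) (hs : ‖s‖ < 1) {X : ℂ} (hX : X ≠ 0) :
    oddTheta s (-X) * oddTheta s X = halfTheta s X * theta (s ^ 2) (-1) := by
  simpa [halfTheta_one hs0] using oddTheta_neg_mul_mul_oddTheta_div hs0 hs hX one_ne_zero

lemma oddTheta_sq_mul_oddTheta_neg_one (hs0 : s ≠ 0) (hs : ‖s‖ < 1) {X : ℂ} (hX : X ≠ 0) :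
    oddTheta s (X ^ 2) * oddTheta s (-1) = 2 * halfTheta s X * theta (s ^ 2) (-X ^ 2) := by
  have h := oddTheta_neg_mul_mul_oddTheta_div hs0 hs hX (neg_ne_zero.2 hX)
  rw [halfTheta_neg, neg_sq, div_neg, div_self hX, show -(X * -X) = X ^ 2 by ring] at h
  linear_combination h

/-- The symmetric sum `∑ z ^ k` over `-n ≤ k ≤ n`. -/
noncomputable def symmPowSum (z : ℂ) (n : ℕ) : ℂ := 1 + ∑ k ∈ range n, (z ^ (k + 1) + z⁻¹ ^ (k + 1))

lemma symmPowSum_inv (z : ℂ) (n : ℕ) : symmPowSum z⁻¹ n = symmPowSum z n := by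
  simp only [symmPowSum, inv_inv, add_comm (z ^ _)]

lemma symmPowSum_succ (z : ℂ) (n : ℕ) :
    symmPowSum z (n + 1) = symmPowSum z n + (z ^ (n + 1) + z⁻¹ ^ (n + 1)) := by
  rw [symmPowSum, sum_range_succ, ← add_assoc, symmPowSum]

lemma one_sub_mul_symmPowSum (hz : z ≠ 0) (n : ℕ) :
    (1 - z) * symmPowSum z n = z⁻¹ ^ n - z ^ (n + 1) := by
  induction n with
  | zero => simp [symmPowSum]
  | succ n ih =>
    rw [symmPowSum_succ, mul_add, ih]
    linear_combination -z⁻¹ ^ n * mul_inv_cancel₀ hz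

lemma norm_symmPowSum_le {ρ : ℝ} (hρ : 1 ≤ ρ) (hz : ‖z‖ ≤ ρ) (hz' : ‖z⁻¹‖ ≤ ρ) (n : ℕ) :
    ‖symmPowSum z n‖ ≤ (3 * ρ) ^ n := by
  induction n with
  | zero => simp [symmPowSum]
  | succ n ih =>
    have hpow (w : ℂ) (hw : ‖w‖ ≤ ρ) : ‖w ^ (n + 1)‖ ≤ (3 * ρ) ^ n * ρ :=
      calc ‖w ^ (n + 1)‖ ≤ ρ ^ n * ρ := by rw [norm_pow, ← pow_succ]; gcongr
        _ ≤ (3 * ρ) ^ n * ρ := by gcongr; linarith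
    calc ‖symmPowSum z (n + 1)‖ ≤ (3 * ρ) ^ n * ρ + ((3 * ρ) ^ n * ρ + (3 * ρ) ^ n * ρ) := by
          rw [symmPowSum_succ]
          refine norm_add_le_of_le (ih.trans (le_mul_of_one_le_right (by positivity) hρ))
            (norm_add_le_of_le (hpow z hz) (hpow z⁻¹ hz'))
      _ = (3 * ρ) ^ (n + 1) := by ring

lemma differentiableAt_symmPowSum (hz : z ≠ 0) (n : ℕ) :
    DifferentiableAt ℂ (fun z => symmPowSum z n) z := by
  unfold symmPowSum
  fun_prop (disch := assumption)

/-- The quotient of `oddTheta s z` by `1 - z`, as an explicit series. -/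
noncomputable def reducedTheta (s z : ℂ) : ℂ :=
  ∑' n : ℕ, (-1) ^ n * s ^ (n ^ 2 + n) * symmPowSum z n

lemma reducedTheta_inv (s z : ℂ) : reducedTheta s z⁻¹ = reducedTheta s z := by
  simp only [reducedTheta, symmPowSum_inv]

lemma norm_reducedTheta_term_le {ρ : ℝ} (hρ : 1 ≤ ρ) (hz : ‖z‖ ≤ ρ) (hz' : ‖z⁻¹‖ ≤ ρ) (n : ℕ) :
    ‖(-1) ^ n * s ^ (n ^ 2 + n) * symmPowSum z n‖ ≤ ‖s‖ ^ n ^ 2 * (3 * ρ * ‖s‖) ^ n := by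
  rw [norm_mul, norm_mul, norm_pow, norm_neg, norm_one, one_pow, one_mul, norm_pow, pow_add,
    mul_assoc, mul_pow _ ‖s‖, mul_comm (_ ^ n)]
  gcongr
  exact norm_symmPowSum_le hρ hz hz' n

lemma summable_norm_sq_mul (hs : ‖s‖ < 1) (c : ℝ) : Summable fun n : ℕ => ‖s‖ ^ n ^ 2 * c ^ n :=
  summable_pow_sq_mul_pow (by rwa [norm_norm]) c

lemma tsum_int_eq_tsum_nat_add_neg_succ {f : ℤ → ℂ} (hf : Summable f) :
    ∑' n, f n = ∑' n : ℕ, (f n + f (-(n + 1))) := by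
  have h1 : Summable fun n : ℕ => f n := hf.comp_injective Nat.cast_injective
  have h2 : Summable fun n : ℕ => f (-(n + 1)) :=
    hf.comp_injective (i := fun n : ℕ => (-(n + 1) : ℤ)) fun _ _ h => by simpa using h
  rw [tsum_of_nat_of_neg_add_one h1 h2, h1.tsum_add h2]

lemma oddTheta_eq_one_sub_mul_reducedTheta (hs0 : s ≠ 0) (hs : ‖s‖ < 1) (hz : z ≠ 0) :
    oddTheta s z = (1 - z) * reducedTheta s z := by
  rw [oddTheta, ← theta_inv, theta, tsum_int_eq_tsum_nat_add_neg_succ (summable_theta hs _),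
    reducedTheta, ← tsum_mul_left]
  refine tsum_congr fun n => ?_
  have hsign : ((-1 : ℂ) ^ n)⁻¹ = (-1) ^ n := by rw [← inv_pow, inv_neg_one]
  rw [mul_left_comm, one_sub_mul_symmPowSum hz, neg_sq, inv_zpow', inv_zpow', neg_neg, zpow_neg,
    ← Nat.cast_add_one, ← Nat.cast_pow, ← Nat.cast_pow]
  simp only [zpow_natCast]
  rw [neg_pow, neg_pow (z / s), mul_inv, hsign, div_pow, div_pow, inv_pow]
  field_simp
  ring

lemma isOpen_annulus (a b : ℝ) : IsOpen {z : ℂ | a < ‖z‖ ∧ ‖z‖ < b} :=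
  (isOpen_lt continuous_const continuous_norm).inter (isOpen_lt continuous_norm continuous_const)

lemma differentiableAt_reducedTheta (hs : ‖s‖ < 1) (hz : z ≠ 0) :
    DifferentiableAt ℂ (reducedTheta s) z := by
  have hz0 : 0 < ‖z‖ := norm_pos_iff.2 hz
  set ρ : ℝ := 1 + ‖z‖ + ‖z‖⁻¹
  have hρ1 : 1 ≤ ρ := by linarith [inv_pos.2 hz0]
  have hopen := isOpen_annulus ρ⁻¹ ρ
  refine (Complex.differentiableOn_tsum_of_summable_norm (summable_norm_sq_mul hs (3 * ρ * ‖s‖))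
    (fun n w hw => ?_) hopen fun n w hw => ?_).differentiableAt (hopen.mem_nhds ⟨?_, ?_⟩)
  · have hw0 : w ≠ 0 := norm_pos_iff.1 ((inv_pos.2 (by positivity)).trans hw.1)
    exact ((differentiableAt_symmPowSum hw0 n).const_mul _).differentiableWithinAt
  · refine norm_reducedTheta_term_le hρ1 hw.2.le ?_ n
    rw [norm_inv]
    exact inv_le_of_inv_le₀ (by positivity) hw.1.le
  · exact inv_lt_of_inv_lt₀ hz0 (by linarith)
  · linarith [inv_pos.2 hz0]

lemma differentiableAt_oddTheta (hs0 : s ≠ 0) (hs : ‖s‖ < 1) (hz : z ≠ 0) :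
    DifferentiableAt ℂ (oddTheta s) z := by
  have h : DifferentiableAt ℂ (fun z => (1 - z) * reducedTheta s z) z :=
    (differentiableAt_id.const_sub 1).mul (differentiableAt_reducedTheta hs hz)
  refine h.congr_of_eventuallyEq ?_
  filter_upwards [eventually_ne_nhds hz] with w hw
  exact oddTheta_eq_one_sub_mul_reducedTheta hs0 hs hw

lemma reducedTheta_ne_zero {r : ℝ} (hr : 6 * ‖s‖ ^ 2 < r) (hrz : r ≤ ‖z‖) (hzr : ‖z‖ ≤ r⁻¹) :
    reducedTheta s z ≠ 0 := by
  have hr0 : 0 < r := (by positivity : 0 ≤ 6 * ‖s‖ ^ 2).trans_lt hr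
  have hrinv : 1 ≤ r⁻¹ := by
    by_contra! h
    exact ((hrz.trans hzr).trans_lt h).not_gt ((inv_lt_one₀ hr0).1 h)
  have hs : ‖s‖ < 1 := by
    have := mul_inv_cancel₀ hr0.ne'
    nlinarith
  have hz' : ‖z⁻¹‖ ≤ r⁻¹ := by rw [norm_inv]; exact inv_anti₀ hr0 hrz
  set κ : ℝ := 3 * r⁻¹ * ‖s‖ ^ 2 with hκdef
  have hκ : 2 * κ < 1 := by
    rw [hκdef, ← mul_lt_mul_iff_of_pos_left hr0]
    field_simp
    linarith
  have hterm (n : ℕ) : ‖(-1) ^ (n + 1) * s ^ ((n + 1) ^ 2 + (n + 1)) * symmPowSum z (n + 1)‖ ≤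
      κ * (1 / 2) ^ n :=
    calc _ ≤ ‖s‖ ^ (n + 1) ^ 2 * (3 * r⁻¹ * ‖s‖) ^ (n + 1) :=
          norm_reducedTheta_term_le hrinv hzr hz' (n + 1)
      _ ≤ ‖s‖ ^ (n + 1) * (3 * r⁻¹ * ‖s‖) ^ (n + 1) := by
          gcongr ?_ * _
          exact pow_le_pow_of_le_one (norm_nonneg s) hs.le (Nat.le_self_pow two_ne_zero _)
      _ = κ * κ ^ n := by rw [← mul_pow, ← pow_succ', hκdef]; ring
      _ ≤ κ * (1 / 2) ^ n := by gcongr; linarith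
  have hsum : Summable fun n : ℕ => (-1) ^ n * s ^ (n ^ 2 + n) * symmPowSum z n :=
    .of_norm_bounded (summable_norm_sq_mul hs _) (norm_reducedTheta_term_le hrinv hzr hz')
  have htail := tsum_of_norm_bounded (hasSum_geometric_two.mul_left κ) hterm
  intro h
  rw [reducedTheta, hsum.tsum_eq_zero_add] at h
  simp only [symmPowSum, range_zero, sum_empty, pow_zero] at h htail
  rw [eq_neg_of_add_eq_zero_right h] at htail
  norm_num at htail
  linarith

lemma oddTheta_ne_zero {r : ℝ} (hs0 : s ≠ 0) (hs : ‖s‖ < 1) (hr : 6 * ‖s‖ ^ 2 < r)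
    (hrz : r ≤ ‖z‖) (hzr : ‖z‖ ≤ r⁻¹) (hz1 : z ≠ 1) : oddTheta s z ≠ 0 := by
  have hr0 : 0 < r := (by positivity : 0 ≤ 6 * ‖s‖ ^ 2).trans_lt hr
  rw [oddTheta_eq_one_sub_mul_reducedTheta hs0 hs (norm_pos_iff.1 (hr0.trans_le hrz))]
  exact mul_ne_zero (sub_ne_zero.2 hz1.symm) (reducedTheta_ne_zero hr hrz hzr)

lemma two_mul_deriv_one_of_inv {f : ℂ → ℂ} (k : ℕ) (hf : DifferentiableAt ℂ f 1)
    (hinv : ∀ z ≠ 0, f z⁻¹ * z ^ k = f z) : 2 * deriv f 1 = k * f 1 := by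
  have hcomp : HasDerivAt (fun z => f z⁻¹) (deriv f 1 * -((1 : ℂ) ^ 2)⁻¹) 1 :=
    HasDerivAt.comp 1 (by rw [inv_one]; exact hf.hasDerivAt) (hasDerivAt_inv one_ne_zero)
  have hprod := (hcomp.mul (hasDerivAt_pow k 1)).congr_of_eventuallyEq (f₁ := f) <| by
    filter_upwards [eventually_ne_nhds one_ne_zero] with w hw
    exact (hinv w hw).symm
  have h := hf.hasDerivAt.unique hprod
  simp only [inv_one, one_pow] at h
  linear_combination h

lemma deriv_reducedTheta_one (hs : ‖s‖ < 1) : deriv (reducedTheta s) 1 = 0 := by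
  have h := two_mul_deriv_one_of_inv 0 (differentiableAt_reducedTheta hs one_ne_zero)
    fun z _ => by rw [pow_zero, mul_one, reducedTheta_inv]
  simpa using h

end OddTheta

section ThetaRatio

open Filter Topology Finset

lemma sum_Ico_neg_two_add_five {M : Type*} [AddCommMonoid M] (f : ℤ → M) :
    ∑ j ∈ Ico (-2 : ℤ) (-2 + (5 : ℕ)), f j = f (-2) + f (-1) + f 0 + f 1 + f 2 := by
  rw [show Ico (-2 : ℤ) (-2 + (5 : ℕ)) = {-2, -1, 0, 1, 2} by rfl]
  simp [add_assoc]

lemma theta_neg_one_eq_of_pow_five {x Q : ℂ} (hx0 : x ≠ 0) (hx : ‖x‖ < 1) (hQ : x ^ 5 = Q) :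
    theta x (-1) = theta (Q ^ 5) (-1) - 2 * x * theta (Q ^ 5) (-Q ^ 2) +
      2 * x ^ 4 * theta (Q ^ 5) (-Q ^ 4) := by
  have h := theta_eq_sum_theta_pow hx0 hx (neg_ne_zero.2 one_ne_zero) (-2) (k := 5) (by norm_num)
  have hpow (j : ℤ) : (-1) ^ 5 * x ^ (2 * (5 : ℕ) * j) = -(Q ^ 2) ^ j := by
    rw [← hQ, ← pow_mul, ← zpow_natCast x, ← zpow_mul]
    norm_num
  have hinv (w : ℂ) (k : ℤ) : theta (Q ^ 5) (-w ^ (-k)) = theta (Q ^ 5) (-w ^ k) := by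
    rw [zpow_neg, ← inv_neg, theta_inv]
  simp only [hpow, sum_Ico_neg_two_add_five] at h
  rw [h, show x ^ 5 ^ 2 = Q ^ 5 by rw [← hQ, ← pow_mul]; norm_num,
    show Q ^ 4 = (Q ^ 2) ^ 2 by ring, hinv, hinv]
  simp only [zpow_ofNat]
  norm_num
  ring

/-- `s` is a square root of `Q ^ 5` for a nonzero `Q` of small norm: then `oddTheta s` has
multiplicative period `Q ^ 5`, and its values at powers of `Q` are those of level five. -/
structure IsNomeRoot (s Q : ℂ) : Prop where
  ne_zero : Q ≠ 0
  norm_lt : ‖Q‖ < 1 / 32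
  sq_eq : s ^ 2 = Q ^ 5

variable {s Q u v z : ℂ}

namespace IsNomeRoot

lemma s_ne_zero (h : IsNomeRoot s Q) : s ≠ 0 :=
  pow_ne_zero_iff two_ne_zero |>.1 (h.sq_eq ▸ pow_ne_zero 5 h.ne_zero)

lemma norm_pow_lt_one (h : IsNomeRoot s Q) {n : ℕ} (hn : n ≠ 0) : ‖Q ^ n‖ < 1 := by
  rw [norm_pow]
  exact pow_lt_one₀ (norm_nonneg Q) (by linarith [h.norm_lt]) hn

lemma root_ne_zero (h : IsNomeRoot s Q) {x : ℂ} (hx : x ^ 5 = Q) : x ≠ 0 := by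
  rintro rfl
  exact h.ne_zero (by rw [← hx, zero_pow (by norm_num)])

lemma norm_root_lt (h : IsNomeRoot s Q) {x : ℂ} (hx : x ^ 5 = Q) : ‖x‖ < 1 / 2 := by
  refine lt_of_pow_lt_pow_left₀ 5 (by norm_num) ?_
  rw [← norm_pow, hx]
  exact h.norm_lt.trans_eq (by norm_num)

lemma norm_s_lt (h : IsNomeRoot s Q) : ‖s‖ < ‖Q‖ ^ 2 := by
  refine lt_of_pow_lt_pow_left₀ 2 (by positivity) ?_
  rw [← norm_pow, h.sq_eq, norm_pow, ← pow_mul]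
  exact pow_lt_pow_right_of_lt_one₀ (norm_pos_iff.2 h.ne_zero) (by linarith [h.norm_lt])
    (by norm_num)

lemma norm_s_lt_div (h : IsNomeRoot s Q) : ‖s‖ < 1 / 6 :=
  calc ‖s‖ < ‖Q‖ ^ 2 := h.norm_s_lt
    _ ≤ (1 / 32) ^ 2 := by gcongr; exact h.norm_lt.le
    _ < 1 / 6 := by norm_num

lemma norm_s_lt_one (h : IsNomeRoot s Q) : ‖s‖ < 1 := by linarith [h.norm_s_lt_div]

lemma six_mul_norm_s_sq_lt (h : IsNomeRoot s Q) : 6 * ‖s‖ ^ 2 < ‖s‖ := by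
  nlinarith [norm_pos_iff.2 h.s_ne_zero, h.norm_s_lt_div]

lemma oddTheta_ne_zero (h : IsNomeRoot s Q) (hz1 : z ≠ 1) (hQz : ‖Q‖ ^ 2 ≤ ‖z‖) (hz : ‖z‖ ≤ 1) :
    oddTheta s z ≠ 0 := by
  have hs0 := norm_pos_iff.2 h.s_ne_zero
  exact _root_.oddTheta_ne_zero h.s_ne_zero h.norm_s_lt_one h.six_mul_norm_s_sq_lt
    (h.norm_s_lt.le.trans hQz) (hz.trans ((one_le_inv₀ hs0).2 h.norm_s_lt_one.le)) hz1

lemma theta_neg_one_ne_zero (h : IsNomeRoot s Q) : theta (Q ^ 5) (-1) ≠ 0 := by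
  refine Overpartition.theta_neg_one_ne_zero ?_
  rw [norm_pow]
  calc ‖Q‖ ^ 5 ≤ (1 / 32) ^ 5 := by gcongr; exact h.norm_lt.le
    _ < 1 / 2 := by norm_num

lemma oddTheta_sq_ne_zero (h : IsNomeRoot s Q) : oddTheta s (Q ^ 2) ≠ 0 :=
  h.oddTheta_ne_zero (fun h1 => by simpa [h1] using h.norm_pow_lt_one two_ne_zero)
    (norm_pow Q 2).ge (h.norm_pow_lt_one two_ne_zero).le

lemma oddTheta_neg_sq_ne_zero (h : IsNomeRoot s Q) : oddTheta s (-Q ^ 2) ≠ 0 :=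
  h.oddTheta_ne_zero
    (fun h1 => by simpa [neg_eq_iff_eq_neg.1 h1] using h.norm_pow_lt_one two_ne_zero)
    (by rw [norm_neg, norm_pow]) (by rw [norm_neg]; exact (h.norm_pow_lt_one two_ne_zero).le)

lemma oddTheta_pow_four (h : IsNomeRoot s Q) : oddTheta s (Q ^ 4) = oddTheta s Q := by
  rw [← oddTheta_sq_div h.s_ne_zero h.ne_zero, h.sq_eq]
  congr 1
  field [h.ne_zero]

lemma oddTheta_pow_three (h : IsNomeRoot s Q) : oddTheta s (Q ^ 3) = oddTheta s (Q ^ 2) := by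
  rw [← oddTheta_sq_div h.s_ne_zero (pow_ne_zero 2 h.ne_zero), h.sq_eq]
  congr 1
  field [h.ne_zero]

lemma oddTheta_neg_pow_three (h : IsNomeRoot s Q) :
    oddTheta s (-Q ^ 3) = oddTheta s (-Q ^ 2) := by
  rw [← oddTheta_sq_div h.s_ne_zero (neg_ne_zero.2 (pow_ne_zero 2 h.ne_zero)), h.sq_eq]
  congr 1
  field [h.ne_zero]

end IsNomeRoot

/-- `u` and `v` are the quotients of the values of `oddTheta s` at `Q` and `Q ^ 2`, and at `-Q` and
`-Q ^ 2`, in terms of which all the theta values of level five can be expressed. -/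
structure IsThetaRatio (s Q u v : ℂ) : Prop extends IsNomeRoot s Q where
  oddTheta_eq : oddTheta s Q = u * oddTheta s (Q ^ 2)
  oddTheta_neg_eq : oddTheta s (-Q) = v * oddTheta s (-Q ^ 2)

lemma exists_isThetaRatio (hQ : Q ≠ 0) (hQ' : ‖Q‖ < 1 / 32) : ∃ s u v, IsThetaRatio s Q u v := by
  obtain ⟨s, hs⟩ := IsAlgClosed.exists_pow_nat_eq (Q ^ 5) two_pos
  have h : IsNomeRoot s Q := ⟨hQ, hQ', hs⟩
  exact ⟨s, _, _, h, (div_mul_cancel₀ _ h.oddTheta_sq_ne_zero).symm,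
    (div_mul_cancel₀ _ h.oddTheta_neg_sq_ne_zero).symm⟩

namespace IsThetaRatio

lemma halfTheta_mul_theta_add (h : IsThetaRatio s Q u v) :
    halfTheta s (Q ^ 2) * theta (Q ^ 5) (-Q ^ 2) + Q * theta (Q ^ 5) (-Q ^ 4) * halfTheta s Q =
      v * (oddTheta s (-Q ^ 2) * oddTheta s (Q ^ 2)) := by
  have hadd := oddTheta_neg_mul_mul_oddTheta_div h.s_ne_zero h.norm_s_lt_one
    (pow_ne_zero 2 h.ne_zero) (neg_ne_zero.2 h.ne_zero)
  rw [show -(Q ^ 2 * -Q) = Q ^ 3 by ring, show Q ^ 2 / -Q = -Q by field [h.ne_zero], neg_sq,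
    halfTheta_neg, h.oddTheta_pow_three, h.oddTheta_neg_eq, h.sq_eq, ← pow_mul] at hadd
  linear_combination -hadd

lemma halfTheta_mul_theta_sub (h : IsThetaRatio s Q u v) :
    halfTheta s (Q ^ 2) * theta (Q ^ 5) (-Q ^ 2) - Q * theta (Q ^ 5) (-Q ^ 4) * halfTheta s Q =
      u * (oddTheta s (-Q ^ 2) * oddTheta s (Q ^ 2)) := by
  have hsub := oddTheta_neg_mul_mul_oddTheta_div h.s_ne_zero h.norm_s_lt_one
    (pow_ne_zero 2 h.ne_zero) h.ne_zero
  rw [show -(Q ^ 2 * Q) = -Q ^ 3 by ring, show Q ^ 2 / Q = Q by field [h.ne_zero],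
    h.oddTheta_neg_pow_three, h.oddTheta_eq, h.sq_eq, ← pow_mul] at hsub
  linear_combination -hsub

lemma halfTheta_eq (h : IsThetaRatio s Q u v) : halfTheta s Q = u * v * halfTheta s (Q ^ 2) := by
  have hQ := oddTheta_neg_mul_self h.s_ne_zero h.norm_s_lt_one h.ne_zero
  have hQ2 := oddTheta_neg_mul_self h.s_ne_zero h.norm_s_lt_one (pow_ne_zero 2 h.ne_zero)
  rw [h.oddTheta_eq, h.oddTheta_neg_eq, h.sq_eq] at hQ
  rw [h.sq_eq] at hQ2
  refine mul_right_cancel₀ h.theta_neg_one_ne_zero ?_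
  linear_combination u * v * hQ2 - hQ

lemma halfTheta_sq_ne_zero (h : IsThetaRatio s Q u v) : halfTheta s (Q ^ 2) ≠ 0 := by
  have hQ2 := oddTheta_neg_mul_self h.s_ne_zero h.norm_s_lt_one (pow_ne_zero 2 h.ne_zero)
  exact left_ne_zero_of_mul (hQ2 ▸ mul_ne_zero h.oddTheta_neg_sq_ne_zero h.oddTheta_sq_ne_zero)

lemma two_mul_theta_neg_sq (h : IsThetaRatio s Q u v) :
    2 * theta (Q ^ 5) (-Q ^ 2) = theta (Q ^ 5) (-1) * (u + v) := by
  have hprod := oddTheta_neg_mul_self h.s_ne_zero h.norm_s_lt_one (pow_ne_zero 2 h.ne_zero)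
  have hplus := h.halfTheta_mul_theta_add
  have hminus := h.halfTheta_mul_theta_sub
  rw [h.sq_eq] at hprod
  refine mul_right_cancel₀ h.halfTheta_sq_ne_zero ?_
  linear_combination (u + v) * hprod + hplus + hminus

lemma oddTheta_neg_one (h : IsThetaRatio s Q u v) :
    oddTheta s (-1) = u * v * (u + v) * oddTheta s (-Q ^ 2) := by
  have hprod := oddTheta_neg_mul_self h.s_ne_zero h.norm_s_lt_one (pow_ne_zero 2 h.ne_zero)
  have hsq := oddTheta_sq_mul_oddTheta_neg_one h.s_ne_zero h.norm_s_lt_one h.ne_zero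
  rw [h.sq_eq] at hprod hsq
  rw [h.halfTheta_eq] at hsq
  refine mul_left_cancel₀ h.oddTheta_sq_ne_zero ?_
  linear_combination hsq + u * v * halfTheta s (Q ^ 2) * h.two_mul_theta_neg_sq -
    u * v * (u + v) * hprod

lemma two_mul_theta_neg_pow_four (h : IsThetaRatio s Q u v) :
    2 * theta (Q ^ 5) (-Q ^ 4) = theta (Q ^ 5) (-1) * (u ^ 2 * v * (u + v)) := by
  have hprod := oddTheta_neg_mul_self h.s_ne_zero h.norm_s_lt_one (pow_ne_zero 2 h.ne_zero)
  have hsq := oddTheta_sq_mul_oddTheta_neg_one h.s_ne_zero h.norm_s_lt_one (pow_ne_zero 2 h.ne_zero)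
  rw [← pow_mul, show 2 * 2 = 4 from rfl] at hsq
  rw [h.sq_eq] at hprod
  rw [h.sq_eq, h.oddTheta_pow_four, h.oddTheta_eq, h.oddTheta_neg_one] at hsq
  refine mul_left_cancel₀ h.halfTheta_sq_ne_zero ?_
  linear_combination u ^ 2 * v * (u + v) * hprod - hsq

theorem sub_eq (h : IsThetaRatio s Q u v) : v - u = Q * u ^ 3 * v ^ 2 * (u + v) := by
  have hprod := oddTheta_neg_mul_self h.s_ne_zero h.norm_s_lt_one (pow_ne_zero 2 h.ne_zero)
  have hplus := h.halfTheta_mul_theta_add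
  have hminus := h.halfTheta_mul_theta_sub
  rw [h.sq_eq] at hprod
  rw [h.halfTheta_eq] at hplus hminus
  refine mul_left_cancel₀ (mul_ne_zero h.halfTheta_sq_ne_zero h.theta_neg_one_ne_zero) ?_
  linear_combination hminus - hplus - (v - u) * hprod +
    Q * u * v * halfTheta s (Q ^ 2) * h.two_mul_theta_neg_pow_four

theorem theta_neg_one_eq (h : IsThetaRatio s Q u v) {x : ℂ} (hx : x ^ 5 = Q) :
    theta x (-1) = theta (Q ^ 5) (-1) * (1 - x * (u + v) + x ^ 4 * (u ^ 2 * v * (u + v))) := by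
  have h5 := theta_neg_one_eq_of_pow_five (h.root_ne_zero hx)
    ((h.norm_root_lt hx).trans (by norm_num)) hx
  linear_combination h5 - x * h.two_mul_theta_neg_sq + x ^ 4 * h.two_mul_theta_neg_pow_four

end IsThetaRatio

end ThetaRatio

section AppellDecomposition

open Filter Topology Finset Function

lemma appell_eq_sum_appell {q p w z : ℂ} {r : ℝ} (hq0 : q ≠ 0) (hq : ‖q‖ < 1) (hp0 : p ≠ 0)
    (hp : ‖p‖ < r) (hrz : r ≤ ‖z‖) (hzr : ‖z‖ ≤ r⁻¹) (hw : w ≠ 0) (a : ℤ) {k : ℕ} (hk : Odd k) :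
    appell q p w z = ∑ j ∈ Ico a (a + k), q ^ j ^ 2 * (-w) ^ j *
      appell (q ^ k ^ 2) (p ^ k) (w ^ k * q ^ (2 * k * j)) (z * p ^ j) := by
  rw [appell, tsum_eq_sum_tsum_mul_add (summable_appell hq hp0 hp hrz hzr w) a hk.pos]
  refine sum_congr rfl fun j _ => ?_
  rw [appell, ← tsum_mul_left]
  refine tsum_congr fun m => ?_
  have hpow : (k * m + j) ^ 2 = j ^ 2 + (2 * k * j * m + (k ^ 2 : ℕ) * m ^ 2) := by
    push_cast
    ring
  rw [hpow, zpow_add₀ hq0, zpow_add₀ hq0, zpow_mul q, zpow_mul q _ (m ^ 2), zpow_natCast,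
    zpow_add₀ hp0, zpow_mul p, zpow_natCast, add_comm _ j, zpow_add₀ (neg_ne_zero.2 hw),
    zpow_mul (-w), zpow_natCast, hk.neg_pow, ← neg_mul, mul_zpow (-w ^ k)]
  ring

variable {p y z : ℂ} {r : ℝ}

lemma appell_mul (hp : p ≠ 0) (hy : y ≠ 0) (hz : z ≠ 0) :
    appell p p ((p * z) ^ 2 * y) (p * z) = -appell p p (z ^ 2 * y) z / (p * y * z ^ 2) := by
  rw [appell, appell,
    ← (Equiv.addRight (1 : ℤ)).tsum_eq fun m => p ^ m ^ 2 * (-(z ^ 2 * y)) ^ m / (1 - z * p ^ m),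
    ← tsum_neg, ← tsum_div_const]
  refine tsum_congr fun m => ?_
  have hden : p * z * p ^ m = z * p ^ (m + 1) := by
    rw [zpow_add_one₀ hp]
    ring
  have hnum : -((p * z) ^ 2 * y) = p ^ 2 * -(z ^ 2 * y) := by ring
  have hbase : -(z ^ 2 * y) ≠ 0 := by simp [hz, hy]
  rw [Equiv.coe_addRight, hden, hnum, mul_zpow, zpow_add_one₀ hbase]
  generalize 1 - z * p ^ (m + 1) = d
  rw [show (m + 1) ^ 2 = m ^ 2 + 2 * m + 1 by ring, zpow_add_one₀ hp, zpow_add₀ hp, zpow_mul,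
    zpow_ofNat]
  field_simp

/-- The Appell series `appell p p (z ^ 2 * y) z` without its term `(1 - z)⁻¹` of index zero, the
only one with a pole near the unit circle. -/
noncomputable def appellRegular (p y z : ℂ) : ℂ :=
  ∑' m : ℤ, if m = 0 then 0 else p ^ m ^ 2 * (-(z ^ 2 * y)) ^ m / (1 - z * p ^ m)

lemma appell_eq_inv_add_appellRegular (hp0 : p ≠ 0) (hp : ‖p‖ < r) (hr : r < 1) (hrz : r ≤ ‖z‖)
    (hzr : ‖z‖ ≤ r⁻¹) : appell p p (z ^ 2 * y) z = (1 - z)⁻¹ + appellRegular p y z := by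
  rw [appell, (summable_appell (hp.trans hr) hp0 hp hrz hzr _).tsum_eq_add_tsum_ite 0,
    appellRegular]
  simp

lemma zpow_le_zpow_add_inv_zpow {t : ℝ} (hr : 0 < r) (hrt : r ≤ t) (htr : t ≤ r⁻¹) (m : ℤ) :
    t ^ m ≤ r ^ m + r⁻¹ ^ m := by
  have ht : 0 < t := hr.trans_le hrt
  obtain ⟨k, rfl | rfl⟩ := m.eq_nat_or_neg
  · rw [zpow_natCast, zpow_natCast, zpow_natCast]
    exact le_add_of_nonneg_of_le (by positivity) (pow_le_pow_left₀ ht.le htr k)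
  · rw [zpow_neg, zpow_natCast, zpow_neg, zpow_natCast]
    exact le_add_of_le_of_nonneg (inv_anti₀ (by positivity) (pow_le_pow_left₀ hr.le hrt k))
      (by positivity)

lemma exists_summable_norm_appell_term_le (hp0 : p ≠ 0) (hp : ‖p‖ < r) (hr : r < 1) (hy : y ≠ 0) :
    ∃ u : ℤ → ℝ, Summable u ∧ ∀ m z, m ≠ 0 → r ≤ ‖z‖ → ‖z‖ ≤ r⁻¹ →
      ‖p ^ m ^ 2 * (-(z ^ 2 * y)) ^ m / (1 - z * p ^ m)‖ ≤ u m := by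
  have hr0 : 0 < r := (norm_nonneg p).trans_lt hp
  set ρ : ℝ := min (r ^ 2 * ‖y‖) (r ^ 2 * ‖y‖⁻¹)
  have hρ : 0 < ρ := lt_min (by positivity) (by positivity)
  have hp1 : ‖p‖ < 1 := hp.trans hr
  refine ⟨fun m => ‖p‖ ^ m ^ 2 * (ρ ^ m + ρ⁻¹ ^ m) * (1 - ‖p‖ / r)⁻¹, ?_, fun m z hm hrz hzr => ?_⟩
  · refine (((summable_theta hp1 (ρ : ℂ)).norm.add (summable_theta hp1 (ρ⁻¹ : ℂ)).norm).mul_right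
      (1 - ‖p‖ / r)⁻¹).congr fun m => ?_
    simp only [norm_mul, norm_zpow, norm_inv, Complex.norm_real, Real.norm_of_nonneg hρ.le]
    ring
  · have hle : ρ ≤ ‖z ^ 2 * y‖ := by
      rw [norm_mul, norm_pow]
      exact (min_le_left _ _).trans (by gcongr)
    have hge : ‖z ^ 2 * y‖ ≤ ρ⁻¹ := by
      refine le_inv_of_le_inv₀ hρ ((min_le_right _ _).trans ?_)
      rw [norm_mul, norm_pow, mul_inv, ← inv_pow]
      gcongr
      exact le_inv_of_le_inv₀ (hr0.trans_le hrz) hzr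
    rw [div_eq_mul_inv, norm_mul, norm_mul, norm_zpow, norm_zpow, norm_neg]
    refine mul_le_mul ?_ (norm_inv_one_sub_mul_zpow_le hp0 hp hrz hzr hm) (norm_nonneg _)
      (by positivity)
    gcongr
    exact zpow_le_zpow_add_inv_zpow hρ hle hge m

lemma differentiableAt_appellRegular (hp0 : p ≠ 0) (hp : ‖p‖ < r) (hr : r < 1) (hy : y ≠ 0)
    (hrz : r < ‖z‖) (hzr : ‖z‖ < r⁻¹) : DifferentiableAt ℂ (appellRegular p y) z := by
  obtain ⟨u, hu, hle⟩ := exists_summable_norm_appell_term_le hp0 hp hr hy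
  have hr0 : 0 < r := (norm_nonneg p).trans_lt hp
  have hopen := isOpen_annulus r r⁻¹
  refine (Complex.differentiableOn_tsum_of_summable_norm (u := fun m => |u m|) hu.abs
    (fun m w hw => ?_) hopen fun m w hw => ?_).differentiableAt (hopen.mem_nhds ⟨hrz, hzr⟩)
  · split_ifs with hm
    · exact differentiableWithinAt_const _
    · have hw0 : w ≠ 0 := norm_pos_iff.1 (hr0.trans hw.1)
      have hden := one_sub_mul_zpow_ne_zero hp0 hp hw.1.le hw.2.le hm
      have hbase : -(w ^ 2 * y) ≠ 0 := by simp [hw0, hy]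
      refine DifferentiableAt.differentiableWithinAt ?_
      have hnum : DifferentiableAt ℂ (fun z : ℂ => (-(z ^ 2 * y)) ^ m) w :=
        DifferentiableAt.zpow (by fun_prop) (Or.inl hbase)
      fun_prop (disch := exact hden)
  · split_ifs with hm
    · simp
    · exact (hle m w hm hw.1.le hw.2.le).trans (le_abs_self _)

lemma appell_eq_update_add_dslope (hp0 : p ≠ 0) (hp : ‖p‖ < r) (hr : r < 1) (hrz : r ≤ ‖z‖)
    (hzr : ‖z‖ ≤ r⁻¹) {f : ℂ → ℂ} (hf1 : f 1 = 1) : appell p p (z ^ 2 * y) z =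
      update (fun z => f z / (1 - z)) 1 (-deriv f 1) z + (appellRegular p y z + dslope f 1 z) := by
  rw [appell_eq_inv_add_appellRegular hp0 hp hr hrz hzr]
  rcases eq_or_ne z 1 with rfl | hz
  · simp
  · have hz' : 1 - z ≠ 0 := sub_ne_zero.2 hz.symm
    rw [update_of_ne hz, dslope_of_ne _ hz, slope_def_field, hf1, ← neg_sub 1 z]
    field [hz']

lemma differentiableAt_dslope_one (hr : r < 1) {f : ℂ → ℂ}
    (hf : ∀ z, r < ‖z‖ → ‖z‖ < r⁻¹ → DifferentiableAt ℂ f z) (hrz : r < ‖z‖) (hzr : ‖z‖ < r⁻¹) :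
    DifferentiableAt ℂ (dslope f 1) z := by
  have hopen := isOpen_annulus r r⁻¹
  have hr' : 1 < r⁻¹ := (one_lt_inv₀ (inv_pos.1 ((norm_nonneg z).trans_lt hzr))).2 hr
  refine ((Complex.differentiableOn_dslope (hopen.mem_nhds (by simp [hr, hr']))).2
    fun w hw => ?_).differentiableAt (hopen.mem_nhds ⟨hrz, hzr⟩)
  exact (hf w hw.1 hw.2).differentiableWithinAt

-- Subtracting `f z / (1 - z)` cancels the pole of the Appell series at `z = 1`, and the difference
-- has the quasi-periodicity that characterizes combinations of two theta functions.
theorem exists_appell_eq_update_add_theta (hp0 : p ≠ 0) (hp : ‖p‖ < r) (hrp : r ^ 2 < ‖p‖)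
    (hy : y ≠ 0) {f : ℂ → ℂ} (hf : ∀ z, r < ‖z‖ → ‖z‖ < r⁻¹ → DifferentiableAt ℂ f z)
    (hf1 : f 1 = 1)
    (hfp : ∀ z, z ≠ 0 → f (p * z) / (1 - p * z) = -(f z / (1 - z)) / (p * y * z ^ 2)) :
    ∃ c₀ c₁ : ℂ, ∀ z, r < ‖z‖ → ‖z‖ < r⁻¹ → appell p p (z ^ 2 * y) z =
      update (fun z => f z / (1 - z)) 1 (-deriv f 1) z +
        (c₀ * theta p (-(z ^ 2 * y)) + c₁ * (z * theta p (-(p * z ^ 2 * y)))) := by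
  have hr0 : 0 < r := (norm_nonneg p).trans_lt hp
  have hr : r < 1 := by nlinarith
  have hr' : 1 < r⁻¹ := (one_lt_inv₀ hr0).2 hr
  set D : ℂ → ℂ := fun z => appellRegular p y z + dslope f 1 z
  have happell (z : ℂ) (hrz : r < ‖z‖) (hzr : ‖z‖ < r⁻¹) :
      appell p p (z ^ 2 * y) z = update (fun z => f z / (1 - z)) 1 (-deriv f 1) z + D z :=
    appell_eq_update_add_dslope hp0 hp hr hrz.le hzr.le hf1
  have hDdiff (z : ℂ) (hrz : r < ‖z‖) (hzr : ‖z‖ < r⁻¹) : DifferentiableAt ℂ D z :=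
    (differentiableAt_appellRegular hp0 hp hr hy hrz hzr).add
      (differentiableAt_dslope_one hr hf hrz hzr)
  have hDp (z : ℂ) (hrz : r < ‖p * z‖) (hzr : ‖z‖ < r⁻¹) :
      D (p * z) = -D z / (p * y * z ^ 2) := by
    have hpz : ‖p * z‖ < 1 := by
      rw [norm_mul]
      calc ‖p‖ * ‖z‖ < r * r⁻¹ := mul_lt_mul'' hp hzr (norm_nonneg p) (norm_nonneg z)
        _ = 1 := mul_inv_cancel₀ hr0.ne'
    have hz0 : z ≠ 0 := by
      rintro rfl
      rw [mul_zero, norm_zero] at hrz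
      exact hr0.not_gt hrz
    have hz : 1 < ‖z‖ := by
      rw [norm_mul] at hrz
      nlinarith
    have h1 := happell z (hr.trans hz) hzr
    have h2 := happell (p * z) hrz (hpz.trans hr')
    rw [update_of_ne (by rintro rfl; simp at hz)] at h1
    rw [update_of_ne (by intro h; simp [h] at hpz), appell_mul hp0 hy hz0, h1, hfp z hz0] at h2
    linear_combination -h2
  obtain ⟨c₀, c₁, hc⟩ := exists_eq_mul_theta_add_mul_theta hp0 (hp.trans hr) hy hr0.le
    (by rwa [← div_eq_mul_inv, lt_div_iff₀ hr0, ← sq]) hDdiff hDp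
  exact ⟨c₀, c₁, fun z hrz hzr => by rw [happell z hrz hzr, hc z hrz hzr]⟩

lemma deriv_div_reducedTheta_one {s : ℂ} (hs : ‖s‖ < 1) (hs1 : reducedTheta s 1 ≠ 0) {N : ℂ → ℂ}
    (hN : DifferentiableAt ℂ N 1) (hN1 : N 1 ≠ 0) :
    deriv (fun z => reducedTheta s 1 / N 1 * N z / reducedTheta s z) 1 = logDeriv N 1 := by
  have hd : HasDerivAt (reducedTheta s) 0 1 := by
    rw [← deriv_reducedTheta_one hs]
    exact (differentiableAt_reducedTheta hs one_ne_zero).hasDerivAt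
  rw [((hN.hasDerivAt.const_mul (reducedTheta s 1 / N 1)).fun_div hd hs1).deriv, logDeriv_apply]
  field_simp
  ring

theorem exists_appell_eq_div_oddTheta_add_theta {s : ℂ} (hs0 : s ≠ 0) (hr : 6 * ‖s‖ ^ 2 < r)
    (hrs : r < ‖s‖) (hy : y ≠ 0) {N : ℂ → ℂ} (hN : ∀ z ≠ 0, DifferentiableAt ℂ N z) (hN1 : N 1 ≠ 0)
    (hNs : ∀ z ≠ 0, N (s ^ 2 * z) = N z / (s ^ 2 * y * z ^ 3)) :
    ∃ c₀ c₁ : ℂ, ∀ z, r < ‖z‖ → ‖z‖ < r⁻¹ → appell (s ^ 2) (s ^ 2) (z ^ 2 * y) z =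
      update (fun z => reducedTheta s 1 / N 1 * N z / oddTheta s z) 1 (-logDeriv N 1) z +
        (c₀ * theta (s ^ 2) (-(z ^ 2 * y)) +
          c₁ * (z * theta (s ^ 2) (-(s ^ 2 * z ^ 2 * y)))) := by
  have hr0 : 0 < r := lt_of_le_of_lt (by positivity) hr
  have hs1 : ‖s‖ < 1 := by nlinarith
  have hr1 : r < 1 := hrs.trans hs1
  have hred (z : ℂ) (hrz : r < ‖z‖) (hzr : ‖z‖ < r⁻¹) : reducedTheta s z ≠ 0 :=
    reducedTheta_ne_zero hr hrz.le hzr.le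
  have hred1 : reducedTheta s 1 ≠ 0 :=
    hred 1 (by rwa [norm_one]) (by rw [norm_one]; exact (one_lt_inv₀ hr0).2 hr1)
  set f : ℂ → ℂ := fun z => reducedTheta s 1 / N 1 * N z / reducedTheta s z with hf
  have hf1 : f 1 = 1 := by
    rw [hf]
    field_simp
  have hquot (z : ℂ) (hz : z ≠ 0) :
      f z / (1 - z) = reducedTheta s 1 / N 1 * N z / oddTheta s z := by
    rw [oddTheta_eq_one_sub_mul_reducedTheta hs0 hs1 hz, hf, div_div, mul_comm (1 - z)]
  obtain ⟨c₀, c₁, hc⟩ := exists_appell_eq_update_add_theta (p := s ^ 2) (r := r) (f := f)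
    (pow_ne_zero 2 hs0) (by rw [norm_pow]; nlinarith) (by rw [norm_pow]; gcongr) hy
    (fun z hrz hzr => by
      have hz : z ≠ 0 := norm_pos_iff.1 (hr0.trans hrz)
      exact ((hN z hz).const_mul _).div (differentiableAt_reducedTheta hs1 hz) (hred z hrz hzr))
    hf1
    (fun z hz => by
      rw [hquot z hz, hquot _ (mul_ne_zero (pow_ne_zero 2 hs0) hz), hNs z hz,
        oddTheta_sq_mul hs0 hz]
      field_simp)
  refine ⟨c₀, c₁, fun z hrz hzr => ?_⟩
  rw [hc z hrz hzr, deriv_div_reducedTheta_one hs1 hred1 (hN 1 one_ne_zero) hN1]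
  rcases eq_or_ne z 1 with rfl | hz
  · simp only [update_self]
  · rw [update_of_ne hz, update_of_ne hz, hquot z (norm_pos_iff.1 (hr0.trans hrz))]

lemma appell_pow_five_eq_sum_add_theta {x w c₀ c₁ : ℂ} {K : ℂ → ℂ} (hx0 : x ≠ 0) (hx : ‖x‖ < 1)
    (hw : w ≠ 0)
    (hK : ∀ j ∈ Ico (-2 : ℤ) (-2 + (5 : ℕ)),
      appell (x ^ 25) (x ^ 25) (((x ^ 5) ^ j) ^ 2 * w ^ 5) ((x ^ 5) ^ j) = K ((x ^ 5) ^ j) +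
        (c₀ * theta (x ^ 25) (-(((x ^ 5) ^ j) ^ 2 * w ^ 5)) +
          c₁ * ((x ^ 5) ^ j * theta (x ^ 25) (-(x ^ 25 * ((x ^ 5) ^ j) ^ 2 * w ^ 5))))) :
    appell x (x ^ 5) w 1 =
      ∑ j ∈ Ico (-2 : ℤ) (-2 + (5 : ℕ)), x ^ j ^ 2 * (-w) ^ j * K ((x ^ 5) ^ j) +
        c₀ * theta x (-w) + c₁ * theta x (-(x ^ 5 * w)) := by
  have hxw : -(x ^ 5 * w) ≠ 0 := by simp [hx0, hw]
  have hx5 : ‖x ^ 5‖ < 1 := by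
    rw [norm_pow]
    exact pow_lt_one₀ (norm_nonneg x) hx (by norm_num)
  obtain ⟨r, hxr, hr1⟩ := exists_between hx5
  have hr0 : 0 < r := (norm_nonneg _).trans_lt hxr
  rw [appell_eq_sum_appell hx0 hx (pow_ne_zero 5 hx0) hxr (by simpa using hr1.le)
    (by simpa using (one_le_inv₀ hr0).2 hr1.le) hw (-2) (k := 5) (by decide),
    theta_eq_sum_theta_pow hx0 hx (neg_ne_zero.2 hw) (-2) (k := 5) (by norm_num),
    theta_eq_sum_theta_pow hx0 hx hxw (-2) (k := 5) (by norm_num), mul_sum, mul_sum,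
    ← sum_add_distrib, ← sum_add_distrib]
  refine sum_congr rfl fun j hj => ?_
  have hsq : x ^ (2 * ((5 : ℕ) : ℤ) * j) = ((x ^ 5) ^ j) ^ 2 := by
    rw [← zpow_natCast, ← zpow_natCast, ← zpow_mul, ← zpow_mul]
    congr 1
    ring
  have hmul : (-(x ^ 5 * w)) ^ j = (x ^ 5) ^ j * (-w) ^ j := by rw [neg_mul_eq_mul_neg, mul_zpow]
  rw [hsq, hmul, one_mul, mul_comm (w ^ 5)]
  norm_num only
  rw [← pow_mul, hK j hj, show (-w) ^ 5 * ((x ^ 5) ^ j) ^ 2 = -(((x ^ 5) ^ j) ^ 2 * w ^ 5) by ring,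
    show (-(x ^ 5 * w)) ^ 5 * ((x ^ 5) ^ j) ^ 2 = -(x ^ 25 * ((x ^ 5) ^ j) ^ 2 * w ^ 5) by ring]
  ring

namespace IsNomeRoot

variable {s Q : ℂ}

lemma zpow_ne_one (h : IsNomeRoot s Q) {j : ℤ} (hj : j ≠ 0) : Q ^ j ≠ 1 := by
  intro hQ
  have hQ1 : ‖Q‖ ^ j = 1 := by rw [← norm_zpow, hQ, norm_one]
  rw [zpow_eq_one_iff_right₀ (norm_nonneg Q) (by linarith [h.norm_lt])] at hQ1
  exact hj hQ1

lemma lt_norm_zpow (h : IsNomeRoot s Q) (hr : r < ‖Q‖ ^ 2) {j : ℤ} (hj : j ≤ 2) :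
    r < ‖Q ^ j‖ := by
  rw [norm_zpow]
  calc r < ‖Q‖ ^ (2 : ℤ) := by exact_mod_cast hr
    _ ≤ ‖Q‖ ^ j := zpow_le_zpow_right_of_le_one₀ (norm_pos_iff.2 h.ne_zero)
      (by linarith [h.norm_lt]) hj

lemma norm_zpow_lt (h : IsNomeRoot s Q) (hr0 : 0 < r) (hr : r < ‖Q‖ ^ 2) {j : ℤ} (hj : -2 ≤ j) :
    ‖Q ^ j‖ < r⁻¹ := by
  refine lt_inv_of_lt_inv₀ hr0 ?_
  rw [← norm_inv, ← zpow_neg]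
  exact h.lt_norm_zpow hr (by lia)

theorem exists_appell_eq (h : IsNomeRoot s Q) (b : ℕ) {N : ℂ → ℂ}
    (hN : ∀ z ≠ 0, DifferentiableAt ℂ N z) (hN1 : N 1 ≠ 0)
    (hNs : ∀ z ≠ 0, N (s ^ 2 * z) = N z / (s ^ 2 * Q ^ b * z ^ 3)) :
    ∃ c₀ c₁ : ℂ, ∀ x, x ^ 5 = Q → appell x (x ^ 5) (x ^ b) 1 =
      -logDeriv N 1 + ∑ j ∈ ({-2, -1, 1, 2} : Finset ℤ),
          x ^ j ^ 2 * (-x ^ b) ^ j * (reducedTheta s 1 / N 1 * N (Q ^ j) / oddTheta s (Q ^ j)) +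
        c₀ * theta x (-x ^ b) + c₁ * theta x (-x ^ (b + 5)) := by
  obtain ⟨r, hr, hrs⟩ := exists_between h.six_mul_norm_s_sq_lt
  obtain ⟨c₀, c₁, hc⟩ := exists_appell_eq_div_oddTheta_add_theta h.s_ne_zero hr hrs
    (pow_ne_zero b h.ne_zero) hN hN1 hNs
  have hr0 : 0 < r := lt_of_le_of_lt (by positivity) hr
  have hrQ : r < ‖Q‖ ^ 2 := hrs.trans h.norm_s_lt
  refine ⟨c₀, c₁, ?_⟩
  rintro x rfl
  have hx0 := h.root_ne_zero rfl
  have hx1 : ‖x‖ < 1 := (h.norm_root_lt rfl).trans (by norm_num)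
  have hs : s ^ 2 = x ^ 25 := by rw [h.sq_eq, ← pow_mul]
  rw [pow_add, mul_comm (x ^ b) (x ^ 5), appell_pow_five_eq_sum_add_theta hx0 hx1
    (pow_ne_zero b hx0) (K := update (fun z => reducedTheta s 1 / N 1 * N z / oddTheta s z) 1
      (-logDeriv N 1)) fun j hj => ?_]
  · congr 2
    rw [← sum_erase_add _ _ (a := 0) (by decide), add_comm, zpow_zero (x ^ 5), update_self,
      show (Ico (-2 : ℤ) (-2 + (5 : ℕ))).erase 0 = {-2, -1, 1, 2} by rfl]
    congr 1
    · simp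
    · refine sum_congr rfl fun j hj => ?_
      rw [update_of_ne (h.zpow_ne_one (by rintro rfl; simp at hj))]
  rw [mem_Ico] at hj
  have := hc ((x ^ 5) ^ j) (h.lt_norm_zpow hrQ (by lia)) (h.norm_zpow_lt hr0 hrQ (by lia))
  rwa [hs, pow_right_comm x 5 b] at this

end IsNomeRoot

end AppellDecomposition

section LevelFive

open Filter Topology Finset

lemma logDeriv_inv_mul_mul_one_of_inv {h l : ℂ → ℂ} (k : ℕ) (hh : DifferentiableAt ℂ h 1)
    (hl : DifferentiableAt ℂ l 1) (hh1 : h 1 ≠ 0) (hl1 : l 1 ≠ 0)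
    (hinv : ∀ z ≠ 0, h z⁻¹ * z ^ k = h z) :
    logDeriv (fun z => z⁻¹ * h z * l z) 1 = k / 2 - 1 + logDeriv l 1 := by
  have hderiv := two_mul_deriv_one_of_inv k hh hinv
  have hd : DifferentiableAt ℂ (fun z : ℂ => z⁻¹) 1 := differentiableAt_inv one_ne_zero
  rw [logDeriv_mul 1 (by simpa) hl1 (hd.fun_mul hh) hl, logDeriv_mul 1 (by simp) hh1 hd hh,
    logDeriv_inv, logDeriv_apply h, show deriv h 1 = k / 2 * h 1 by linear_combination hderiv / 2,
    mul_div_cancel_right₀ _ hh1]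
  ring

variable {s Q u v c z : ℂ}

lemma differentiableAt_oddTheta_const_mul (hs0 : s ≠ 0) (hs : ‖s‖ < 1) (hc : c ≠ 0) (hz : z ≠ 0) :
    DifferentiableAt ℂ (fun z => oddTheta s (c * z)) z :=
  (differentiableAt_oddTheta hs0 hs (mul_ne_zero hc hz)).comp z (differentiableAt_id.const_mul c)

lemma oddTheta_const_mul_sq_mul (hs0 : s ≠ 0) (hc : c ≠ 0) (hz : z ≠ 0) :
    oddTheta s (c * (s ^ 2 * z)) = -(c * z)⁻¹ * oddTheta s (c * z) := by
  rw [mul_left_comm, oddTheta_sq_mul hs0 (mul_ne_zero hc hz)]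

/-- The numerator of the theta quotient attached to the Appell series `appell x (x ^ 5) x`. Its
zeros at `Q ^ 2` and `(Q ^ 2)⁻¹` cancel two of the four residues away from `1`. -/
noncomputable def appellNumerator₁ (s Q z : ℂ) : ℂ :=
  z⁻¹ * (oddTheta s (Q ^ 2 * z) * oddTheta s ((Q ^ 2)⁻¹ * z)) * oddTheta s (-Q * z)

/-- The numerator of the theta quotient attached to the Appell series `appell x (x ^ 5) (x ^ 2)`.
The squared factor is also a factor of `appellNumerator₁`, which relates the logarithmic derivatives
of the two numerators at `1`. -/
noncomputable def appellNumerator₂ (s Q z : ℂ) : ℂ :=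
  z⁻¹ * oddTheta s (-1 * z) * oddTheta s (-Q * z) ^ 2

lemma appellNumerator₂_one (s Q : ℂ) :
    appellNumerator₂ s Q 1 = oddTheta s (-1) * oddTheta s (-Q) ^ 2 := by
  simp [appellNumerator₂]

lemma appellNumerator₂_self (s Q : ℂ) :
    appellNumerator₂ s Q Q = Q⁻¹ * oddTheta s (-Q) * oddTheta s (-Q ^ 2) ^ 2 := by
  rw [appellNumerator₂, neg_one_mul, show -Q * Q = -Q ^ 2 by ring]

namespace IsNomeRoot

lemma differentiableAt_appellNumerator₁ (h : IsNomeRoot s Q) (hz : z ≠ 0) :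
    DifferentiableAt ℂ (appellNumerator₁ s Q) z := by
  have hd {c : ℂ} (hc : c ≠ 0) :=
    differentiableAt_oddTheta_const_mul h.s_ne_zero h.norm_s_lt_one hc hz
  have hQ2 := pow_ne_zero 2 h.ne_zero
  exact ((differentiableAt_inv hz).mul ((hd hQ2).mul (hd (inv_ne_zero hQ2)))).mul
    (hd (neg_ne_zero.2 h.ne_zero))

lemma differentiableAt_appellNumerator₂ (h : IsNomeRoot s Q) (hz : z ≠ 0) :
    DifferentiableAt ℂ (appellNumerator₂ s Q) z := by
  have hd {c : ℂ} (hc : c ≠ 0) :=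
    differentiableAt_oddTheta_const_mul h.s_ne_zero h.norm_s_lt_one hc hz
  exact ((differentiableAt_inv hz).mul (hd (neg_ne_zero.2 one_ne_zero))).mul
    ((hd (neg_ne_zero.2 h.ne_zero)).pow 2)

lemma appellNumerator₁_sq_mul (h : IsNomeRoot s Q) (hz : z ≠ 0) :
    appellNumerator₁ s Q (s ^ 2 * z) = appellNumerator₁ s Q z / (s ^ 2 * Q ^ 1 * z ^ 3) := by
  have hs0 := h.s_ne_zero
  have hQ := h.ne_zero
  have hQ2 := pow_ne_zero 2 hQ
  simp only [appellNumerator₁]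
  rw [oddTheta_const_mul_sq_mul hs0 hQ2 hz, oddTheta_const_mul_sq_mul hs0 (inv_ne_zero hQ2) hz,
    oddTheta_const_mul_sq_mul hs0 (neg_ne_zero.2 hQ) hz]
  field

lemma appellNumerator₂_sq_mul (h : IsNomeRoot s Q) (hz : z ≠ 0) :
    appellNumerator₂ s Q (s ^ 2 * z) = appellNumerator₂ s Q z / (s ^ 2 * Q ^ 2 * z ^ 3) := by
  have hs0 := h.s_ne_zero
  have hQ := h.ne_zero
  simp only [appellNumerator₂]
  rw [oddTheta_const_mul_sq_mul hs0 (neg_ne_zero.2 one_ne_zero) hz,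
    oddTheta_const_mul_sq_mul hs0 (neg_ne_zero.2 hQ) hz]
  field

lemma oddTheta_self_ne_zero (h : IsNomeRoot s Q) : oddTheta s Q ≠ 0 := by
  have hQ := h.norm_lt
  refine h.oddTheta_ne_zero (fun h1 => ?_) (by nlinarith [norm_nonneg Q]) (by linarith)
  norm_num [h1] at hQ

lemma oddTheta_neg_self_ne_zero (h : IsNomeRoot s Q) : oddTheta s (-Q) ≠ 0 := by
  have hQ := h.norm_lt
  refine h.oddTheta_ne_zero (fun h1 => ?_) (by rw [norm_neg]; nlinarith [norm_nonneg Q])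
    (by rw [norm_neg]; linarith)
  norm_num [neg_eq_iff_eq_neg.1 h1] at hQ

lemma oddTheta_neg_one_ne_zero (h : IsNomeRoot s Q) : oddTheta s (-1) ≠ 0 :=
  h.oddTheta_ne_zero (by norm_num) (by simpa using (h.norm_pow_lt_one two_ne_zero).le) (by simp)

lemma appellNumerator₁_one (h : IsNomeRoot s Q) :
    appellNumerator₁ s Q 1 = -(Q ^ 2)⁻¹ * oddTheta s (Q ^ 2) ^ 2 * oddTheta s (-Q) := by
  simp only [appellNumerator₁, mul_one, inv_one, one_mul]
  rw [oddTheta_inv h.s_ne_zero (pow_ne_zero 2 h.ne_zero)]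
  ring

lemma appellNumerator₁_one_ne_zero (h : IsNomeRoot s Q) : appellNumerator₁ s Q 1 ≠ 0 := by
  rw [h.appellNumerator₁_one]
  exact mul_ne_zero (mul_ne_zero (neg_ne_zero.2 (inv_ne_zero (pow_ne_zero 2 h.ne_zero)))
    (pow_ne_zero 2 h.oddTheta_sq_ne_zero)) h.oddTheta_neg_self_ne_zero

lemma appellNumerator₂_one_ne_zero (h : IsNomeRoot s Q) : appellNumerator₂ s Q 1 ≠ 0 := by
  rw [appellNumerator₂_one]
  exact mul_ne_zero h.oddTheta_neg_one_ne_zero (pow_ne_zero 2 h.oddTheta_neg_self_ne_zero)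

lemma logDeriv_appellNumerator₁_one (h : IsNomeRoot s Q) :
    logDeriv (appellNumerator₁ s Q) 1 = logDeriv (fun z => oddTheta s (-Q * z)) 1 := by
  have hs0 := h.s_ne_zero
  have hQ2 := pow_ne_zero 2 h.ne_zero
  have hd {c : ℂ} (hc : c ≠ 0) :=
    differentiableAt_oddTheta_const_mul hs0 h.norm_s_lt_one hc one_ne_zero
  unfold appellNumerator₁
  rw [logDeriv_inv_mul_mul_one_of_inv 2 ((hd hQ2).fun_mul (hd (inv_ne_zero hQ2)))
    (hd (neg_ne_zero.2 h.ne_zero)) ?_ (by simpa using h.oddTheta_neg_self_ne_zero) fun z hz => ?_]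
  · norm_num
  · simpa [oddTheta_inv hs0 hQ2, h.ne_zero] using h.oddTheta_sq_ne_zero
  · rw [show Q ^ 2 * z⁻¹ = ((Q ^ 2)⁻¹ * z)⁻¹ by field, ← mul_inv,
      oddTheta_inv hs0 (mul_ne_zero hQ2 hz), oddTheta_inv hs0 (mul_ne_zero (inv_ne_zero hQ2) hz)]
    field [h.ne_zero]

lemma logDeriv_appellNumerator₂_one (h : IsNomeRoot s Q) :
    logDeriv (appellNumerator₂ s Q) 1 =
      2 * logDeriv (fun z => oddTheta s (-Q * z)) 1 - 1 / 2 := by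
  have hs0 := h.s_ne_zero
  have hd {c : ℂ} (hc : c ≠ 0) :=
    differentiableAt_oddTheta_const_mul hs0 h.norm_s_lt_one hc one_ne_zero
  have hdQ := hd (neg_ne_zero.2 h.ne_zero)
  unfold appellNumerator₂
  rw [logDeriv_inv_mul_mul_one_of_inv 1 (hd (neg_ne_zero.2 one_ne_zero)) (hdQ.fun_pow 2)
    (by simpa using h.oddTheta_neg_one_ne_zero) (by simpa using h.oddTheta_neg_self_ne_zero)
    fun z hz => ?_, logDeriv_fun_pow hdQ]
  · push_cast
    ring
  · rw [neg_one_mul, neg_one_mul, ← inv_neg, oddTheta_inv hs0 (neg_ne_zero.2 hz)]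
    field

lemma appellNumerator₁_self_div (h : IsNomeRoot s Q) :
    appellNumerator₁ s Q Q / oddTheta s Q =
      -(Q ^ 2)⁻¹ * oddTheta s (Q ^ 2) * oddTheta s (-Q ^ 2) := by
  have hQ := h.ne_zero
  rw [div_eq_iff h.oddTheta_self_ne_zero, appellNumerator₁, show Q ^ 2 * Q = Q ^ 3 by ring,
    show (Q ^ 2)⁻¹ * Q = Q⁻¹ by field, show -Q * Q = -Q ^ 2 by ring, h.oddTheta_pow_three,
    oddTheta_inv h.s_ne_zero hQ]
  ring

lemma appellNumerator₁_inv_div (h : IsNomeRoot s Q) :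
    appellNumerator₁ s Q Q⁻¹ / oddTheta s Q⁻¹ =
      Q⁻¹ * oddTheta s (Q ^ 2) * oddTheta s (-1) := by
  have hQ := h.ne_zero
  have hθ := h.oddTheta_self_ne_zero
  rw [appellNumerator₁, show Q ^ 2 * Q⁻¹ = Q by field, ← mul_inv, ← pow_succ,
    show -Q * Q⁻¹ = -1 by field, oddTheta_inv h.s_ne_zero (pow_ne_zero 3 hQ), h.oddTheta_pow_three,
    oddTheta_inv h.s_ne_zero hQ]
  field

lemma appellNumerator₁_sq (h : IsNomeRoot s Q) : appellNumerator₁ s Q (Q ^ 2) = 0 := by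
  rw [appellNumerator₁, inv_mul_cancel₀ (pow_ne_zero 2 h.ne_zero), oddTheta_one h.s_ne_zero]
  ring

lemma appellNumerator₁_inv_sq (h : IsNomeRoot s Q) : appellNumerator₁ s Q (Q ^ 2)⁻¹ = 0 := by
  rw [appellNumerator₁, mul_inv_cancel₀ (pow_ne_zero 2 h.ne_zero), oddTheta_one h.s_ne_zero]
  ring

lemma appellNumerator₂_inv_div (h : IsNomeRoot s Q) :
    appellNumerator₂ s Q Q⁻¹ / oddTheta s Q⁻¹ =
      -Q * oddTheta s (-Q) * oddTheta s (-1) ^ 2 / oddTheta s Q := by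
  have hQ := h.ne_zero
  have hθ := h.oddTheta_self_ne_zero
  rw [appellNumerator₂, neg_one_mul, ← inv_neg, oddTheta_inv h.s_ne_zero (neg_ne_zero.2 hQ),
    show -Q * Q⁻¹ = -1 by field, oddTheta_inv h.s_ne_zero hQ]
  field

lemma appellNumerator₂_sq (h : IsNomeRoot s Q) :
    appellNumerator₂ s Q (Q ^ 2) = (Q ^ 2)⁻¹ * oddTheta s (-Q ^ 2) ^ 3 := by
  rw [appellNumerator₂, neg_one_mul, show -Q * Q ^ 2 = -Q ^ 3 by ring, h.oddTheta_neg_pow_three]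
  ring

lemma appellNumerator₂_inv_sq_div (h : IsNomeRoot s Q) :
    appellNumerator₂ s Q (Q ^ 2)⁻¹ / oddTheta s (Q ^ 2)⁻¹ =
      -oddTheta s (-Q ^ 2) * oddTheta s (-Q) ^ 2 / oddTheta s (Q ^ 2) := by
  have hQ := h.ne_zero
  have hQ2 := pow_ne_zero 2 hQ
  have hθ := h.oddTheta_sq_ne_zero
  rw [appellNumerator₂, neg_one_mul, ← inv_neg, show -Q * (Q ^ 2)⁻¹ = (-Q)⁻¹ by field,
    oddTheta_inv h.s_ne_zero (neg_ne_zero.2 hQ2), oddTheta_inv h.s_ne_zero hQ2,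
    oddTheta_inv h.s_ne_zero (neg_ne_zero.2 hQ)]
  field

end IsNomeRoot

namespace IsThetaRatio

lemma fst_ne_zero (h : IsThetaRatio s Q u v) : u ≠ 0 :=
  left_ne_zero_of_mul (h.oddTheta_eq ▸ h.oddTheta_self_ne_zero)

lemma snd_ne_zero (h : IsThetaRatio s Q u v) : v ≠ 0 :=
  left_ne_zero_of_mul (h.oddTheta_neg_eq ▸ h.oddTheta_neg_self_ne_zero)

lemma add_ne_zero (h : IsThetaRatio s Q u v) : u + v ≠ 0 :=
  right_ne_zero_of_mul (left_ne_zero_of_mul (h.oddTheta_neg_one ▸ h.oddTheta_neg_one_ne_zero))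

lemma sum_appellNumerator₁ (h : IsThetaRatio s Q u v) {x : ℂ} (hx : x ^ 5 = Q) :
    ∑ j ∈ ({-2, -1, 1, 2} : Finset ℤ), x ^ j ^ 2 * (-x ^ 1) ^ j *
        (reducedTheta s 1 / appellNumerator₁ s Q 1 * appellNumerator₁ s Q (Q ^ j) /
          oddTheta s (Q ^ j)) =
      reducedTheta s 1 / oddTheta s (Q ^ 2) * (Q * u * (u + v) - x ^ 2 / v) := by
  have hx0 := h.root_ne_zero hx
  have hQ := h.ne_zero
  have hv := h.snd_ne_zero
  have hB := h.oddTheta_sq_ne_zero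
  have hB' := h.oddTheta_neg_sq_ne_zero
  rw [sum_insert (by decide), sum_insert (by decide), sum_pair (by decide)]
  simp only [mul_div_assoc, Int.reduceNeg, Int.reducePow, zpow_neg, zpow_ofNat, pow_one,
    h.appellNumerator₁_one, h.appellNumerator₁_self_div, h.appellNumerator₁_inv_div,
    h.appellNumerator₁_sq, h.appellNumerator₁_inv_sq, h.oddTheta_neg_one, h.oddTheta_neg_eq]
  field_simp
  ring

lemma sum_appellNumerator₂ (h : IsThetaRatio s Q u v) {x : ℂ} (hx : x ^ 5 = Q) :
    ∑ j ∈ ({-2, -1, 1, 2} : Finset ℤ), x ^ j ^ 2 * (-x ^ 2) ^ j *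
        (reducedTheta s 1 / appellNumerator₂ s Q 1 * appellNumerator₂ s Q (Q ^ j) /
          oddTheta s (Q ^ j)) =
      reducedTheta s 1 / oddTheta s (Q ^ 2) *
        (x ^ 4 * (u + v) - 1 / (u * v * (u + v)) -
          (x ^ 3 / (Q * u ^ 2 * v ^ 2 * (u + v)) - x ^ 3 / (Q * u * v ^ 3 * (u + v)))) := by
  have hx0 := h.root_ne_zero hx
  have hu := h.fst_ne_zero
  have hv := h.snd_ne_zero
  have huv := h.add_ne_zero
  have hB := h.oddTheta_sq_ne_zero
  have hB' := h.oddTheta_neg_sq_ne_zero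
  rw [sum_insert (by decide), sum_insert (by decide), sum_pair (by decide)]
  simp only [mul_div_assoc, Int.reduceNeg, Int.reducePow, zpow_neg, zpow_ofNat, pow_one,
    appellNumerator₂_one, appellNumerator₂_self, h.appellNumerator₂_inv_div, h.appellNumerator₂_sq,
    h.appellNumerator₂_inv_sq_div, h.oddTheta_eq, h.oddTheta_neg_one, h.oddTheta_neg_eq]
  generalize oddTheta s (Q ^ 2) = B at hB ⊢
  generalize oddTheta s (-Q ^ 2) = B' at hB' ⊢
  subst hx
  field_simp
  ring

lemma exists_appell_self_eq (h : IsThetaRatio s Q u v) : ∃ C, ∀ x, x ^ 5 = Q →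
    appell x (x ^ 5) x 1 = -logDeriv (fun z => oddTheta s (-Q * z)) 1 +
      reducedTheta s 1 / oddTheta s (Q ^ 2) * (Q * u * (u + v) - x ^ 2 / v) +
      C * x * theta x (-1) := by
  obtain ⟨c₀, c₁, hc⟩ := h.exists_appell_eq 1 (fun _ => h.differentiableAt_appellNumerator₁)
    h.appellNumerator₁_one_ne_zero fun _ => h.appellNumerator₁_sq_mul
  refine ⟨-c₁ / Q ^ 2, fun x hx => ?_⟩
  have hx0 := h.root_ne_zero hx
  have hθ : theta x (-x ^ 6) = -(x / Q ^ 2) * theta x (-1) := by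
    have := theta_zpow_mul hx0 3 (neg_ne_zero.2 one_ne_zero)
    norm_num at this
    rw [this, ← hx]
    field
  have happell := hc x hx
  rw [h.sum_appellNumerator₁ hx, h.logDeriv_appellNumerator₁_one, hθ, pow_one,
    theta_neg_self hx0] at happell
  linear_combination happell

lemma exists_appell_sq_eq (h : IsThetaRatio s Q u v) : ∃ C, ∀ x, x ^ 5 = Q →
    appell x (x ^ 5) (x ^ 2) 1 = 1 / 2 - 2 * logDeriv (fun z => oddTheta s (-Q * z)) 1 +
      reducedTheta s 1 / oddTheta s (Q ^ 2) *
        (x ^ 4 * (u + v) - 1 / (u * v * (u + v)) -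
          (x ^ 3 / (Q * u ^ 2 * v ^ 2 * (u + v)) - x ^ 3 / (Q * u * v ^ 3 * (u + v)))) +
      C * x ^ 4 * theta x (-1) := by
  obtain ⟨c₀, c₁, hc⟩ := h.exists_appell_eq 2 (fun _ => h.differentiableAt_appellNumerator₂)
    h.appellNumerator₂_one_ne_zero fun _ => h.appellNumerator₂_sq_mul
  refine ⟨-c₀ / Q, fun x hx => ?_⟩
  have hx0 := h.root_ne_zero hx
  have hθ : theta x (-x ^ 2) = -(x ^ 4 / Q) * theta x (-1) := by
    have := theta_sq_mul hx0 (neg_ne_zero.2 one_ne_zero)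
    rw [mul_neg_one] at this
    rw [this, ← hx]
    field
  have hθ' : theta x (-x ^ (2 + 5)) = 0 := by exact_mod_cast theta_neg_zpow_odd hx0 3
  have happell := hc x hx
  rw [h.sum_appellNumerator₂ hx, h.logDeriv_appellNumerator₂_one, hθ, hθ'] at happell
  linear_combination happell

lemma dissection_identity (h : IsThetaRatio s Q u v) {x : ℂ} (hx : x ^ 5 = Q) :
    2 * Q * u * (u + v) - 2 * x ^ 2 / v - x ^ 4 * (u + v) + 1 / (u * v * (u + v)) +
        (x ^ 3 / (Q * u ^ 2 * v ^ 2 * (u + v)) - x ^ 3 / (Q * u * v ^ 3 * (u + v))) =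
      (1 - x * (u + v) + x ^ 4 * (u ^ 2 * v * (u + v))) *
        (1 / (u * v * (u + v)) + x / (u * v) + x ^ 3 - x ^ 4 * u) := by
  have hu := h.fst_ne_zero
  have hv := h.snd_ne_zero
  have huv := h.add_ne_zero
  have hQ := h.ne_zero
  have hcube : x ^ 3 / (Q * u ^ 2 * v ^ 2 * (u + v)) - x ^ 3 / (Q * u * v ^ 3 * (u + v)) =
      x ^ 3 * (u / v) :=
    calc _ = x ^ 3 * (v - u) / (Q * u ^ 2 * v ^ 3 * (u + v)) := by field
      _ = x ^ 3 * (u / v) := by rw [h.sub_eq]; field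
  have hdiv : u / v = 1 - Q * u ^ 3 * v * (u + v) := by
    field_simp
    linear_combination -h.sub_eq
  have hinv : 2 / v = (u + v) / (u * v) - Q * u ^ 2 * v * (u + v) := by
    field_simp
    linear_combination -h.sub_eq
  have hexpand : (1 - x * (u + v) + x ^ 4 * (u ^ 2 * v * (u + v))) *
        (1 / (u * v * (u + v)) + x / (u * v) + x ^ 3 - x ^ 4 * u) =
      1 / (u * v * (u + v)) - x ^ 2 * ((u + v) / (u * v)) + x ^ 3 - x ^ 4 * (u + v) +
        2 * x ^ 5 * u * (u + v) + x ^ 2 * x ^ 5 * u ^ 2 * v * (u + v) -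
        x ^ 3 * x ^ 5 * u ^ 3 * v * (u + v) := by
    field_simp
    ring
  rw [hexpand, hcube, hdiv, hx]
  linear_combination -x ^ 2 * hinv

end IsThetaRatio

end LevelFive

section Extraction

open Filter Topology Finset

lemma eq_zero_of_forall_sum_mul_pow_eq_zero {K : Type*} [Field K] {k : ℕ} {ζ y : K}
    (hζ : IsPrimitiveRoot ζ k) (hy : y ≠ 0) {a : Fin k → K}
    (h : ∀ x, x ^ k = y ^ k → ∑ j, a j * x ^ (j : ℕ) = 0) : a = 0 := by
  have hinj : Function.Injective fun i : Fin k => y * ζ ^ (i : ℕ) := fun i j hij =>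
    Fin.ext (hζ.pow_inj i.isLt j.isLt (mul_left_cancel₀ hy hij))
  refine Matrix.eq_zero_of_forall_index_sum_mul_pow_eq_zero hinj fun i => h _ ?_
  rw [mul_pow, pow_right_comm, hζ.pow_eq_one, one_pow, mul_one]

lemma eq_zero_of_eventually_hasSum_mul_pow_zero {𝕜 : Type*} [NontriviallyNormedField 𝕜]
    {a : ℕ → 𝕜} (h : ∀ᶠ z in 𝓝[≠] 0, HasSum (fun n => a n * z ^ n) 0) : a = 0 := by
  have hp : HasFPowerSeriesAt (fun z => ∑' n, a n * z ^ n)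
      (FormalMultilinearSeries.ofScalars 𝕜 a) 0 := by
    refine hasFPowerSeriesAt_iff.2 ((eventually_nhdsWithin_iff.1 h).mono fun z hz => ?_)
    simp only [FormalMultilinearSeries.coeff_ofScalars, smul_eq_mul, zero_add, mul_comm (z ^ _)]
    obtain rfl | hz0 := eq_or_ne z 0
    · exact (summable_of_ne_finset_zero (s := {0}) fun n hn => by
        simp [zero_pow (notMem_singleton.1 hn)]).hasSum
    · exact (hz hz0).summable.hasSum
  have hzero := hp.locally_zero_iff.1
    (hp.analyticAt.frequently_zero_iff_eventually_zero.1 (h.mono fun _ hz => hz.tsum_eq).frequently)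
  ext n
  rw [← FormalMultilinearSeries.coeff_ofScalars (𝕜 := 𝕜) (p := a), hzero]
  rfl

end Extraction

namespace IsThetaRatio

variable {s Q u v : ℂ}

lemma exists_rankDiffSeries_eq (h : IsThetaRatio s Q u v) : ∃ c : Fin 5 → ℂ, c 2 = 0 ∧
    ∀ x, x ^ 5 = Q → Overpartition.rankDiffSeries x = ∑ j, c j * x ^ (j : ℕ) := by
  obtain ⟨C₁, hC₁⟩ := h.exists_appell_self_eq
  obtain ⟨C₂, hC₂⟩ := h.exists_appell_sq_eq
  have ha := h.theta_neg_one_ne_zero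
  set μ := 2 * (reducedTheta s 1 / oddTheta s (Q ^ 2)) / theta (Q ^ 5) (-1) with hμ
  refine ⟨![μ * (1 / (u * v * (u + v))), μ * (1 / (u * v)) + 4 * C₁, 0, μ, -μ * u - 2 * C₂], rfl,
    fun x hx => ?_⟩
  have hx0 := h.root_ne_zero hx
  have hx1 := h.norm_root_lt hx
  have hμθ : μ * theta x (-1) = 2 * (reducedTheta s 1 / oddTheta s (Q ^ 2)) *
      (1 - x * (u + v) + x ^ 4 * (u ^ 2 * v * (u + v))) := by
    rw [h.theta_neg_one_eq hx, hμ]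
    field
  refine mul_right_cancel₀ (Overpartition.theta_neg_one_ne_zero hx1) ?_
  rw [Overpartition.rankDiffSeries_mul_theta hx0 hx1, hC₁ x hx, hC₂ x hx, Fin.sum_univ_five]
  simp only [Matrix.cons_val, Fin.coe_ofNat_eq_mod]
  norm_num only
  linear_combination 2 * (reducedTheta s 1 / oddTheta s (Q ^ 2)) * h.dissection_identity hx -
    (1 / (u * v * (u + v)) + x / (u * v) + x ^ 3 - x ^ 4 * u) * hμθ

end IsThetaRatio

namespace Overpartition

open Filter Topology Finset

variable {x Q : ℂ}

lemma rankDiffSeries_eq_sum (hx : ‖x‖ < 1 / 2) :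
    rankDiffSeries x = ∑ j : Fin 5, (∑' m, rankDiff (j + 5 * m) * (x ^ 5) ^ m) * x ^ (j : ℕ) := by
  refine (Nat.sumByResidueClasses (summable_rankDiff hx) 5).trans (sum_congr rfl fun j _ => ?_)
  rw [← tsum_mul_right]
  exact tsum_congr fun m => by rw [pow_add, pow_mul]; ring!

lemma hasSum_rankDiff_two_add_five_mul (hQ0 : Q ≠ 0) (hQ : ‖Q‖ < 1 / 32) :
    HasSum (fun m => (rankDiff (2 + 5 * m) : ℂ) * Q ^ m) 0 := by
  obtain ⟨y, rfl⟩ := IsAlgClosed.exists_pow_nat_eq Q (n := 5) (by norm_num)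
  obtain ⟨s, u, v, h⟩ := exists_isThetaRatio hQ0 hQ
  obtain ⟨c, hc2, hc⟩ := h.exists_rankDiffSeries_eq
  have hy := h.root_ne_zero rfl
  have hcoeff : (fun j : Fin 5 => ∑' m, rankDiff (j + 5 * m) * (y ^ 5) ^ m - c j) = 0 := by
    refine eq_zero_of_forall_sum_mul_pow_eq_zero (Complex.isPrimitiveRoot_exp 5 (by norm_num)) hy
      fun x hx => ?_
    simp only [sub_mul, sum_sub_distrib, ← hc x hx, ← hx, sub_self,
      ← rankDiffSeries_eq_sum (h.norm_root_lt hx)]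
  have hsummable : Summable fun m => (rankDiff (2 + 5 * m) : ℂ) * (y ^ 5) ^ m := by
    refine (summable_mul_right_iff (pow_ne_zero 2 hy)).1 (((summable_rankDiff
      (h.norm_root_lt rfl)).comp_injective (i := fun m => 2 + 5 * m) fun _ _ => by simp).congr
      fun m => ?_)
    simp only [Function.comp_apply, pow_add, pow_mul]
    ring
  have htsum : ∑' m, (rankDiff (2 + 5 * m) : ℂ) * (y ^ 5) ^ m = 0 := by
    simpa [hc2] using congr_fun hcoeff 2
  exact htsum ▸ hsummable.hasSum

theorem rankDiff_two_add_five_mul (m : ℕ) : rankDiff (2 + 5 * m) = 0 := by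
  have hev : ∀ᶠ Q : ℂ in 𝓝[≠] 0, HasSum (fun m => (rankDiff (2 + 5 * m) : ℂ) * Q ^ m) 0 := by
    filter_upwards [self_mem_nhdsWithin,
      nhdsWithin_le_nhds (Metric.ball_mem_nhds 0 (by norm_num : (0 : ℝ) < 1 / 32))] with Q hQ0 hQ
    exact hasSum_rankDiff_two_add_five_mul hQ0 (mem_ball_zero_iff.1 hQ)
  exact Int.cast_eq_zero.1 (congr_fun (eq_zero_of_eventually_hasSum_mul_pow_zero hev) m)

end Overpartition

theorem stmt7 (n : ℕ) (hn : 0 < n) (h5 : n % 5 = 2) :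
    nbar 0 5 n = nbar 2 5 n := by
  have hdiff := Overpartition.nbar_sub_nbar_eq_rankDiff n
  rw [show n = 2 + 5 * (n / 5) by omega, Overpartition.rankDiff_two_add_five_mul] at hdiff
  rw [show n = 2 + 5 * (n / 5) by omega]
  exact_mod_cast sub_eq_zero.1 hdiff
end

section
/- For every integer n ≥ 1: if n is odd then N̄(0,2,n) > N̄(1,2,n), and if n is even then N̄(0,2,n) < N̄(1,2,n). -/
/-!
Weight each overpartition of `n` by the parity of its rank. Sorting by the largest part turns the
difference of the two counts into the coefficient of `q ^ n` in
`∑ (-1) ^ (m + 1) * (T_{m+1} - T_m)`, where `T_m = (q; q)_m / (-q; q)_m`. The `m`-th term is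
`-2 * (q; q)_m ^ 2 * q ^ (m + 1) * β_m` for an explicit Bailey pair `(α, β)` relative to `a = 1`, so
Bailey's lemma replaces the sum by `-2 * ∑ q ^ (r + 1) * α_r / (1 - q ^ (r + 1)) ^ 2`. Expanding it
gives
```
N̄(0,2,n) - N̄(1,2,n) = -2 * (2 * ∑_{d ∣ n} (-1)^d + τ(n) + 2 * ∑_{xy+yz+zx=n; x,y,z>0} (-1)^y).
```
Multiplication by `(-1) ^ n` makes the bracket positive. The divisor part is handled by `d ↦ 2 * d`
from odd to even divisors. The other sum is symmetrized over the three coordinates, since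
`(-1) ^ (xy + yz + zx) * ((-1) ^ x + (-1) ^ y + (-1) ^ z)` is always `1` or `3`.

All identities of power series are truncated: they hold modulo `q ^ (N + 1)` with finite sums, over
any commutative ring in which the elements `1 ± q ^ k` with `k ≥ 1` are units.
-/

section BaileyPairs

open Finset
open scoped Ring

variable {R : Type*} [CommRing R] {q : R}

/-- The finite `q`-Pochhammer symbol `(a; q)_n`. -/
def qPochhammer (a q : R) (n : ℕ) : R :=
  ∏ i ∈ range n, (1 - a * q ^ i)

@[simp]
theorem qPochhammer_zero (a q : R) : qPochhammer a q 0 = 1 := rfl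

theorem qPochhammer_succ (a q : R) (n : ℕ) :
    qPochhammer a q (n + 1) = qPochhammer a q n * (1 - a * q ^ n) :=
  prod_range_succ _ n

theorem qPochhammer_self_succ (q : R) (n : ℕ) :
    qPochhammer q q (n + 1) = qPochhammer q q n * (1 - q ^ (n + 1)) := by
  rw [qPochhammer_succ, pow_succ']

theorem qPochhammer_neg_self_succ (q : R) (n : ℕ) :
    qPochhammer (-q) q (n + 1) = qPochhammer (-q) q n * (1 + q ^ (n + 1)) := by
  rw [qPochhammer_succ, pow_succ', neg_mul, sub_neg_eq_add]

theorem pow_dvd_qPochhammer_self_sub {a b : ℕ} (hab : a ≤ b) :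
    q ^ (a + 1) ∣ qPochhammer q q b - qPochhammer q q a := by
  induction b, hab using Nat.le_induction with
  | base => simp
  | succ b hab ih =>
    have hstep : qPochhammer q q (b + 1) - qPochhammer q q a =
        (qPochhammer q q b - qPochhammer q q a) - qPochhammer q q b * q ^ (b + 1) := by
      rw [qPochhammer_self_succ]
      ring
    rw [hstep]
    exact dvd_sub ih (dvd_mul_of_dvd_right (pow_dvd_pow q (by omega)) _)

theorem isUnit_qPochhammer_self (hq : ∀ k, IsUnit (1 - q ^ (k + 1))) (n : ℕ) :
    IsUnit (qPochhammer q q n) := by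
  induction n with
  | zero => simp
  | succ n ih => exact qPochhammer_self_succ q n ▸ ih.mul (hq n)

theorem isUnit_qPochhammer_neg_self (hq' : ∀ k, IsUnit (1 + q ^ (k + 1))) (n : ℕ) :
    IsUnit (qPochhammer (-q) q n) := by
  induction n with
  | zero => simp
  | succ n ih => exact qPochhammer_neg_self_succ q n ▸ ih.mul (hq' n)

/-- The ratio `(q; q)_m / (-q; q)_m`. With each part weighted by `-1`, it is the generating
function of overpartitions into parts of size at most `m`. -/
noncomputable def qPochhammerRatio (q : R) (m : ℕ) : R :=
  qPochhammer q q m * (qPochhammer (-q) q m)⁻¹ʳ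

/-- The Bailey kernel `1 / ((q)_{m-r} (q)_{m+r})` relative to `a = 1`, with both indices shifted
by one so that they start from `0`. It is meant for `r ≤ m`. -/
noncomputable def baileyKernel (q : R) (m r : ℕ) : R :=
  (qPochhammer q q (m - r))⁻¹ʳ * (qPochhammer q q (m + r + 2))⁻¹ʳ

/-- The second component `β` of the Bailey pair relative to `a = 1` with first component `α`, where
`α` vanishes at the index `0` and both sequences are indexed from `1`. -/
noncomputable def baileyTransform (q : R) (α : ℕ → R) (m : ℕ) : R :=
  ∑ r ∈ range (m + 1), α r * baileyKernel q m r

theorem inverse_qPochhammer_self_eq (hq : ∀ k, IsUnit (1 - q ^ (k + 1))) (n : ℕ) :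
    (qPochhammer q q n)⁻¹ʳ = (1 - q ^ (n + 1)) * (qPochhammer q q (n + 1))⁻¹ʳ := by
  rw [qPochhammer_self_succ, Ring.mul_inverse_rev, ← mul_assoc, Ring.mul_inverse_cancel _ (hq n),
    one_mul]

theorem pow_dvd_qPochhammer_self_mul_inverse_sub_one (hq : ∀ k, IsUnit (1 - q ^ (k + 1)))
    {e a b : ℕ} (ha : e ≤ a) (hb : e ≤ b) :
    q ^ (e + 1) ∣ qPochhammer q q a * (qPochhammer q q b)⁻¹ʳ - 1 := by
  have hab : q ^ (e + 1) ∣ qPochhammer q q a - qPochhammer q q b := by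
    simpa using dvd_sub (pow_dvd_qPochhammer_self_sub (q := q) ha) (pow_dvd_qPochhammer_self_sub hb)
  have hfactor : qPochhammer q q a * (qPochhammer q q b)⁻¹ʳ - 1 =
      (qPochhammer q q a - qPochhammer q q b) * (qPochhammer q q b)⁻¹ʳ := by
    rw [sub_mul, Ring.mul_inverse_cancel _ (isUnit_qPochhammer_self hq b)]
  exact hfactor ▸ hab.mul_right _

theorem baileyKernel_eq_mul_baileyKernel_succ (hq : ∀ k, IsUnit (1 - q ^ (k + 1)))
    {m r : ℕ} (hr : r ≤ m) :
    baileyKernel q m r =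
      (1 - q ^ (m + 1 - r)) * (1 - q ^ (m + r + 3)) * baileyKernel q (m + 1) r := by
  rw [baileyKernel, baileyKernel, inverse_qPochhammer_self_eq hq (m - r),
    inverse_qPochhammer_self_eq hq (m + r + 2), show m + 1 - r = m - r + 1 by omega,
    show m + 1 + r + 2 = m + r + 2 + 1 by omega]
  ring

theorem baileyKernel_succ_right (hq : ∀ k, IsUnit (1 - q ^ (k + 1))) {m r : ℕ} (hr : r < m) :
    (1 - q ^ (m + r + 3)) * baileyKernel q m (r + 1) = (1 - q ^ (m - r)) * baileyKernel q m r := by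
  rw [baileyKernel, baileyKernel, inverse_qPochhammer_self_eq hq (m - (r + 1)),
    inverse_qPochhammer_self_eq hq (m + r + 2), show m - (r + 1) + 1 = m - r by omega,
    show m + (r + 1) + 2 = m + r + 2 + 1 by omega]
  ring

theorem pow_dvd_qPochhammer_sq_mul_baileyKernel_sub_one (hq : ∀ k, IsUnit (1 - q ^ (k + 1)))
    {N r : ℕ} (hr : r ≤ N) :
    q ^ (N - r + 1) ∣ qPochhammer q q (N + 1) ^ 2 * baileyKernel q N r - 1 := by
  have h₁ := pow_dvd_qPochhammer_self_mul_inverse_sub_one hq (e := N - r) (a := N + 1)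
    (b := N - r) (by omega) le_rfl
  have h₂ := pow_dvd_qPochhammer_self_mul_inverse_sub_one hq (e := N - r) (a := N + 1)
    (b := N + r + 2) (by omega) (by omega)
  convert dvd_add (h₁.mul_right (qPochhammer q q (N + 1) * (qPochhammer q q (N + r + 2))⁻¹ʳ)) h₂
    using 1
  rw [baileyKernel]
  ring

/-- The finite form of the limit of Bailey's lemma in which both parameters tend to `1`. -/
theorem sum_qPochhammer_sq_mul_baileyTransform (hq : ∀ k, IsUnit (1 - q ^ (k + 1)))
    (α : ℕ → R) (N : ℕ) :
    ∑ m ∈ range (N + 1), qPochhammer q q m ^ 2 * q ^ (m + 1) * baileyTransform q α m =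
      ∑ r ∈ range (N + 1), q ^ (r + 1) * α r * (1 - q ^ (r + 1))⁻¹ʳ ^ 2 *
        (qPochhammer q q (N + 1) ^ 2 * baileyKernel q N r) := by
  have hinv (k : ℕ) : (1 - q ^ (k + 1))⁻¹ʳ ^ 2 * (1 - q ^ (k + 1)) ^ 2 = 1 := by
    rw [← mul_pow, Ring.inverse_mul_cancel _ (hq k), one_pow]
  induction N with
  | zero =>
    simp only [zero_add, sum_range_one, baileyTransform, qPochhammer_self_succ, qPochhammer_zero]
    linear_combination -q ^ 1 * α 0 * baileyKernel q 0 0 * hinv 0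
  | succ N ih =>
    have hterm : ∀ r ∈ range (N + 1),
        q ^ (r + 1) * α r * (1 - q ^ (r + 1))⁻¹ʳ ^ 2 *
            (qPochhammer q q (N + 2) ^ 2 * baileyKernel q (N + 1) r) =
          q ^ (r + 1) * α r * (1 - q ^ (r + 1))⁻¹ʳ ^ 2 *
            (qPochhammer q q (N + 1) ^ 2 * baileyKernel q N r) +
          qPochhammer q q (N + 1) ^ 2 * q ^ (N + 2) * (α r * baileyKernel q (N + 1) r) := by
      intro r hr
      obtain ⟨i, rfl⟩ := Nat.exists_eq_add_of_le (mem_range_succ_iff.1 hr)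
      rw [baileyKernel_eq_mul_baileyKernel_succ hq (mem_range_succ_iff.1 hr),
        qPochhammer_self_succ q (r + i + 1), show r + i + 1 - r = i + 1 by omega]
      linear_combination q ^ (r + i + 2) * α r * qPochhammer q q (r + i + 1) ^ 2 *
        baileyKernel q (r + i + 1) r * hinv r
    rw [sum_range_succ, ih, sum_range_succ _ (N + 1), sum_congr rfl hterm, sum_add_distrib,
      ← mul_sum, baileyTransform, sum_range_succ _ (N + 1), qPochhammer_self_succ q (N + 1)]
    linear_combination -q ^ (N + 2) * α (N + 1) * qPochhammer q q (N + 1) ^ 2 *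
      baileyKernel q (N + 1) (N + 1) * hinv (N + 1)

/-- The sequence `g` whose consecutive differences `g r - g (r + 1)` form the first component of the
Bailey pair whose second component is `β_m = (-1)^(m+1) / ((q)_m (-q)_{m+1})`. -/
def rankPotential (q : R) : ℕ → R
  | 0 => 0
  | r + 1 => q ^ (2 * r + 2) * rankPotential q r + (-1) ^ r * (1 - q ^ (r + 1)) ^ 2

/-- The first component of the Bailey pair attached to the parity of the overpartition rank. -/
def rankAlpha (q : R) (r : ℕ) : R :=
  rankPotential q r - rankPotential q (r + 1)

theorem rankPotential_succ (q : R) (r : ℕ) :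
    rankPotential q (r + 1) = q ^ (2 * r + 2) * rankPotential q r +
      (-1) ^ r * (1 - q ^ (r + 1)) ^ 2 := rfl

/-- The right side is a certificate found by creative telescoping in `m`; at `r = m + 1` it gives
the recurrence of the Bailey transform. -/
theorem sum_range_rankAlpha_mul_baileyKernel (hq : ∀ k, IsUnit (1 - q ^ (k + 1)))
    {m r : ℕ} (hr : r ≤ m + 1) :
    ∑ s ∈ range r, rankAlpha q s * ((1 - q ^ (m + 1)) * (1 + q ^ (m + 2)) *
        baileyKernel q (m + 1) s + baileyKernel q m s) =
      (1 - q ^ (m + r + 3)) * baileyKernel q (m + 1) r *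
        ((q ^ (m + 1 - r) - 2 - q ^ (m + 2) + q ^ (m + 1) + q ^ (m + r + 2)) * rankPotential q r +
          (-1) ^ r * q ^ (m + 1 - r) * (1 - q ^ (r + 1)) * (1 - q ^ r)) := by
  induction r with
  | zero => simp [rankPotential]
  | succ r ih =>
    obtain ⟨i, rfl⟩ := Nat.exists_eq_add_of_le (Nat.le_of_succ_le_succ hr)
    have hsucc := baileyKernel_succ_right hq (m := r + i + 1) (r := r) (by omega)
    rw [show r + i + 1 + r + 3 = r + i + (r + 1) + 3 by omega] at hsucc
    rw [sum_range_succ, ih (by omega), hsucc, baileyKernel_eq_mul_baileyKernel_succ hq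
      (Nat.le_add_right r i), rankAlpha, rankPotential_succ,
      show r + i + 1 - (r + 1) = i by omega, show r + i + 1 - r = i + 1 by omega]
    ring

theorem baileyTransform_rankAlpha_succ (hq : ∀ k, IsUnit (1 - q ^ (k + 1))) (m : ℕ) :
    (1 - q ^ (m + 1)) * (1 + q ^ (m + 2)) * baileyTransform q (rankAlpha q) (m + 1) =
      -baileyTransform q (rankAlpha q) m := by
  have htele := sum_range_rankAlpha_mul_baileyKernel hq (le_refl (m + 1))
  simp only [mul_add, sum_add_distrib, mul_left_comm (rankAlpha q _), ← mul_sum] at htele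
  rw [baileyTransform, sum_range_succ, baileyTransform, rankAlpha, rankPotential_succ q (m + 1)]
  rw [Nat.sub_self] at htele
  linear_combination htele

theorem qPochhammer_mul_baileyTransform_rankAlpha (hq : ∀ k, IsUnit (1 - q ^ (k + 1)))
    (m : ℕ) :
    qPochhammer q q m * qPochhammer (-q) q (m + 1) * baileyTransform q (rankAlpha q) m =
      (-1) ^ (m + 1) := by
  induction m with
  | zero =>
    have hcancel := Ring.mul_inverse_cancel _ (isUnit_qPochhammer_self hq 2)
    simp only [qPochhammer_self_succ, qPochhammer_zero, zero_add, one_mul] at hcancel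
    simp only [baileyTransform, baileyKernel, rankAlpha, rankPotential, qPochhammer_self_succ,
      qPochhammer_neg_self_succ, qPochhammer_zero, zero_add, sum_range_one, Nat.sub_self,
      Ring.inverse_one, one_mul]
    linear_combination -hcancel
  | succ m ih =>
    rw [qPochhammer_self_succ, qPochhammer_neg_self_succ]
    linear_combination qPochhammer q q m * qPochhammer (-q) q (m + 1) *
      baileyTransform_rankAlpha_succ hq m - ih

theorem neg_one_pow_mul_qPochhammerRatio_sub (hq : ∀ k, IsUnit (1 - q ^ (k + 1)))
    (hq' : ∀ k, IsUnit (1 + q ^ (k + 1))) (m : ℕ) :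
    (-1) ^ (m + 1) * (qPochhammerRatio q (m + 1) - qPochhammerRatio q m) =
      -2 * (qPochhammer q q m ^ 2 * q ^ (m + 1) * baileyTransform q (rankAlpha q) m) := by
  have hunit := isUnit_qPochhammer_neg_self hq'
  have hratio (k : ℕ) : qPochhammer (-q) q k * qPochhammerRatio q k = qPochhammer q q k := by
    rw [qPochhammerRatio, mul_left_comm, Ring.mul_inverse_cancel _ (hunit k), mul_one]
  have hsucc := hratio (m + 1)
  rw [qPochhammer_self_succ] at hsucc
  refine (hunit (m + 1)).mul_left_cancel ?_
  linear_combination (-1) ^ (m + 1) * hsucc - (-1) ^ (m + 1) * (1 + q ^ (m + 1)) * hratio m -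
    (-1) ^ (m + 1) * qPochhammerRatio q m * qPochhammer_neg_self_succ q m +
    2 * qPochhammer q q m * q ^ (m + 1) * qPochhammer_mul_baileyTransform_rankAlpha hq m

/-- The summand of the Lambert-type series for the difference of even-rank and odd-rank
overpartitions. -/
noncomputable def rankLambertTerm (q : R) (r : ℕ) : R :=
  q ^ (r + 1) * rankAlpha q r * (1 - q ^ (r + 1))⁻¹ʳ ^ 2

theorem pow_dvd_sum_qPochhammerRatio_add_sum_rankLambertTerm (hq : ∀ k, IsUnit (1 - q ^ (k + 1)))
    (hq' : ∀ k, IsUnit (1 + q ^ (k + 1))) (N : ℕ) :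
    q ^ (N + 1) ∣ ∑ m ∈ range N,
        (-1) ^ (m + 1) * (qPochhammerRatio q (m + 1) - qPochhammerRatio q m) +
      2 * ∑ r ∈ range N, rankLambertTerm q r := by
  rcases N with _ | N
  · simp
  have hsum : ∑ m ∈ range (N + 1),
        (-1) ^ (m + 1) * (qPochhammerRatio q (m + 1) - qPochhammerRatio q m) +
      2 * ∑ r ∈ range (N + 1), rankLambertTerm q r =
      -2 * ∑ r ∈ range (N + 1), rankLambertTerm q r *
        (qPochhammer q q (N + 1) ^ 2 * baileyKernel q N r - 1) := by
    simp only [neg_one_pow_mul_qPochhammerRatio_sub hq hq', ← mul_sum, mul_sub, sum_sub_distrib,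
      sum_qPochhammer_sq_mul_baileyTransform hq, rankLambertTerm, mul_one]
    ring
  rw [hsum]
  refine dvd_mul_of_dvd_right (dvd_sum fun r hr => ?_) _
  have hr := mem_range_succ_iff.1 hr
  rw [show N + 1 + 1 = r + 1 + (N - r + 1) by omega, pow_add]
  refine mul_dvd_mul ?_ (pow_dvd_qPochhammer_sq_mul_baileyKernel_sub_one hq hr)
  exact ⟨rankAlpha q r * (1 - q ^ (r + 1))⁻¹ʳ ^ 2, by rw [rankLambertTerm, mul_assoc]⟩

end BaileyPairs

section IndefiniteTheta

open Finset
open scoped Ring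

variable {R : Type*} [CommRing R]

/-- The coefficients of the theta function `∑ b : ℤ, (-1) ^ b * q ^ (b ^ 2)`, with the terms `b` and
`-b` collected. -/
def thetaCoeff (b : ℕ) : ℤ :=
  if b = 0 then 1 else 2 * (-1) ^ b

/-- The terms of total degree `a + b = r` of the indefinite theta series
`∑ thetaCoeff b * q ^ ((a + 1) ^ 2 + 2 * (a + 1) * b)`. -/
def indefiniteTheta (q : R) (r : ℕ) : R :=
  ∑ p ∈ antidiagonal r, thetaCoeff p.2 • q ^ ((p.1 + 1) * (p.1 + 1 + 2 * p.2))

theorem indefiniteTheta_succ (q : R) (r : ℕ) :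
    indefiniteTheta q (r + 1) =
      q ^ (2 * r + 3) * indefiniteTheta q r + 2 * (-1) ^ (r + 1) * q ^ (2 * r + 3) := by
  have hhead : thetaCoeff (r + 1) • q ^ ((0 + 1) * (0 + 1 + 2 * (r + 1))) =
      2 * (-1) ^ (r + 1) * q ^ (2 * r + 3) := by
    simp only [thetaCoeff, r.succ_ne_zero, if_false, zsmul_eq_mul]
    push_cast
    ring
  rw [indefiniteTheta, Nat.sum_antidiagonal_succ, hhead, add_comm, indefiniteTheta, mul_sum]
  congr 1
  refine sum_congr rfl fun p hp => ?_
  rw [mul_smul_comm, ← mem_antidiagonal.1 hp, ← pow_add]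
  congr 2
  ring

theorem pow_mul_rankPotential (q : R) (r : ℕ) :
    q ^ (r + 1) * rankPotential q r = indefiniteTheta q r - (-1) ^ r * q ^ (r + 1) := by
  induction r with
  | zero => simp [rankPotential, indefiniteTheta, thetaCoeff]
  | succ r ih =>
    rw [rankPotential_succ, indefiniteTheta_succ]
    linear_combination q ^ (2 * r + 3) * ih

theorem rankLambertTerm_eq {q : R} {r : ℕ} (hq : IsUnit (1 - q ^ (r + 1))) :
    rankLambertTerm q r = (1 + q ^ (r + 1)) * (1 - q ^ (r + 1))⁻¹ʳ * indefiniteTheta q r +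
      2 * ((-1) ^ (r + 1) * (q ^ (r + 1) * (1 - q ^ (r + 1))⁻¹ʳ)) := by
  have hinv := Ring.mul_inverse_cancel _ hq
  rw [rankLambertTerm, rankAlpha, rankPotential_succ]
  generalize (1 - q ^ (r + 1))⁻¹ʳ = u at hinv ⊢
  linear_combination ((1 + q ^ (r + 1)) * u * (q ^ (r + 1) * rankPotential q r) -
      (-1) ^ r * q ^ (r + 1) * ((1 - q ^ (r + 1)) * u)) * hinv +
    (1 + q ^ (r + 1)) * u * pow_mul_rankPotential q r

end IndefiniteTheta

section Triples

open Finset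

/-- The solutions of `x * y + y * z + z * x = n` in natural numbers with `x` and `z` positive. -/
def pairSumTriples (n : ℕ) : Finset (ℕ × ℕ × ℕ) :=
  {t ∈ range (n + 1) ×ˢ range (n + 1) ×ˢ range (n + 1) |
    0 < t.1 ∧ 0 < t.2.2 ∧ t.1 * t.2.1 + t.2.1 * t.2.2 + t.2.2 * t.1 = n}

variable {M : Type*} [AddCommMonoid M] {n : ℕ}

theorem mem_pairSumTriples {x y z : ℕ} :
    (x, y, z) ∈ pairSumTriples n ↔ 0 < x ∧ 0 < z ∧ x * y + y * z + z * x = n := by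
  simp only [pairSumTriples, mem_filter, mem_product, mem_range, and_iff_right_iff_imp]
  rintro ⟨hx, hz, h⟩
  have h₁ := Nat.le_mul_of_pos_left x hz
  have h₂ := Nat.le_mul_of_pos_left y hx
  have h₃ := Nat.le_mul_of_pos_right z hx
  omega

theorem sum_pairSumTriples_swap (f : ℕ × ℕ × ℕ → M) :
    ∑ t ∈ pairSumTriples n, f (t.2.2, t.2.1, t.1) = ∑ t ∈ pairSumTriples n, f t := by
  refine sum_nbij' (fun t => (t.2.2, t.2.1, t.1)) (fun t => (t.2.2, t.2.1, t.1)) ?_ ?_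
    (fun _ _ => rfl) (fun _ _ => rfl) (fun _ _ => rfl)
  all_goals
    rintro ⟨x, y, z⟩ h
    rw [mem_pairSumTriples] at h ⊢
    exact ⟨h.2.1, h.1, by linarith [h.2.2]⟩

/-- The substitution is `x = p.1 + 1`, `y = p.2`, `z = x + k + s`. -/
theorem sum_antidiagonal_eq_sum_pairSumTriples (f : ℕ → M) (s : ℕ) :
    ∑ r ∈ range n, ∑ p ∈ antidiagonal r, ∑ k ∈ range (n + 1),
        (if (p.1 + 1) * (p.1 + 1 + 2 * p.2) + (r + 1) * (k + s) = n then f p.2 else 0) =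
      ∑ t ∈ pairSumTriples n, if t.1 + s ≤ t.2.2 then f t.2.1 else 0 := by
  simp only [sum_sigma', ← sum_filter]
  refine sum_nbij' (fun v => (v.2.1.1 + 1, v.2.1.2, v.2.1.1 + 1 + v.2.2 + s))
    (fun t => ⟨t.1 + t.2.1 - 1, (t.1 - 1, t.2.1), t.2.2 - t.1 - s⟩) ?_ ?_ ?_ ?_ (fun _ _ => rfl)
  · rintro ⟨r, ⟨a, b⟩, k⟩ h
    simp only [mem_filter, mem_sigma, HasAntidiagonal.mem_antidiagonal] at h
    obtain ⟨-, rfl, -, h⟩ := h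
    refine mem_filter.2 ⟨mem_pairSumTriples.2 ⟨a.succ_pos, by omega, ?_⟩, by simp only; omega⟩
    linear_combination h
  · rintro ⟨x, y, z⟩ h
    simp only [mem_filter, mem_pairSumTriples] at h
    obtain ⟨⟨hx, hz, h⟩, hxz⟩ := h
    have hx' := Nat.le_mul_of_pos_left x hz
    have hy := Nat.le_mul_of_pos_right y hz
    have hz' := Nat.le_mul_of_pos_right z hx
    have hr : x + y - 1 + 1 = x + y := by omega
    have hk : z - x - s + s = z - x := by omega
    simp only [mem_filter, mem_sigma, HasAntidiagonal.mem_antidiagonal, mem_range, hr, hk,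
      Nat.sub_add_cancel hx]
    refine ⟨by omega, by omega, by omega, ?_⟩
    zify [show x ≤ z by omega] at h ⊢
    linear_combination h
  · rintro ⟨r, ⟨a, b⟩, k⟩ h
    simp only [mem_filter, mem_sigma, HasAntidiagonal.mem_antidiagonal] at h
    obtain ⟨-, rfl, -⟩ := h
    simp only [Nat.add_sub_cancel, Sigma.mk.injEq, heq_eq_eq, true_and]
    omega
  · rintro ⟨x, y, z⟩ h
    simp only [mem_filter, mem_pairSumTriples] at h
    simp only [Prod.mk.injEq, true_and]
    omega

/-- The sums over `x ≤ z` and over `x < z` add up to the full sum because the set of triples is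
invariant under exchanging `x` and `z`. -/
theorem sum_pairSumTriples_le_add_lt (f : ℕ → M) :
    ∑ t ∈ pairSumTriples n, (if t.1 ≤ t.2.2 then f t.2.1 else 0) +
      ∑ t ∈ pairSumTriples n, (if t.1 < t.2.2 then f t.2.1 else 0) =
      ∑ t ∈ pairSumTriples n, f t.2.1 := by
  rw [← sum_pairSumTriples_swap fun t => if t.1 < t.2.2 then f t.2.1 else 0, ← sum_add_distrib]
  refine sum_congr rfl fun t _ => ?_
  rcases le_or_gt t.1 t.2.2 with h | h
  · rw [if_pos h, if_neg h.not_gt, add_zero]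
  · rw [if_neg h.not_ge, if_pos h, zero_add]

theorem sum_thetaCoeff_pairSumTriples (hn : n ≠ 0) :
    ∑ t ∈ pairSumTriples n, thetaCoeff t.2.1 =
      #n.divisors + 2 * ∑ t ∈ pairSumTriples n with 0 < t.2.1, (-1) ^ t.2.1 := by
  have hzero : #{t ∈ pairSumTriples n | ¬0 < t.2.1} = #n.divisors := by
    refine card_nbij' (fun t => t.1) (fun d => (d, 0, n / d)) ?_ ?_ ?_ (fun _ _ => rfl)
    · rintro ⟨x, y, z⟩ h
      simp only [coe_filter, Set.mem_ofPred_eq, mem_pairSumTriples, not_lt, nonpos_iff_eq_zero] at h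
      obtain ⟨⟨-, -, h⟩, rfl⟩ := h
      exact Nat.mem_divisors.2 ⟨⟨z, by linarith⟩, hn⟩
    · intro d hd
      have hdvd := Nat.dvd_of_mem_divisors hd
      refine mem_filter.2 ⟨mem_pairSumTriples.2 ⟨Nat.pos_of_mem_divisors hd,
        Nat.div_pos (Nat.divisor_le hd) (Nat.pos_of_mem_divisors hd), ?_⟩, lt_irrefl 0⟩
      simpa using Nat.div_mul_cancel hdvd
    · rintro ⟨x, y, z⟩ h
      simp only [coe_filter, Set.mem_ofPred_eq, mem_pairSumTriples, not_lt, nonpos_iff_eq_zero] at h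
      obtain ⟨⟨hx, -, h⟩, rfl⟩ := h
      simp [← h, Nat.mul_div_cancel z hx]
  rw [← sum_filter_add_sum_filter_not _ fun t => 0 < t.2.1, add_comm, mul_sum]
  congr 1
  · rw [← hzero, card_eq_sum_ones, Nat.cast_sum]
    refine sum_congr rfl fun t ht => ?_
    rw [thetaCoeff, if_pos (Nat.eq_zero_of_not_pos (mem_filter.1 ht).2), Nat.cast_one]
  · refine sum_congr rfl fun t ht => ?_
    rw [thetaCoeff, if_neg (mem_filter.1 ht).2.ne']

end Triples

section Coefficients

open Finset PowerSeries
open scoped Ring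

variable {R : Type*} [CommRing R]

theorem isUnit_one_sub_X_pow (k : ℕ) : IsUnit (1 - X ^ (k + 1) : R⟦X⟧) := by
  simp [PowerSeries.isUnit_iff_constantCoeff]

theorem isUnit_one_add_X_pow (k : ℕ) : IsUnit (1 + X ^ (k + 1) : R⟦X⟧) := by
  simp [PowerSeries.isUnit_iff_constantCoeff]

theorem coeff_X_pow_mul_inverse_one_sub_X_pow (n e r : ℕ) :
    coeff n (X ^ e * (1 - X ^ (r + 1))⁻¹ʳ : R⟦X⟧) =
      ∑ k ∈ range (n + 1), if e + (r + 1) * k = n then 1 else 0 := by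
  have hgeom : (X ^ e * (1 - X ^ (r + 1))⁻¹ʳ : R⟦X⟧) =
      ∑ k ∈ range (n + 1), X ^ (e + (r + 1) * k) +
        X ^ (n + 1) * (X ^ (e + r * (n + 1)) * (1 - X ^ (r + 1))⁻¹ʳ) := by
    have hinv := Ring.mul_inverse_cancel _ (isUnit_one_sub_X_pow (R := R) r)
    have hsum := mul_neg_geom_sum (X ^ (r + 1) : R⟦X⟧) (n + 1)
    simp only [pow_add X e, ← mul_sum, pow_mul X (r + 1)]
    linear_combination X ^ e * (∑ k ∈ range (n + 1), (X ^ (r + 1)) ^ k) * hinv -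
      X ^ e * (1 - X ^ (r + 1))⁻¹ʳ * hsum
  rw [hgeom, map_add, coeff_X_pow_mul', if_neg (by omega), add_zero, map_sum]
  simp only [coeff_X_pow, eq_comm]

theorem coeff_sum_indefiniteTheta (n : ℕ) :
    coeff n (∑ r ∈ range n,
      (1 + X ^ (r + 1)) * (1 - X ^ (r + 1))⁻¹ʳ * indefiniteTheta (X : ℤ⟦X⟧) r) =
      ∑ t ∈ pairSumTriples n, thetaCoeff t.2.1 := by
  have hcoeff (r s : ℕ) :
      coeff n ((X ^ (r + 1)) ^ s * (1 - X ^ (r + 1))⁻¹ʳ * indefiniteTheta (X : ℤ⟦X⟧) r) =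
        ∑ p ∈ antidiagonal r, ∑ k ∈ range (n + 1),
          if (p.1 + 1) * (p.1 + 1 + 2 * p.2) + (r + 1) * (k + s) = n
            then thetaCoeff p.2 else 0 := by
    rw [indefiniteTheta, mul_sum, map_sum]
    refine sum_congr rfl fun p _ => ?_
    rw [mul_smul_comm, map_zsmul, ← pow_mul, mul_right_comm, ← pow_add,
      coeff_X_pow_mul_inverse_one_sub_X_pow, smul_sum]
    refine sum_congr rfl fun k _ => ?_
    rw [smul_ite, smul_zero, smul_eq_mul, mul_one]
    congr 2
    ring
  have hsplit (r : ℕ) : (1 + X ^ (r + 1)) * (1 - X ^ (r + 1))⁻¹ʳ * indefiniteTheta (X : ℤ⟦X⟧) r =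
      (X ^ (r + 1)) ^ 0 * (1 - X ^ (r + 1))⁻¹ʳ * indefiniteTheta X r +
        (X ^ (r + 1)) ^ 1 * (1 - X ^ (r + 1))⁻¹ʳ * indefiniteTheta X r := by
    ring
  simp only [hsplit, sum_add_distrib, map_add, map_sum, hcoeff]
  rw [sum_antidiagonal_eq_sum_pairSumTriples, sum_antidiagonal_eq_sum_pairSumTriples,
    ← sum_pairSumTriples_le_add_lt]
  simp only [add_zero, Nat.add_one_le_iff]

theorem coeff_sum_smul_X_pow_mul_inverse (n : ℕ) (f : ℕ → ℤ) :
    coeff n (∑ r ∈ range n, f (r + 1) • (X ^ (r + 1) * (1 - X ^ (r + 1))⁻¹ʳ : ℤ⟦X⟧)) =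
      ∑ d ∈ n.divisors, f d := by
  rw [Nat.divisors, sum_filter, sum_Ico_eq_sum_range, Nat.add_sub_cancel, map_sum]
  refine sum_congr rfl fun r hr => ?_
  rw [map_zsmul, coeff_X_pow_mul_inverse_one_sub_X_pow, smul_eq_mul, add_comm 1 r]
  split_ifs with hdvd
  · obtain ⟨c, rfl⟩ := hdvd
    have hc : c ≠ 0 := by
      rintro rfl
      simp at hr
    have hiff (k : ℕ) : r + 1 + (r + 1) * k = (r + 1) * c ↔ c - 1 = k := by
      rw [← mul_one_add, mul_right_inj' r.succ_ne_zero]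
      omega
    have hle := Nat.le_mul_of_pos_left c (Nat.add_pos_right r one_pos)
    simp only [hiff]
    rw [sum_ite_eq, if_pos (mem_range.2 (by omega)), mul_one]
  · rw [sum_eq_zero, mul_zero]
    exact fun k _ => if_neg fun h => hdvd ⟨1 + k, by rw [← h, mul_one_add]⟩

theorem coeff_sum_rankLambertTerm {n : ℕ} (hn : n ≠ 0) :
    coeff n (∑ r ∈ range n, rankLambertTerm (X : ℤ⟦X⟧) r) =
      2 * ∑ d ∈ n.divisors, (-1) ^ d + #n.divisors +
        2 * ∑ t ∈ pairSumTriples n with 0 < t.2.1, (-1) ^ t.2.1 := by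
  have hsmul (r : ℕ) : 2 * ((-1) ^ (r + 1) * (X ^ (r + 1) * (1 - X ^ (r + 1))⁻¹ʳ) : ℤ⟦X⟧) =
      (2 * (-1) ^ (r + 1) : ℤ) • (X ^ (r + 1) * (1 - X ^ (r + 1))⁻¹ʳ) := by
    rw [zsmul_eq_mul]
    push_cast
    ring
  simp only [rankLambertTerm_eq (isUnit_one_sub_X_pow (R := ℤ) _), sum_add_distrib, map_add, hsmul]
  rw [coeff_sum_indefiniteTheta, coeff_sum_smul_X_pow_mul_inverse n fun d => 2 * (-1) ^ d,
    sum_thetaCoeff_pairSumTriples hn, ← mul_sum]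
  ring

end Coefficients

section Positivity

open Finset

theorem neg_one_pow_mul_sum_neg_one_pow_nonneg (x y z : ℕ) :
    0 ≤ (-1 : ℤ) ^ (x * y + y * z + z * x) * ((-1) ^ x + (-1) ^ y + (-1) ^ z) := by
  rcases Nat.even_or_odd x with hx | hx <;> rcases Nat.even_or_odd y with hy | hy <;>
    rcases Nat.even_or_odd z with hz | hz <;>
    simp [pow_add, pow_mul, hx.neg_one_pow, hy.neg_one_pow, hz.neg_one_pow]

theorem sum_pairSumTriples_pos_swap {M : Type*} [AddCommMonoid M] (n : ℕ) (f : ℕ → M) :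
    ∑ t ∈ pairSumTriples n with 0 < t.2.1, f t.1 =
      ∑ t ∈ pairSumTriples n with 0 < t.2.1, f t.2.1 := by
  refine sum_nbij' (fun t => (t.2.1, t.1, t.2.2)) (fun t => (t.2.1, t.1, t.2.2)) ?_ ?_
    (fun _ _ => rfl) (fun _ _ => rfl) (fun _ _ => rfl)
  all_goals
    rintro ⟨x, y, z⟩ h
    simp only [mem_filter, mem_pairSumTriples] at h ⊢
    exact ⟨⟨h.2, h.1.2.1, by linarith [h.1.2.2]⟩, h.1.1⟩

theorem neg_one_pow_mul_sum_pairSumTriples_nonneg (n : ℕ) :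
    0 ≤ (-1 : ℤ) ^ n * ∑ t ∈ pairSumTriples n with 0 < t.2.1, (-1) ^ t.2.1 := by
  have hx := sum_pairSumTriples_pos_swap n fun m => (-1 : ℤ) ^ m
  have hz : ∑ t ∈ pairSumTriples n with 0 < t.2.1, (-1 : ℤ) ^ t.2.2 =
      ∑ t ∈ pairSumTriples n with 0 < t.2.1, (-1) ^ t.1 := by
    simpa only [sum_filter] using
      sum_pairSumTriples_swap fun t => if 0 < t.2.1 then (-1 : ℤ) ^ t.1 else 0
  have hsum : 0 ≤ ∑ t ∈ pairSumTriples n with 0 < t.2.1,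
      (-1 : ℤ) ^ n * ((-1) ^ t.1 + (-1) ^ t.2.1 + (-1) ^ t.2.2) := by
    refine sum_nonneg fun t ht => ?_
    rw [← (mem_pairSumTriples.1 (mem_filter.1 ht).1).2.2]
    exact neg_one_pow_mul_sum_neg_one_pow_nonneg _ _ _
  rw [← mul_sum, sum_add_distrib, sum_add_distrib, hz, hx] at hsum
  linarith

theorem card_odd_divisors_le_card_even_divisors {n : ℕ} (hn : Even n) :
    #{d ∈ n.divisors | Odd d} ≤ #{d ∈ n.divisors | Even d} := by
  refine card_le_card_of_injOn (fun d => 2 * d) (fun d hd => ?_) fun _ _ _ _ h => by simpa using h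
  obtain ⟨hd, hodd⟩ := mem_filter.1 hd
  obtain ⟨hdvd, hn0⟩ := Nat.mem_divisors.1 hd
  refine mem_filter.2 ⟨Nat.mem_divisors.2 ⟨?_, hn0⟩, even_two_mul d⟩
  exact (Nat.coprime_two_left.2 hodd).mul_dvd_of_dvd_of_dvd hn.two_dvd hdvd

theorem neg_one_pow_mul_sum_divisors_pos {n : ℕ} (hn : n ≠ 0) :
    0 < (-1 : ℤ) ^ n * (2 * ∑ d ∈ n.divisors, (-1) ^ d + #n.divisors) := by
  have hpos : 0 < #n.divisors := card_pos.2 (Nat.nonempty_divisors.2 hn)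
  rcases Nat.even_or_odd n with heven | hodd
  · have hsum : ∑ d ∈ n.divisors, (-1 : ℤ) ^ d =
        #{d ∈ n.divisors | Even d} - #{d ∈ n.divisors | Odd d} := by
      simp only [← sum_filter_add_sum_filter_not n.divisors (fun d => Even d), Nat.not_even_iff_odd]
      have hpow_even : ∀ d ∈ {d ∈ n.divisors | Even d}, (-1 : ℤ) ^ d = 1 :=
        fun d hd => (mem_filter.1 hd).2.neg_one_pow
      have hpow_odd : ∀ d ∈ {d ∈ n.divisors | Odd d}, (-1 : ℤ) ^ d = -1 :=
        fun d hd => (mem_filter.1 hd).2.neg_one_pow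
      simp [sum_congr rfl hpow_even, sum_congr rfl hpow_odd, sub_eq_add_neg]
    have hcard := card_filter_add_card_filter_not (s := n.divisors) fun d => Even d
    simp only [Nat.not_even_iff_odd] at hcard
    have hle := card_odd_divisors_le_card_even_divisors heven
    rw [heven.neg_one_pow, one_mul, hsum]
    omega
  · have hsum : ∑ d ∈ n.divisors, (-1 : ℤ) ^ d = -#n.divisors := by
      have hneg : ∀ d ∈ n.divisors, (-1 : ℤ) ^ d = -1 := fun d hd =>
        (hodd.of_dvd_nat (Nat.dvd_of_mem_divisors hd)).neg_one_pow
      simp [sum_congr rfl hneg]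
    rw [hodd.neg_one_pow, hsum]
    omega

end Positivity

section Overpartitions

open Finset PowerSeries
open scoped Ring PowerSeries.WithPiTopology

theorem nbar_eq_sum (a : ℤ) (c n : ℕ) :
    nbar a c n = ∑ p : n.Partition,
      if (p.parts.sup : ℤ) - p.parts.card ≡ a [ZMOD c] then 2 ^ #p.parts.toFinset else 0 := by
  have e : {P : Overpartition n // P.rank ≡ a [ZMOD c]} ≃
      Σ p : {p : n.Partition // (p.parts.sup : ℤ) - p.parts.card ≡ a [ZMOD c]},
        {s : Finset ℕ // s ∈ p.1.parts.toFinset.powerset} :=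
    { toFun := fun P => ⟨⟨P.1.1.1, P.2⟩, ⟨P.1.1.2, mem_powerset.2 P.1.2⟩⟩
      invFun := fun x => ⟨⟨(x.1.1, x.2.1), mem_powerset.1 x.2.2⟩, x.1.2⟩
      left_inv := fun _ => rfl
      right_inv := fun _ => rfl }
  rw [nbar, Nat.card_congr e, Nat.card_eq_fintype_card, Fintype.card_sigma, ← sum_filter]
  simp only [Fintype.card_coe, card_powerset]
  exact (sum_subtype _ (by simp) fun p : n.Partition => 2 ^ #p.parts.toFinset).symm

theorem nbar_zero_two_sub_nbar_one_two (n : ℕ) :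
    (nbar 0 2 n : ℤ) - nbar 1 2 n =
      ∑ p : n.Partition, 2 ^ #p.parts.toFinset * (-1) ^ (p.parts.sup + p.parts.card) := by
  rw [nbar_eq_sum, nbar_eq_sum]
  push_cast
  rw [← sum_sub_distrib]
  refine sum_congr rfl fun p _ => ?_
  rcases Nat.even_or_odd (p.parts.sup + p.parts.card) with h | h
  · have hsum := Nat.even_iff.1 h
    rw [h.neg_one_pow, if_pos (by unfold Int.ModEq; omega), if_neg (by unfold Int.ModEq; omega),
      sub_zero, mul_one]
  · have hsum := Nat.odd_iff.1 h
    rw [h.neg_one_pow, if_neg (by unfold Int.ModEq; omega), if_pos (by unfold Int.ModEq; omega),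
      zero_sub, mul_neg_one]

theorem one_add_X_pow_mul_one_add_tsum (i : ℕ) :
    (1 + X ^ (i + 1)) *
        (1 + ∑' j : ℕ, (2 * (-1 : ℤ) ^ (j + 1)) • (X : ℤ⟦X⟧) ^ ((i + 1) * (j + 1))) =
      1 - X ^ (i + 1) := by
  have hsummable :
      Summable fun j : ℕ => (2 * (-1 : ℤ) ^ (j + 1)) • (X : ℤ⟦X⟧) ^ ((i + 1) * (j + 1)) :=
    Nat.Partition.summable_genFun_term (fun _ j => 2 * (-1 : ℤ) ^ j) i
  have hshift (j : ℕ) : (2 * (-1 : ℤ) ^ (j + 1 + 1)) • (X : ℤ⟦X⟧) ^ ((i + 1) * (j + 1 + 1)) =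
      -X ^ (i + 1) * ((2 * (-1 : ℤ) ^ (j + 1)) • (X : ℤ⟦X⟧) ^ ((i + 1) * (j + 1))) := by
    simp only [zsmul_eq_mul]
    push_cast
    ring
  have htsum := hsummable.tsum_eq_zero_add
  simp only [hshift] at htsum
  rw [hsummable.tsum_mul_left] at htsum
  generalize ∑' j : ℕ, (2 * (-1 : ℤ) ^ (j + 1)) • (X : ℤ⟦X⟧) ^ ((i + 1) * (j + 1)) = S at htsum ⊢
  simp only [zsmul_eq_mul, zero_add, pow_one, mul_one] at htsum
  push_cast at htsum
  linear_combination htsum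

/-- The weight of `j` copies of the part `i` in the generating function of overpartitions into parts
of size at most `m`, where each part contributes a factor `-1`. The factor `2` is the choice of
overlining the part. It is meant for `j ≠ 0`. -/
def overpartitionWeight (m i j : ℕ) : ℤ :=
  if i ≤ m then 2 * (-1) ^ j else 0

theorem genFun_overpartitionWeight (m : ℕ) :
    Nat.Partition.genFun (overpartitionWeight m) = qPochhammerRatio X m := by
  have hprod := hasProd_prod_of_ne_finset_one (s := range m)
    (f := fun i => (1 : ℤ⟦X⟧) +
      ∑' j : ℕ, overpartitionWeight m (i + 1) (j + 1) • X ^ ((i + 1) * (j + 1)))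
    (L := SummationFilter.unconditional ℕ) fun i hi => by
      simp [overpartitionWeight, show ¬i + 1 ≤ m by simpa using hi]
  rw [(Nat.Partition.hasProd_genFun (overpartitionWeight m)).unique hprod, qPochhammerRatio,
    Ring.eq_mul_inverse_iff_mul_eq _ _ _ (isUnit_qPochhammer_neg_self isUnit_one_add_X_pow m),
    qPochhammer, qPochhammer, ← prod_mul_distrib]
  refine prod_congr rfl fun i hi => ?_
  simp only [overpartitionWeight, show i + 1 ≤ m by simpa using hi, if_true]
  linear_combination one_add_X_pow_mul_one_add_tsum i

theorem coeff_qPochhammerRatio (m n : ℕ) :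
    coeff n (qPochhammerRatio (X : ℤ⟦X⟧) m) = ∑ p : n.Partition,
      if p.parts.sup ≤ m then 2 ^ #p.parts.toFinset * (-1) ^ p.parts.card else 0 := by
  rw [← genFun_overpartitionWeight, Nat.Partition.coeff_genFun]
  refine sum_congr rfl fun p _ => ?_
  simp only [Finsupp.prod, overpartitionWeight, Multiset.toFinsupp_support,
    Multiset.toFinsupp_apply]
  split_ifs with h
  · rw [prod_congr rfl fun i hi =>
      if_pos (Multiset.sup_le.1 h i (Multiset.mem_toFinset.1 hi)), prod_mul_distrib, prod_const,
      prod_pow_eq_pow_sum, Multiset.toFinset_sum_count_eq]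
  · obtain ⟨i, hi, him⟩ : ∃ i ∈ p.parts, ¬i ≤ m := by
      simpa only [Multiset.sup_le, not_forall, exists_prop] using h
    exact prod_eq_zero (Multiset.mem_toFinset.2 hi) (if_neg him)

theorem sup_parts_mem_Icc {n : ℕ} (hn : n ≠ 0) (p : n.Partition) : p.parts.sup ∈ Icc 1 n := by
  refine mem_Icc.2 ⟨Nat.one_le_iff_ne_zero.2 fun hsup => hn ?_,
    Multiset.sup_le.2 fun _ => p.le_of_mem_parts⟩
  rw [← p.parts_sum]
  exact Multiset.sum_eq_zero fun i hi => Nat.le_zero.1 (hsup ▸ Multiset.le_sup hi)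

theorem coeff_sum_qPochhammerRatio_sub {n : ℕ} (hn : n ≠ 0) :
    coeff n (∑ m ∈ range n,
      (-1) ^ (m + 1) * (qPochhammerRatio (X : ℤ⟦X⟧) (m + 1) - qPochhammerRatio X m)) =
      ∑ p : n.Partition, 2 ^ #p.parts.toFinset * (-1) ^ (p.parts.sup + p.parts.card) := by
  have hterm (m : ℕ) : coeff n
      ((-1) ^ (m + 1) * (qPochhammerRatio (X : ℤ⟦X⟧) (m + 1) - qPochhammerRatio X m)) =
      ∑ p : n.Partition, if p.parts.sup = m + 1 then
        2 ^ #p.parts.toFinset * (-1) ^ (p.parts.sup + p.parts.card) else 0 := by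
    rw [show (-1 : ℤ⟦X⟧) ^ (m + 1) = C ((-1) ^ (m + 1)) by simp, coeff_C_mul, map_sub,
      coeff_qPochhammerRatio, coeff_qPochhammerRatio, ← sum_sub_distrib, mul_sum]
    refine sum_congr rfl fun p _ => ?_
    rcases lt_trichotomy p.parts.sup (m + 1) with h | h | h
    · rw [if_pos h.le, if_pos (by omega), if_neg h.ne, sub_self, mul_zero]
    · rw [if_pos h.le, if_neg (by omega), if_pos h, h, sub_zero, pow_add _ (m + 1), mul_left_comm]
    · rw [if_neg (by omega), if_neg (by omega), if_neg h.ne', sub_self, mul_zero]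
  rw [map_sum, sum_congr rfl fun m _ => hterm m, sum_comm]
  refine sum_congr rfl fun p _ => ?_
  obtain ⟨hpos, hle⟩ := mem_Icc.1 (sup_parts_mem_Icc hn p)
  obtain ⟨k, hk⟩ := Nat.exists_eq_add_of_le' hpos
  simp only [hk, Nat.add_right_cancel_iff]
  rw [sum_ite_eq, if_pos (mem_range.2 (by omega))]

theorem nbar_zero_two_sub_nbar_one_two_eq {n : ℕ} (hn : n ≠ 0) :
    (nbar 0 2 n : ℤ) - nbar 1 2 n =
      -2 * (2 * ∑ d ∈ n.divisors, (-1) ^ d + #n.divisors +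
        2 * ∑ t ∈ pairSumTriples n with 0 < t.2.1, (-1) ^ t.2.1) := by
  have hcoeff := X_pow_dvd_iff.1 (pow_dvd_sum_qPochhammerRatio_add_sum_rankLambertTerm
    (isUnit_one_sub_X_pow (R := ℤ)) isUnit_one_add_X_pow n) n n.lt_succ_self
  rw [map_add, coeff_sum_qPochhammerRatio_sub hn, ← nbar_zero_two_sub_nbar_one_two,
    show (2 : ℤ⟦X⟧) = C 2 by simp, coeff_C_mul, coeff_sum_rankLambertTerm hn] at hcoeff
  linear_combination hcoeff

theorem neg_one_pow_mul_nbar_sub_neg {n : ℕ} (hn : n ≠ 0) :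
    (-1) ^ n * ((nbar 0 2 n : ℤ) - nbar 1 2 n) < 0 := by
  have hdiv := neg_one_pow_mul_sum_divisors_pos hn
  have htriples := neg_one_pow_mul_sum_pairSumTriples_nonneg n
  rw [nbar_zero_two_sub_nbar_one_two_eq hn]
  linarith

end Overpartitions

theorem stmt8 (n : ℕ) (hn : 1 ≤ n) :
    (Odd n → nbar 1 2 n < nbar 0 2 n) ∧ (Even n → nbar 0 2 n < nbar 1 2 n) := by
  have hsign := neg_one_pow_mul_nbar_sub_neg (Nat.one_le_iff_ne_zero.1 hn)
  constructor
  · intro hodd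
    rw [hodd.neg_one_pow] at hsign
    omega
  · intro heven
    rw [heven.neg_one_pow] at hsign
    omega
end
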